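/- arXiv:1009.0540 — 5 statements merged into one kernel-verified Lean document; each statement's English description precedes it below -/
import Mathlib

section
/- Breakthrough scenario lemma (Lemma 2.3): Let θ : ℝ^d × [0,∞) → ℝ be smooth and periodic in space, and let ω(ξ,t) be continuous in (ξ,t), such that for each fixed t ≥ 0 the function ω(·,t) is a modulus of continuity with ∂²_{ξξ}ω(0,t) = −∞ (the second derivative tends to −∞ as ξ → 0+ whenever the one-sided first derivative at 0 is finite). Suppose θ(·,0) obeys ω(·,0), but for some t > 0 the function θ(·,t) does not obey ω(·,t). Then there exist t₁ > 0 and points x ≠ y such that θ(·,t) obeys ω(·,t) for all t < t₁, while θ(x,t₁) − θ(y,t₁) = ω(|x−y|, t₁). -/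
open Set MeasureTheory Filter Topology

/-- A modulus of continuity: `ω 0 = 0`, continuous, increasing and concave on `[0,∞)`,
and piecewise `C¹` on `(0,∞)`. -/
def IsModulusOfContinuity (ω : ℝ → ℝ) : Prop :=
  ω 0 = 0 ∧ ContinuousOn ω (Ici 0) ∧ StrictMonoOn ω (Ici 0) ∧ ConcaveOn ℝ (Ici 0) ω ∧
  ∃ S : Finset ℝ, (∀ ξ ∈ Ioi (0:ℝ) \ ↑S, DifferentiableAt ℝ ω ξ) ∧
    ContinuousOn (deriv ω) (Ioi (0:ℝ) \ ↑S)

/-!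
The times `t ≥ 0` at which `θ(·,t)` obeys `ω(·,t)` form a relatively open subset of `[0,∞)`, so
there is a first time `t₁ > 0` of failure; there the strict inequality is violated at some pair
`x ≠ y`, while letting `t ↑ t₁` gives the non-strict one, hence equality.

For openness at `t₀`, periodicity confines the pairs `(x, y)` to a compact set, so it is enough to
argue near each limiting pair `(a, b)`. If `a ≠ b`, continuity suffices. If `a = b`, the condition
`∂²ω(0,t₀) = -∞` upgrades the inequality to a strict gradient bound: `‖∇θ(a,t₀)‖ h < ω(h,t₀)` for
some `h > 0`. This persists nearby in space and time, and since `ω(·,t)` is concave it gives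
`|θ(x,t) - θ(y,t)| ≤ C |x - y| < ω(|x - y|,t)` for all pairs close to `(a, a)`.
-/

/-- `f` obeys the modulus of continuity `W`, with strict inequality off the diagonal. -/
def ObeysModulus {E : Type*} [PseudoMetricSpace E] (f : E → ℝ) (W : ℝ → ℝ) : Prop :=
  ∀ x y, x ≠ y → |f x - f y| < W (dist x y)

section ConcaveAtZero

variable {W : ℝ → ℝ}

theorem mul_lt_of_concaveOn {s : Set ℝ} (hW : ConcaveOn ℝ s W) (h0 : 0 ∈ s) (hW0 : 0 ≤ W 0)
    {C h r : ℝ} (hh : h ∈ s) (hr : 0 < r) (hrh : r ≤ h) (hC : C * h < W h) : C * r < W r := by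
  have hpos : 0 < h := hr.trans_le hrh
  have hratio : 0 ≤ 1 - r / h := sub_nonneg.2 ((div_le_one hpos).2 hrh)
  have hconv : (1 - r / h) * W 0 + r / h * W h ≤ W r := by
    simpa [div_mul_cancel₀ _ hpos.ne'] using
      hW.2 h0 hh hratio (div_nonneg hr.le hpos.le) (sub_add_cancel 1 (r / h))
  calc C * r = r / h * (C * h) := by field_simp
    _ < r / h * W h := by gcongr
    _ ≤ (1 - r / h) * W 0 + r / h * W h :=
        le_add_of_nonneg_left (mul_nonneg hratio hW0)
    _ ≤ W r := hconv

theorem exists_le_hasDerivWithinAt_zero_of_concaveOn (hW : ConcaveOn ℝ (Ici 0) W) (hW0 : W 0 = 0)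
    {G : ℝ} (hG : ∀ h > 0, W h ≤ G * h) : ∃ b ≤ G, HasDerivWithinAt W b (Ici 0) 0 := by
  have hanti : AntitoneOn (slope W 0) (Ioi 0) :=
    (hW.slope_anti self_mem_Ici).mono fun x hx => ⟨mem_Ici_of_Ioi hx, ne_of_gt hx⟩
  have hle : ∀ q ∈ slope W 0 '' Ioi 0, q ≤ G := by
    rintro _ ⟨h, hh, rfl⟩
    rw [slope_def_field, hW0, sub_zero, sub_zero, div_le_iff₀ hh]
    exact hG h hh
  exact ⟨_, csSup_le (nonempty_Ioi.image _) hle,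
    ((hasDerivWithinAt_iff_tendsto_slope' self_notMem_Ioi).2
      (hanti.tendsto_nhdsGT ⟨G, hle⟩)).Ici_of_Ioi⟩

theorem exists_concaveOn_Ico_add_mul_sq (hcont : ContinuousWithinAt W (Ici 0) 0)
    (hdiff : ∀ᶠ ξ in 𝓝[>] 0, DifferentiableAt ℝ W ξ)
    (hW'' : Tendsto (deriv (deriv W)) (𝓝[>] 0) atBot) (M : ℝ) :
    ∃ δ > 0, ConcaveOn ℝ (Ico 0 δ) fun h => W h + M * h ^ 2 := by
  obtain ⟨δ, hδ, hsub⟩ := mem_nhdsGT_iff_exists_Ioo_subset.1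
    (hdiff.and (hW''.eventually (eventually_lt_atBot (min 0 (-(2 * M))))))
  have hW1 : ∀ ξ ∈ Ioo 0 δ, DifferentiableAt ℝ W ξ := fun ξ hξ => (hsub hξ).1
  -- `deriv` is `0` where a function is not differentiable, so `W'' < 0` makes `W'` differentiable.
  have hW2 : ∀ ξ ∈ Ioo 0 δ, DifferentiableAt ℝ (deriv W) ξ := fun ξ hξ =>
    differentiableAt_of_deriv_ne_zero ((hsub hξ).2.trans_le (min_le_left _ _)).ne
  set φ : ℝ → ℝ := fun h => W h + M * h ^ 2
  have hφ' : ∀ ξ ∈ Ioo 0 δ, HasDerivAt φ (deriv W ξ + M * (2 * ξ)) ξ := fun ξ hξ => by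
    simpa using (hW1 ξ hξ).hasDerivAt.fun_add ((hasDerivAt_pow 2 ξ).const_mul M)
  have hφ'' : ∀ ξ ∈ Ioo 0 δ, HasDerivAt (deriv φ) (deriv (deriv W) ξ + M * 2) ξ := fun ξ hξ => by
    have h : HasDerivAt (fun ξ => deriv W ξ + M * (2 * ξ)) (deriv (deriv W) ξ + M * 2) ξ := by
      simpa using (hW2 ξ hξ).hasDerivAt.fun_add (((hasDerivAt_id ξ).const_mul 2).const_mul M)
    refine h.congr_of_eventuallyEq ?_
    filter_upwards [isOpen_Ioo.mem_nhds hξ] with z hz using (hφ' z hz).deriv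
  have hφcont : ContinuousOn φ (Ico 0 δ) := by
    refine ContinuousOn.add (fun ξ hξ => ?_) (by fun_prop)
    rcases hξ.1.eq_or_lt with rfl | hpos
    · exact hcont.mono Ico_subset_Ici_self
    · exact (hW1 ξ ⟨hpos, hξ.2⟩).continuousAt.continuousWithinAt
  refine ⟨δ, hδ, concaveOn_of_deriv2_nonpos (convex_Ico 0 δ) hφcont ?_ ?_ ?_⟩ <;>
    rw [interior_Ico] <;> intro ξ hξ
  · exact (hφ' ξ hξ).differentiableAt.differentiableWithinAt
  · exact (hφ'' ξ hξ).differentiableAt.differentiableWithinAt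
  · have hlt := (hsub hξ).2.trans_le (min_le_right _ _)
    rw [show deriv^[2] φ ξ = _ from (hφ'' ξ hξ).deriv]
    linarith

theorem eventually_add_mul_sq_le {b : ℝ} (hb : HasDerivWithinAt W b (Ici 0) 0)
    (hdiff : ∀ᶠ ξ in 𝓝[>] 0, DifferentiableAt ℝ W ξ)
    (hW'' : Tendsto (deriv (deriv W)) (𝓝[>] 0) atBot) (M : ℝ) :
    ∀ᶠ h in 𝓝[>] 0, W h + M * h ^ 2 ≤ W 0 + b * h := by
  obtain ⟨δ, hδ, hconc⟩ := exists_concaveOn_Ico_add_mul_sq hb.continuousWithinAt hdiff hW'' M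
  have hderiv : HasDerivWithinAt (fun h => W h + M * h ^ 2) b (Ici 0) 0 := by
    simpa using hb.fun_add ((hasDerivAt_pow 2 (0 : ℝ)).const_mul M).hasDerivWithinAt
  filter_upwards [Ioo_mem_nhdsGT hδ] with h hh
  have hslope := hconc.slope_le_of_hasDerivWithinAt (left_mem_Ico.2 hδ) ⟨hh.1.le, hh.2⟩ hh.1
    (hderiv.mono Ico_subset_Ici_self)
  rw [slope_def_field, sub_zero, div_le_iff₀ hh.1] at hslope
  linarith

end ConcaveAtZero

namespace IsModulusOfContinuity

variable {W : ℝ → ℝ}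

theorem pos (hW : IsModulusOfContinuity W) {h : ℝ} (hh : 0 < h) : 0 < W h :=
  hW.1 ▸ hW.2.2.1 self_mem_Ici hh.le hh

theorem monotoneOn (hW : IsModulusOfContinuity W) : MonotoneOn W (Ici 0) :=
  hW.2.2.1.monotoneOn

theorem eventually_differentiableAt (hW : IsModulusOfContinuity W) :
    ∀ᶠ ξ in 𝓝[>] 0, DifferentiableAt ℝ W ξ := by
  obtain ⟨-, -, -, -, S, hS, -⟩ := hW
  have hfar : ∀ᶠ ξ in 𝓝 0, ξ ∉ (S : Set ℝ) \ {0} :=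
    (S.finite_toSet.subset sdiff_subset).isClosed.isOpen_compl.mem_nhds (by simp)
  filter_upwards [nhdsWithin_le_nhds hfar, self_mem_nhdsWithin] with ξ hξ hpos
  exact hS ξ ⟨hpos, fun hmem => hξ ⟨hmem, ne_of_gt hpos⟩⟩

end IsModulusOfContinuity

section Gradient

open Asymptotics

variable {E F : Type*} [NormedAddCommGroup E] [NormedSpace ℝ E]
  [NormedAddCommGroup F] [NormedSpace ℝ F]

theorem isBigO_sub_sub_fderiv_of_contDiffAt {f : E → F} {x : E} (hf : ContDiffAt ℝ 2 f x) :
    (fun v => f (x + v) - f x - fderiv ℝ f x v) =O[𝓝 0] fun v => ‖v‖ ^ 2 := by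
  obtain ⟨K, t, ht, hK⟩ := (hf.fderiv_right (m := 1) (by norm_num)).exists_lipschitzOnWith
  have hdiff : ∀ᶠ z in 𝓝 x, DifferentiableAt ℝ f z :=
    (hf.eventually (by simp)).mono fun z hz => hz.differentiableAt (by norm_num)
  obtain ⟨r, hr, hball⟩ := Metric.mem_nhds_iff.1 (hdiff.and ht)
  refine IsBigO.of_bound K ?_
  filter_upwards [Metric.ball_mem_nhds 0 hr] with v hv
  have hsub : Metric.closedBall x ‖v‖ ⊆ Metric.ball x r :=
    Metric.closedBall_subset_ball (by simpa using hv)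
  have hfderiv : ∀ z ∈ Metric.closedBall x ‖v‖, ‖fderiv ℝ f z - fderiv ℝ f x‖ ≤ K * ‖v‖ :=
    fun z hz => (hK.norm_sub_le (hball (hsub hz)).2 (mem_of_mem_nhds ht)).trans <| by
      gcongr
      exact mem_closedBall_iff_norm.1 hz
  have hmean := (convex_closedBall x ‖v‖).norm_image_sub_le_of_norm_hasFDerivWithin_le'
    (fun z hz => (hball (hsub hz)).1.hasFDerivAt.hasFDerivWithinAt) hfderiv
    (Metric.mem_closedBall_self (norm_nonneg v)) (y := x + v) (by simp)
  simpa [pow_two, mul_assoc] using hmean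

namespace ObeysModulus

variable {f : E → ℝ} {W : ℝ → ℝ} {x : E}

-- A nearly maximal direction `v` of `f'` gives `‖f'‖ h - O(h²) ≤ |f (x + v) - f x| < W h`, while
-- `W'' → -∞` gives `W h ≤ b h - M h²` for every `M`.
theorem norm_fderiv_lt (hobeys : ObeysModulus f W) (hW : IsModulusOfContinuity W)
    (hf : ContDiffAt ℝ 2 f x) {b : ℝ} (hb : HasDerivWithinAt W b (Ici 0) 0)
    (hW'' : Tendsto (deriv (deriv W)) (𝓝[>] 0) atBot) : ‖fderiv ℝ f x‖ < b := by
  by_contra! hbf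
  obtain ⟨C, hC, hTaylor⟩ := (isBigO_sub_sub_fderiv_of_contDiffAt hf).exists_pos
  obtain ⟨r, hr, hball⟩ := Metric.mem_nhds_iff.1 hTaylor.bound
  obtain ⟨h, hsq, hhr, hh⟩ :=
    ((eventually_add_mul_sq_le hb hW.eventually_differentiableAt hW'' (C + 1)).and
      (inter_mem (Ioo_mem_nhdsGT hr) self_mem_nhdsWithin)).exists
  rw [hW.1, zero_add] at hsq
  have hh : 0 < h := hh
  have hbh : b * h ≤ ‖fderiv ℝ f x‖ * h := by gcongr
  obtain ⟨u, hu, hlt⟩ := (fderiv ℝ f x).exists_lt_apply_of_lt_opNorm (sub_lt_self _ hh)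
  have hv : ‖h • u‖ ≤ h := by
    rw [norm_smul, Real.norm_of_nonneg hh.le]
    exact mul_le_of_le_one_right hh.le hu.le
  have hfv : (‖fderiv ℝ f x‖ - h) * h < ‖fderiv ℝ f x (h • u)‖ := by
    rw [map_smul, norm_smul, Real.norm_of_nonneg hh.le, mul_comm h]
    gcongr
  have hv0 : h • u ≠ 0 := by
    intro h0
    rw [h0, map_zero, norm_zero] at hfv
    nlinarith [hW.pos hh]
  have hincr : ‖f (x + h • u) - f x‖ < W h := by
    have hWv := hobeys (x + h • u) x (by simpa using hv0)
    rw [dist_self_add_left] at hWv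
    exact hWv.trans_le (hW.monotoneOn (norm_nonneg _) hh.le hv)
  have herr : ‖f (x + h • u) - f x - fderiv ℝ f x (h • u)‖ ≤ C * h ^ 2 := by
    have hle : _ ≤ C * ‖‖h • u‖ ^ 2‖ := hball (mem_ball_zero_iff.2 (hv.trans_lt hhr.2))
    rw [Real.norm_of_nonneg (sq_nonneg ‖h • u‖)] at hle
    exact hle.trans (by gcongr)
  have htri := norm_sub_le (f (x + h • u) - f x) (f (x + h • u) - f x - fderiv ℝ f x (h • u))
  rw [sub_sub_cancel] at htri
  linarith

theorem exists_norm_fderiv_mul_lt (hobeys : ObeysModulus f W) (hW : IsModulusOfContinuity W)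
    (hf : ContDiffAt ℝ 2 f x)
    (hW'' : (∃ b, HasDerivWithinAt W b (Ici 0) 0) → Tendsto (deriv (deriv W)) (𝓝[>] 0) atBot) :
    ∃ h > 0, ‖fderiv ℝ f x‖ * h < W h := by
  by_contra! hG
  obtain ⟨b, hbG, hb⟩ := exists_le_hasDerivWithinAt_zero_of_concaveOn hW.2.2.2.1 hW.1 hG
  exact (hobeys.norm_fderiv_lt hW hf hb (hW'' ⟨b, hb⟩)).not_ge hbG

end ObeysModulus

end Gradient

section Periods

theorem exists_add_mem_cthickening_dist_le {E : Type*} [SeminormedAddCommGroup E] {K V : Set E}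
    (hK : Bornology.IsBounded K) (hV : ∀ x, ∃ v ∈ V, x + v ∈ K) (x y : E) :
    ∃ v ∈ V, ∃ w ∈ V, x + v ∈ Metric.cthickening (Metric.diam K) K ∧
      y + w ∈ Metric.cthickening (Metric.diam K) K ∧ dist (x + v) (y + w) ≤ dist x y := by
  obtain ⟨v, hv, hxv⟩ := hV x
  rcases le_total (dist x y) (Metric.diam K) with hclose | hfar
  · exact ⟨v, hv, v, hv, Metric.self_subset_cthickening K hxv,
      Metric.mem_cthickening_of_dist_le _ _ _ _ hxv (by rwa [dist_add_right, dist_comm]),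
      (dist_add_right x y v).le⟩
  · obtain ⟨w, hw, hyw⟩ := hV y
    exact ⟨v, hv, w, hw, Metric.self_subset_cthickening K hxv,
      Metric.self_subset_cthickening K hyw, (Metric.dist_le_diam_of_mem hK hxv hyw).trans hfar⟩

theorem exists_isCompact_forall_exists_add_mem {ι : Type*} [Finite ι] {L : ℝ} (hL : 0 < L) :
    ∃ K : Set (EuclideanSpace ℝ ι), IsCompact K ∧
      ∀ x, ∃ v : ι → ℤ, x + WithLp.toLp 2 (fun i => L * (v i : ℝ)) ∈ K := by
  refine ⟨WithLp.toLp 2 '' Icc 0 fun _ => L, isCompact_Icc.image (by fun_prop), fun x =>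
    ⟨fun i => -toIcoDiv hL 0 (x i), fun i => x i + L * ↑(-toIcoDiv hL 0 (x i)), ?_, rfl⟩⟩
  have hmem : ∀ i, x i + L * ↑(-toIcoDiv hL 0 (x i)) ∈ Ico 0 L := fun i => by
    simpa [sub_eq_add_neg, mul_comm] using sub_toIcoDiv_zsmul_mem_Ico hL 0 (x i)
  exact ⟨fun i => (hmem i).1, fun i => (hmem i).2.le⟩

end Periods

section Slices

variable {E F : Type*} [NormedAddCommGroup E] [NormedSpace ℝ E]
  [NormedAddCommGroup F] [NormedSpace ℝ F] {T : Type*} [NormedAddCommGroup T] [NormedSpace ℝ T]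
  {θ : E → T → F} {s : Set T} {n : WithTop ℕ∞}

theorem contDiff_slice_of_contDiffOn
    (hθ : ContDiffOn ℝ n (fun p : E × T => θ p.1 p.2) (univ ×ˢ s)) {t : T} (ht : t ∈ s) :
    ContDiff ℝ n (θ · t) :=
  contDiffOn_univ.1 <| hθ.comp (f := fun x : E => (x, t)) (by fun_prop) fun _ _ => ⟨mem_univ _, ht⟩

theorem continuousOn_fderiv_slice_of_contDiffOn (hn : 1 ≤ n) (hs : UniqueDiffOn ℝ s)
    (hθ : ContDiffOn ℝ n (fun p : E × T => θ p.1 p.2) (univ ×ˢ s)) :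
    ContinuousOn (fun p : E × T => fderiv ℝ (θ · p.2) p.1) (univ ×ˢ s) := by
  refine ((hθ.continuousOn_fderivWithin (uniqueDiffOn_univ.prod hs) hn).clm_comp
    (continuousOn_const (c := ContinuousLinearMap.inl ℝ E T))).congr fun p hp => ?_
  have hjoint : HasFDerivWithinAt (fun q : E × T => θ q.1 q.2) _ (univ ×ˢ s) (p.1, p.2) :=
    (hθ.differentiableOn (by positivity) p hp).hasFDerivWithinAt
  have hslice : HasFDerivWithinAt (fun x : E => (x, p.2)) (.inl ℝ E T) univ p.1 :=
    (hasFDerivAt_prodMk_left p.1 p.2).hasFDerivWithinAt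
  have hmaps : MapsTo (fun x : E => (x, p.2)) univ (univ ×ˢ s) := fun _ _ => ⟨mem_univ _, hp.2⟩
  exact (hasFDerivWithinAt_univ.1 (hjoint.comp p.1 hslice hmaps)).fderiv

end Slices

section Stability

variable {E T : Type*} [NormedAddCommGroup E] [TopologicalSpace T] {s : Set T} {t₀ : T}

theorem eventually_norm_sub_le_mul_dist [NormedSpace ℝ E] {F : Type*} [NormedAddCommGroup F]
    [NormedSpace ℝ F] {θ : E → T → F} {a : E} {C : ℝ}
    (hdiff : ∀ t ∈ s, Differentiable ℝ (θ · t))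
    (hgrad : ContinuousWithinAt (fun p : E × T => fderiv ℝ (θ · p.2) p.1) (univ ×ˢ s) (a, t₀))
    (hC : ‖fderiv ℝ (θ · t₀) a‖ < C) :
    ∀ᶠ p : T × E × E in 𝓝[s] t₀ ×ˢ 𝓝 (a, a),
      ‖θ p.2.1 p.1 - θ p.2.2 p.1‖ ≤ C * dist p.2.1 p.2.2 := by
  have hnear := hgrad.norm.eventually_lt_const hC
  rw [nhdsWithin_prod_eq, nhdsWithin_univ] at hnear
  obtain ⟨U, hU, V, hV, hUV⟩ := eventually_prod_iff.1 hnear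
  obtain ⟨ρ, hρ, hball⟩ := Metric.mem_nhds_iff.1 hU
  have hnhds : Metric.ball a ρ ∈ 𝓝 a := Metric.ball_mem_nhds a hρ
  filter_upwards [(hV.and self_mem_nhdsWithin).prod_inl _,
    prod_mem_prod univ_mem (prod_mem_nhds hnhds hnhds)] with ⟨t, x, y⟩ ⟨hVt, ht⟩ ⟨_, hx, hy⟩
  rw [dist_eq_norm]
  exact (convex_ball a ρ).norm_image_sub_le_of_norm_fderiv_le (𝕜 := ℝ)
    (fun z _ => hdiff t ht z) (fun z hz => (hUV (hball hz) hVt).le) hy hx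

variable {θ : E → T → ℝ} {ω : ℝ → T → ℝ}

theorem eventually_obeys_near_diagonal [NormedSpace ℝ E] {a : E} {h : ℝ}
    (hdiff : ∀ t ∈ s, Differentiable ℝ (θ · t))
    (hgrad : ContinuousWithinAt (fun p : E × T => fderiv ℝ (θ · p.2) p.1) (univ ×ˢ s) (a, t₀))
    (hωcont : ContinuousWithinAt (ω h) s t₀)
    (hωconc : ∀ t ∈ s, ConcaveOn ℝ (Ici 0) (ω · t)) (hω0 : ∀ t ∈ s, 0 ≤ ω 0 t)
    (hh : 0 < h) (hlt : ‖fderiv ℝ (θ · t₀) a‖ * h < ω h t₀) :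
    ∀ᶠ p : T × E × E in 𝓝[s] t₀ ×ˢ 𝓝 (a, a),
      p.2.1 ≠ p.2.2 → |θ p.2.1 p.1 - θ p.2.2 p.1| < ω (dist p.2.1 p.2.2) p.1 := by
  obtain ⟨C, hgradC, hCω⟩ := exists_between ((lt_div_iff₀ hh).2 hlt)
  have hω : ∀ᶠ t in 𝓝[s] t₀, C * h < ω h t :=
    hωcont.eventually_const_lt ((lt_div_iff₀ hh).1 hCω)
  have hdist : ∀ᶠ q : E × E in 𝓝 (a, a), dist q.1 q.2 < h :=
    continuous_dist.continuousAt.eventually_lt_const (by simpa using hh)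
  filter_upwards [eventually_norm_sub_le_mul_dist hdiff hgrad hgradC,
    (hω.and self_mem_nhdsWithin).prod_inl _, hdist.prod_inr _]
    with ⟨t, x, y⟩ hLip ⟨hCt, ht⟩ hxy hne
  exact hLip.trans_lt <| mul_lt_of_concaveOn (hωconc t ht) self_mem_Ici (hω0 t ht) hh.le
    (dist_pos.2 hne) hxy.le hCt

theorem eventually_obeys_off_diagonal {a b : E} (ht₀ : t₀ ∈ s)
    (hθ : ContinuousOn (fun p : E × T => θ p.1 p.2) (univ ×ˢ s))
    (hω : ContinuousOn (fun p : ℝ × T => ω p.1 p.2) (Ici 0 ×ˢ s))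
    (hlt : |θ a t₀ - θ b t₀| < ω (dist a b) t₀) :
    ∀ᶠ p : T × E × E in 𝓝[s] t₀ ×ˢ 𝓝 (a, b),
      |θ p.2.1 p.1 - θ p.2.2 p.1| < ω (dist p.2.1 p.2.2) p.1 := by
  have hcont : ContinuousOn (fun p : T × E × E => |θ p.2.1 p.1 - θ p.2.2 p.1|) (s ×ˢ univ) :=
    ((hθ.comp (f := fun p : T × E × E => (p.2.1, p.1)) (by fun_prop)
      fun p hp => ⟨mem_univ _, hp.1⟩).sub
      (hθ.comp (f := fun p : T × E × E => (p.2.2, p.1)) (by fun_prop)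
        fun p hp => ⟨mem_univ _, hp.1⟩)).abs
  have hωcont : ContinuousOn (fun p : T × E × E => ω (dist p.2.1 p.2.2) p.1) (s ×ˢ univ) :=
    hω.comp (f := fun p : T × E × E => (dist p.2.1 p.2.2, p.1)) (by fun_prop)
      fun p hp => ⟨dist_nonneg, hp.1⟩
  have hmem : (t₀, a, b) ∈ s ×ˢ (univ : Set (E × E)) := ⟨ht₀, mem_univ _⟩
  have := (hcont _ hmem).eventually_lt (hωcont _ hmem) hlt
  rwa [nhdsWithin_prod_eq, nhdsWithin_univ] at this

theorem eventually_obeysModulus_of_periodic [ProperSpace E] {K : Set E} (hK : IsCompact K)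
    (hper : ∀ x, ∃ v, (∀ t ∈ s, Function.Periodic (θ · t) v) ∧ x + v ∈ K)
    (hω : ∀ t ∈ s, IsModulusOfContinuity (ω · t))
    (hlocal : ∀ a b, ∀ᶠ p : T × E × E in 𝓝[s] t₀ ×ˢ 𝓝 (a, b),
      p.2.1 ≠ p.2.2 → |θ p.2.1 p.1 - θ p.2.2 p.1| < ω (dist p.2.1 p.2.2) p.1) :
    ∀ᶠ t in 𝓝[s] t₀, ObeysModulus (θ · t) (ω · t) := by
  set Q := Metric.cthickening (Metric.diam K) K
  have hQ : IsCompact (Q ×ˢ Q) := hK.cthickening.prod hK.cthickening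
  have hnear : ∀ᶠ p : T × E × E in 𝓝[s] t₀ ×ˢ 𝓝ˢ (Q ×ˢ Q),
      p.2.1 ≠ p.2.2 → |θ p.2.1 p.1 - θ p.2.2 p.1| < ω (dist p.2.1 p.2.2) p.1 :=
    hQ.mem_prod_nhdsSet_of_forall fun q _ => hlocal q.1 q.2
  filter_upwards [hnear.curry, self_mem_nhdsWithin] with t hobeys ht x y hxy
  obtain ⟨v, hv, w, hw, hxv, hyw, hdist⟩ :=
    exists_add_mem_cthickening_dist_le hK.isBounded hper x y
  have hle : ω (dist (x + v) (y + w)) t ≤ ω (dist x y) t :=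
    (hω t ht).monotoneOn dist_nonneg dist_nonneg hdist
  rw [← hv t ht x, ← hw t ht y]
  rcases eq_or_ne (x + v) (y + w) with heq | hne
  · simpa [heq] using (hω t ht).pos (dist_pos.2 hxy)
  · exact (hobeys.self_of_nhdsSet (x + v, y + w) ⟨hxv, hyw⟩ hne).trans_le hle

theorem ObeysModulus.eventually_of_periodic [NormedSpace ℝ E] [ProperSpace E] {K : Set E}
    (hK : IsCompact K)
    (hper : ∀ x, ∃ v, (∀ t ∈ s, Function.Periodic (θ · t) v) ∧ x + v ∈ K)
    (hθ : ContinuousOn (fun p : E × T => θ p.1 p.2) (univ ×ˢ s))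
    (hgrad : ContinuousOn (fun p : E × T => fderiv ℝ (θ · p.2) p.1) (univ ×ˢ s))
    (hdiff : ∀ t ∈ s, Differentiable ℝ (θ · t)) (hθ₀ : ContDiff ℝ 2 (θ · t₀))
    (hωcont : ContinuousOn (fun p : ℝ × T => ω p.1 p.2) (Ici 0 ×ˢ s))
    (hω : ∀ t ∈ s, IsModulusOfContinuity (ω · t))
    (hω'' : (∃ b, HasDerivWithinAt (ω · t₀) b (Ici 0) 0) →
      Tendsto (deriv (deriv (ω · t₀))) (𝓝[>] 0) atBot)
    (ht₀ : t₀ ∈ s) (hobeys : ObeysModulus (θ · t₀) (ω · t₀)) :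
    ∀ᶠ t in 𝓝[s] t₀, ObeysModulus (θ · t) (ω · t) := by
  refine eventually_obeysModulus_of_periodic hK hper hω fun a b => ?_
  rcases eq_or_ne a b with rfl | hab
  · obtain ⟨h, hh, hlt⟩ := hobeys.exists_norm_fderiv_mul_lt (hω t₀ ht₀) (x := a) hθ₀.contDiffAt hω''
    have hωh : ContinuousOn (ω h) s :=
      hωcont.comp (f := fun t => (h, t)) (by fun_prop) fun t ht => ⟨hh.le, ht⟩
    exact eventually_obeys_near_diagonal hdiff (hgrad (a, t₀) ⟨mem_univ _, ht₀⟩) (hωh t₀ ht₀)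
      (fun t ht => (hω t ht).2.2.2.1) (fun t ht => (hω t ht).1.ge) hh hlt
  · exact (eventually_obeys_off_diagonal ht₀ hθ hωcont (hobeys a b hab)).mono fun _ hp _ => hp

theorem abs_sub_le_of_obeysModulus_of_mem_closure {x y : E} (hxy : x ≠ y) (ht₀ : t₀ ∈ closure s)
    (hx : ContinuousWithinAt (θ x) s t₀) (hy : ContinuousWithinAt (θ y) s t₀)
    (hω : ContinuousWithinAt (ω (dist x y)) s t₀)
    (hobeys : ∀ t ∈ s, ObeysModulus (θ · t) (ω · t)) :
    |θ x t₀ - θ y t₀| ≤ ω (dist x y) t₀ :=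
  ContinuousWithinAt.closure_le ht₀ (hx.sub hy).abs hω fun t ht => (hobeys t ht x y hxy).le

end Stability

theorem exists_isLeast_not_of_eventually {α : Type*} [ConditionallyCompleteLinearOrder α]
    [TopologicalSpace α] [OrderTopology α] {P : α → Prop} {t₀ : α}
    (hP : ∀ t ∈ Ici t₀, P t → ∀ᶠ r in 𝓝[Ici t₀] t, P r) (hfail : ∃ t ∈ Ici t₀, ¬ P t) :
    ∃ t₁, IsLeast {t ∈ Ici t₀ | ¬ P t} t₁ := by
  have hclosed : IsClosed {t ∈ Ici t₀ | ¬ P t} := by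
    refine isClosed_of_closure_subset fun t ht => ?_
    have htI : t ∈ Ici t₀ := closure_minimal (sep_subset _ _) isClosed_Ici ht
    refine ⟨htI, fun hPt => ?_⟩
    obtain ⟨r, hr, hPr⟩ :=
      ((mem_closure_iff_frequently.1 ht).and_eventually
        (eventually_nhdsWithin_iff.1 (hP t htI hPt))).exists
    exact hr.2 (hPr hr.1)
  exact ⟨_, hclosed.isLeast_csInf hfail ⟨t₀, fun t ht => ht.1⟩⟩

theorem breakthrough_scenario_general {E : Type*} [NormedAddCommGroup E] [NormedSpace ℝ E]
    [ProperSpace E] {θ : E → ℝ → ℝ} {K : Set E} (hK : IsCompact K)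
    (hper : ∀ x, ∃ v, (∀ t ∈ Ici (0 : ℝ), Function.Periodic (θ · t) v) ∧ x + v ∈ K)
    (hθcont : ContinuousOn (fun p : E × ℝ => θ p.1 p.2) (univ ×ˢ Ici 0))
    (hgrad : ContinuousOn (fun p : E × ℝ => fderiv ℝ (θ · p.2) p.1) (univ ×ˢ Ici 0))
    (hθ : ∀ t ∈ Ici (0 : ℝ), ContDiff ℝ 2 (θ · t)) {ω : ℝ → ℝ → ℝ}
    (hωcont : ContinuousOn (fun p : ℝ × ℝ => ω p.1 p.2) (Ici 0 ×ˢ Ici 0))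
    (hω : ∀ t ∈ Ici (0 : ℝ), IsModulusOfContinuity (ω · t))
    (hω'' : ∀ t ∈ Ici (0 : ℝ), (∃ b, HasDerivWithinAt (ω · t) b (Ici 0) 0) →
      Tendsto (deriv (deriv (ω · t))) (𝓝[>] 0) atBot)
    (hobeys0 : ObeysModulus (θ · 0) (ω · 0))
    (hfail : ∃ t > (0 : ℝ), ¬ ObeysModulus (θ · t) (ω · t)) :
    ∃ t₁ > (0 : ℝ), ∃ x y, x ≠ y ∧
      (∀ t, 0 ≤ t → t < t₁ → ObeysModulus (θ · t) (ω · t)) ∧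
      θ x t₁ - θ y t₁ = ω (dist x y) t₁ := by
  obtain ⟨t₁, ⟨ht₁, hnot⟩, hmin⟩ := exists_isLeast_not_of_eventually
    (P := fun t => ObeysModulus (θ · t) (ω · t))
    (fun t ht hobeys => hobeys.eventually_of_periodic hK hper hθcont hgrad
      (fun r hr => (hθ r hr).differentiable (by norm_num)) (hθ t ht) hωcont hω (hω'' t ht) ht)
    (hfail.imp fun t ht => ⟨ht.1.le, ht.2⟩)
  have hbefore : ∀ t, 0 ≤ t → t < t₁ → ObeysModulus (θ · t) (ω · t) :=
    fun t ht hlt => by_contra fun hcon => hlt.not_ge (hmin ⟨ht, hcon⟩)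
  have hpos : 0 < t₁ := lt_of_le_of_ne ht₁ fun h => hnot (h ▸ hobeys0)
  have hθt : ∀ x, ContinuousOn (θ x) (Ici 0) := fun x =>
    hθcont.comp (f := fun t => (x, t)) (by fun_prop) fun t ht => ⟨mem_univ _, ht⟩
  have hωt : ∀ x y : E, ContinuousOn (ω (dist x y)) (Ici 0) := fun x y =>
    hωcont.comp (f := fun t => (dist x y, t)) (by fun_prop) fun t ht => ⟨dist_nonneg, ht⟩
  have hclosure : t₁ ∈ closure (Ico 0 t₁) := closure_Ico hpos.ne ▸ right_mem_Icc.2 ht₁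
  have hsub : Ico 0 t₁ ⊆ Ici 0 := Ico_subset_Ici_self
  obtain ⟨x, y, hxy, hge⟩ : ∃ x y, x ≠ y ∧ ω (dist x y) t₁ ≤ |θ x t₁ - θ y t₁| := by
    simpa [ObeysModulus] using hnot
  have heq : |θ x t₁ - θ y t₁| = ω (dist x y) t₁ :=
    (abs_sub_le_of_obeysModulus_of_mem_closure hxy hclosure ((hθt x t₁ ht₁).mono hsub)
      ((hθt y t₁ ht₁).mono hsub) ((hωt x y t₁ ht₁).mono hsub)
      fun t ht => hbefore t ht.1 ht.2).antisymm hge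
  rcases abs_choice (θ x t₁ - θ y t₁) with habs | habs
  · exact ⟨t₁, hpos, x, y, hxy, hbefore, habs ▸ heq⟩
  · exact ⟨t₁, hpos, y, x, hxy.symm, hbefore, by rw [dist_comm, ← heq, habs, neg_sub]⟩

/-- **Breakthrough scenario lemma (Lemma 2.3).**
If a smooth space-periodic `θ` obeys `ω(·,0)` at time `0` but fails to obey `ω(·,t)` at some
`t > 0`, then there are a first breakthrough time `t₁ > 0` and points `x ≠ y` such that `θ`
obeys `ω(·,t)` for every `0 ≤ t < t₁` while `θ(x,t₁) − θ(y,t₁) = ω(|x−y|,t₁)`. -/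
theorem breakthrough_scenario (d : ℕ) (hd : 0 < d)
    (θ : EuclideanSpace ℝ (Fin d) → ℝ → ℝ) (L : ℝ) (hL : 0 < L)
    (hsmooth : ContDiffOn ℝ (⊤ : ℕ∞)
      (fun p : EuclideanSpace ℝ (Fin d) × ℝ => θ p.1 p.2) (univ ×ˢ Ici 0))
    (hper : ∀ v : Fin d → ℤ, ∀ x t,
      θ (x + (WithLp.equiv 2 (∀ _ : Fin d, ℝ)).symm (fun i => L * (v i : ℝ))) t = θ x t)
    (ω : ℝ → ℝ → ℝ)
    (hωcont : ContinuousOn (fun p : ℝ × ℝ => ω p.1 p.2) (Ici 0 ×ˢ Ici 0))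
    (hωmoc : ∀ t ∈ Ici (0:ℝ), IsModulusOfContinuity (fun ξ => ω ξ t))
    (hω'' : ∀ t ∈ Ici (0:ℝ),
      (∃ b, HasDerivWithinAt (fun r => ω r t) b (Ici 0) 0) →
      Tendsto (fun ξ => deriv (deriv (fun r => ω r t)) ξ) (nhdsWithin 0 (Ioi 0)) atBot)
    (hobeys0 : ∀ x y, x ≠ y → |θ x 0 - θ y 0| < ω (dist x y) 0)
    (hfail : ∃ t > (0:ℝ), ¬ (∀ x y, x ≠ y → |θ x t - θ y t| < ω (dist x y) t)) :
    ∃ t₁ > (0:ℝ), ∃ x y, x ≠ y ∧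
      (∀ t, 0 ≤ t → t < t₁ → ∀ z w, z ≠ w → |θ z t - θ w t| < ω (dist z w) t) ∧
      θ x t₁ - θ y t₁ = ω (dist x y) t₁ := by
  obtain ⟨K, hK, hcover⟩ := exists_isCompact_forall_exists_add_mem (ι := Fin d) hL
  exact breakthrough_scenario_general hK
    (fun x => (hcover x).elim fun v hv => ⟨_, fun t _ y => hper v y t, hv⟩)
    hsmooth.continuousOn
    (continuousOn_fderiv_slice_of_contDiffOn (by exact_mod_cast le_top) (uniqueDiffOn_Ici 0)
      hsmooth)
    (fun t ht => (contDiff_slice_of_contDiffOn hsmooth ht).of_le (WithTop.coe_le_coe.2 le_top))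
    hωcont hωmoc hω'' hobeys0 hfail
end

section
/- Flow term estimate at a breakthrough point (Lemma 2.4): Let θ : ℝ^d → ℝ be C¹ and let u : ℝ^d → ℝ^d be continuous. Let ω be a modulus of continuity and Ω a modulus of continuity such that |θ(x) − θ(y)| ≤ ω(|x−y|) for all x, y and |u(x) − u(y)| ≤ Ω(|x−y|) for all x, y. Suppose x ≠ y are points with θ(x) − θ(y) = ω(ξ), where ξ = |x−y|. Then u(x)·∇θ(x) − u(y)·∇θ(y) ≤ Ω(ξ)·ω'(ξ), where at a point where ω is not differentiable, ω'(ξ) denotes the larger of the two one-sided derivatives. -/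
open Set

/-!
Move `x` and `y` along the constant velocities `u x` and `u y` for a time `t ≥ 0`. Their distance
is at most `ξ + t * Ω ξ`, so `θ (x + t • u x) - θ (y + t • u y) ≤ ω (ξ + t * Ω ξ)`, with equality
at `t = 0` because of the breakthrough, where `ξ = dist x y`. Comparing right derivatives at
`t = 0` bounds the flow term by `Ω ξ` times the right derivative of `ω` at `ξ`.
-/

open scoped Topology

lemma hasDerivWithinAt_le_of_eventuallyLE {f g : ℝ → ℝ} {f' g' c : ℝ} {s : Set ℝ}
    (hf : HasDerivWithinAt f f' s c) (hg : HasDerivWithinAt g g' s c)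
    (hs : ∃ᶠ t in 𝓝[>] c, t ∈ s) (hfg : f ≤ᶠ[𝓝[s] c] g) (hc : f c = g c) : f' ≤ g' := by
  have hmin : IsLocalMinOn (g - f) s c := by
    filter_upwards [hfg] with t ht
    simpa only [Pi.sub_apply, hc, sub_self, sub_nonneg] using ht
  have hnonneg := hmin.hasFDerivWithinAt_nonneg (hg.sub hf).hasFDerivWithinAt
    (one_mem_posTangentConeAt_iff_frequently.2 hs)
  simpa using hnonneg

lemma hasDerivWithinAt_comp_add_mul_Ici {F : Type*} [NormedAddCommGroup F] [NormedSpace ℝ F]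
    {f : ℝ → F} {f' : F} {c k : ℝ} (hf : HasDerivWithinAt f f' (Ici c) c) (hk : 0 ≤ k) :
    HasDerivWithinAt (fun t ↦ f (c + t * k)) (k • f') (Ici 0) 0 := by
  have hinner : HasDerivWithinAt (fun t ↦ c + t * k) k (Ici 0) 0 :=
    ((hasDerivAt_mul_const k).const_add c).hasDerivWithinAt
  have hmaps : MapsTo (fun t ↦ c + t * k) (Ici 0) (Ici c) :=
    fun t ht ↦ le_add_of_nonneg_right (mul_nonneg ht hk)
  exact hf.scomp_of_eq 0 hinner hmaps (by simp only [zero_mul, add_zero])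

section Translation

variable {E : Type*} [SeminormedAddCommGroup E] [NormedSpace ℝ E]

lemma dist_add_smul_add_smul_le {t : ℝ} (ht : 0 ≤ t) (x y v w : E) :
    dist (x + t • v) (y + t • w) ≤ dist x y + t * dist v w := by
  calc dist (x + t • v) (y + t • w) ≤ dist x y + dist (t • v) (t • w) := dist_add_add_le _ _ _ _
    _ = dist x y + t * dist v w := by rw [dist_smul₀, Real.norm_of_nonneg ht]

theorem flow_term_estimate_general {θ : E → ℝ} {ω : ℝ → ℝ} (hω : MonotoneOn ω (Ici 0))
    (hθω : ∀ p q, |θ p - θ q| ≤ ω (dist p q)) {x y v w : E} {α β a k : ℝ}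
    (hα : HasLineDerivAt ℝ θ α x v) (hβ : HasLineDerivAt ℝ θ β y w) (hvw : dist v w ≤ k)
    (hbreak : θ x - θ y = ω (dist x y))
    (ha : HasDerivWithinAt ω a (Ici (dist x y)) (dist x y)) :
    α - β ≤ k * a := by
  have hθ_deriv : HasDerivWithinAt (fun t : ℝ ↦ θ (x + t • v) - θ (y + t • w)) (α - β) (Ici 0) 0 :=
    (HasDerivAt.fun_sub hα hβ).hasDerivWithinAt
  have hω_deriv : HasDerivWithinAt (fun t ↦ ω (dist x y + t * k)) (k * a) (Ici 0) 0 :=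
    hasDerivWithinAt_comp_add_mul_Ici ha (dist_nonneg.trans hvw)
  refine hasDerivWithinAt_le_of_eventuallyLE hθ_deriv hω_deriv ?_ ?_ ?_
  · exact (eventually_mem_nhdsWithin.mono Ioi_subset_Ici_self).frequently
  · filter_upwards [self_mem_nhdsWithin] with t ht
    have hdist : dist (x + t • v) (y + t • w) ≤ dist x y + t * k :=
      (dist_add_smul_add_smul_le ht x y v w).trans (by gcongr)
    calc θ (x + t • v) - θ (y + t • w) ≤ |θ (x + t • v) - θ (y + t • w)| := le_abs_self _
      _ ≤ ω (dist (x + t • v) (y + t • w)) := hθω _ _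
      _ ≤ ω (dist x y + t * k) := hω dist_nonneg (dist_nonneg.trans hdist) hdist
  · simpa only [zero_smul, zero_mul, add_zero] using hbreak

end Translation

/-- **Flow term estimate at a breakthrough point (Lemma 2.4).**
If `θ` obeys the modulus `ω`, `u` obeys the modulus `Ω`, and `θ(x) − θ(y) = ω(ξ)` with
`ξ = |x−y|`, then `u(x)·∇θ(x) − u(y)·∇θ(y) ≤ Ω(ξ)·ω'(ξ)`, where `ω'(ξ)` is the larger of
the two one-sided derivatives at `ξ` (here quantified over the one-sided derivative
values `a`, `b`, when they exist). -/
theorem flow_term_estimate (d : ℕ) (hd : 0 < d)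
    (θ : EuclideanSpace ℝ (Fin d) → ℝ) (u : EuclideanSpace ℝ (Fin d) → EuclideanSpace ℝ (Fin d))
    (hθ : ContDiff ℝ 1 θ) (hu : Continuous u)
    (ω Ω : ℝ → ℝ) (hω : IsModulusOfContinuity ω) (hΩ : IsModulusOfContinuity Ω)
    (hθω : ∀ x y, |θ x - θ y| ≤ ω (dist x y))
    (huΩ : ∀ x y, dist (u x) (u y) ≤ Ω (dist x y))
    (x y : EuclideanSpace ℝ (Fin d)) (hxy : x ≠ y)
    (hbreak : θ x - θ y = ω (dist x y))
    (a b : ℝ)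
    (ha : HasDerivWithinAt ω a (Ici (dist x y)) (dist x y))
    (hb : HasDerivWithinAt ω b (Iic (dist x y)) (dist x y)) :
    fderiv ℝ θ x (u x) - fderiv ℝ θ y (u y) ≤ Ω (dist x y) * max a b := by
  have hdiff (p : EuclideanSpace ℝ (Fin d)) :
      HasLineDerivAt ℝ θ (fderiv ℝ θ p (u p)) p (u p) :=
    (hθ.differentiable one_ne_zero p).hasFDerivAt.hasLineDerivAt (u p)
  calc fderiv ℝ θ x (u x) - fderiv ℝ θ y (u y)
      ≤ Ω (dist x y) * a :=
        flow_term_estimate_general hω.2.2.1.monotoneOn hθω (hdiff x) (hdiff y) (huΩ x y) hbreak ha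
    _ ≤ Ω (dist x y) * max a b :=
        mul_le_mul_of_nonneg_left (le_max_left a b) (dist_nonneg.trans (huΩ x y))
end

section
/- Dissipation convolution estimate (core of Lemma 2.5): Let θ : ℝ^d → ℝ be continuous and bounded, let ω be a modulus of continuity with |θ(x) − θ(y)| ≤ ω(|x−y|) for all x, y, and suppose x ≠ y are points with θ(x) − θ(y) = ω(ξ), where ξ = |x−y|. Let Φ : ℝ^d → (0,∞) be an integrable, radially symmetric and radially nonincreasing function with ∫_{ℝ^d} Φ = 1, and let φ(s) = ∫_{ℝ^{d−1}} Φ(s,ν) dν denote its one-dimensional marginal. Then (Φ∗θ)(x) − (Φ∗θ)(y) − ω(ξ) ≤ ∫_0^{ξ/2} φ(η)[ω(ξ+2η) + ω(ξ−2η) − 2ω(ξ)] dη + ∫_{ξ/2}^∞ φ(η)[ω(2η+ξ) − ω(2η−ξ) − 2ω(ξ)] dη, and moreover both bracketed expressions in the integrands are nonpositive (by concavity of ω). -/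
open Set MeasureTheory

noncomputable section

/-- The one-dimensional marginal `φ(s) = ∫_{ℝ^{d−1}} Φ(s,ν) dν` of a function `Φ` on
`ℝ^d = ℝ^{(m)+1}`. -/
def oneDimMarginal (m : ℕ) (Φ : EuclideanSpace ℝ (Fin (m+1)) → ℝ) (s : ℝ) : ℝ :=
  ∫ ν : EuclideanSpace ℝ (Fin m),
    Φ ((WithLp.equiv 2 (∀ _ : Fin (m+1), ℝ)).symm (Fin.cons s (fun i => ν i)))

/-!
The reflection `ρ` in the hyperplane bisecting `x` and `y` exchanges the kernels `Φ (x - ·)` and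
`Φ (y - ·)`, so `(Φ∗θ)(x) − (Φ∗θ)(y) = ∫ Φ (x - z) (θ z - θ (ρ z))`. The increment `θ z - θ (ρ z)`
is antisymmetric, and on the side of `x`, where `Φ (x - ·)` is the larger kernel, it is at most
`ω |z - ρ z|`. Replacing it by the odd extension of `ω` at the signed distance from `ρ z` to `z`
therefore increases the integral. The new integrand depends on one coordinate only: integrating out
the others leaves the even marginal `φ`, and folding the line at the origin produces the second
difference of the odd extension of `ω` at `ξ`, which is the first bracket for `η < ξ/2` and the
second one for `η > ξ/2`.
-/

open scoped RealInnerProductSpace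

section OddExtension

/-- The odd extension to `ℝ` of a function on `(0, ∞)`; its value at `0` is `0`. Through it the two
brackets of the estimate become the second difference at `ξ` of a single function. -/
def oddExtension (f : ℝ → ℝ) (t : ℝ) : ℝ :=
  Real.sign t * f |t|

variable {f : ℝ → ℝ}

lemma oddExtension_odd (f : ℝ → ℝ) : Function.Odd (oddExtension f) := fun t => by
  simp [oddExtension, Real.sign_neg]

@[simp] lemma oddExtension_zero (f : ℝ → ℝ) : oddExtension f 0 = 0 := by
  simp [oddExtension]

lemma oddExtension_of_pos (f : ℝ → ℝ) {t : ℝ} (ht : 0 < t) : oddExtension f t = f t := by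
  simp [oddExtension, Real.sign_of_pos ht, abs_of_pos ht]

lemma oddExtension_of_neg (f : ℝ → ℝ) {t : ℝ} (ht : t < 0) : oddExtension f t = -f (-t) := by
  simp [oddExtension, Real.sign_of_neg ht, abs_of_neg ht]

lemma abs_oddExtension_le {C : ℝ} (hC : 0 ≤ C) (hf : ∀ t, 0 ≤ t → |f t| ≤ C) (t : ℝ) :
    |oddExtension f t| ≤ C := by
  rcases lt_trichotomy t 0 with ht | rfl | ht
  · simpa [oddExtension_of_neg f ht] using hf (-t) (by linarith)
  · simpa using hC
  · simpa [oddExtension_of_pos f ht] using hf t ht.le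

lemma monotone_oddExtension (hf₀ : 0 ≤ f 0) (hf : MonotoneOn f (Ici 0)) :
    Monotone (oddExtension f) := by
  have nonneg : ∀ {t}, 0 < t → 0 ≤ f t := fun ht => hf₀.trans (hf self_mem_Ici ht.le ht.le)
  intro s t hst
  rcases lt_trichotomy s 0 with hs | rfl | hs <;> rcases lt_trichotomy t 0 with ht | rfl | ht
  · rw [oddExtension_of_neg f hs, oddExtension_of_neg f ht]
    exact neg_le_neg (hf (neg_pos.2 ht).le (neg_pos.2 hs).le (neg_le_neg hst))
  · simpa [oddExtension_of_neg f hs] using nonneg (neg_pos.2 hs)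
  · rw [oddExtension_of_neg f hs, oddExtension_of_pos f ht]
    linarith [nonneg (neg_pos.2 hs), nonneg ht]
  · exact absurd hst ht.not_ge
  · rfl
  · simpa [oddExtension_of_pos f ht] using nonneg ht
  · exact absurd hst (ht.trans hs).not_ge
  · exact absurd hst hs.not_ge
  · rw [oddExtension_of_pos f hs, oddExtension_of_pos f ht]
    exact hf hs.le ht.le hst

lemma oddExtension_min_add_le (hf : MonotoneOn f (Ici 0)) (C : ℝ) {ξ t : ℝ} (hξ : 0 < ξ)
    (ht : 0 ≤ t) :
    oddExtension (fun s => min (f s) C) (ξ + t) + oddExtension (fun s => min (f s) C) (ξ - t)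
      ≤ oddExtension f (ξ + t) + oddExtension f (ξ - t) := by
  have hsum : 0 < ξ + t := by linarith
  simp only [oddExtension_of_pos _ hsum]
  rcases lt_trichotomy t ξ with h | rfl | h
  · simp only [oddExtension_of_pos _ (sub_pos.2 h)]
    exact add_le_add (min_le_left _ _) (min_le_left _ _)
  · simp
  · simp only [oddExtension_of_neg _ (sub_neg.2 h), neg_sub]
    have hle : f (t - ξ) ≤ f (ξ + t) := hf (sub_pos.2 h).le hsum.le (by linarith)
    rcases min_cases (f (ξ + t)) C with hp | hp <;>
      rcases min_cases (f (t - ξ)) C with hm | hm <;> linarith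

end OddExtension

section Concave

variable {f : ℝ → ℝ}

lemma subadditive_of_concaveOn_Ici (hf : ConcaveOn ℝ (Ici 0) f) (hf₀ : 0 ≤ f 0) {s t : ℝ}
    (hs : 0 ≤ s) (ht : 0 ≤ t) : f (s + t) ≤ f s + f t := by
  rcases (add_nonneg hs ht).eq_or_lt with h | h
  · obtain rfl : s = 0 := by linarith
    obtain rfl : t = 0 := by linarith
    simpa using hf₀
  · have weighted : ∀ {r}, 0 ≤ r → r ≤ s + t → r / (s + t) * f (s + t) ≤ f r := by
      intro r hr hrs
      have hw : 0 ≤ 1 - r / (s + t) := sub_nonneg.2 ((div_le_one h).2 hrs)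
      have := hf.2 (mem_Ici.2 h.le) self_mem_Ici (div_nonneg hr h.le) hw (by ring)
      simp only [smul_eq_mul, mul_zero, add_zero, div_mul_cancel₀ r h.ne'] at this
      linarith [mul_nonneg hw hf₀]
    calc f (s + t) = s / (s + t) * f (s + t) + t / (s + t) * f (s + t) := by field_simp
      _ ≤ f s + f t := add_le_add (weighted hs (by linarith)) (weighted ht (by linarith))

lemma second_difference_nonpos_of_concaveOn_Ici (hf : ConcaveOn ℝ (Ici 0) f) {ξ t : ℝ} (ht : 0 ≤ t)
    (htξ : t ≤ ξ) : f (ξ + t) + f (ξ - t) - 2 * f ξ ≤ 0 := by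
  have := hf.2 (mem_Ici.2 (by linarith : 0 ≤ ξ + t)) (mem_Ici.2 (sub_nonneg.2 htξ))
    (by norm_num : (0 : ℝ) ≤ 1 / 2) (by norm_num : (0 : ℝ) ≤ 1 / 2) (by norm_num)
  simp only [smul_eq_mul] at this
  rw [show 1 / 2 * (ξ + t) + 1 / 2 * (ξ - t) = ξ by ring] at this
  linarith

lemma reflected_second_difference_nonpos_of_concaveOn_Ici (hf : ConcaveOn ℝ (Ici 0) f)
    (hf₀ : 0 ≤ f 0) {ξ t : ℝ} (hξ : 0 ≤ ξ) (hξt : ξ ≤ t) : f (t + ξ) - f (t - ξ) - 2 * f ξ ≤ 0 := by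
  have hsub := subadditive_of_concaveOn_Ici hf hf₀ (sub_nonneg.2 hξt) (add_nonneg hξ hξ)
  rw [show t - ξ + (ξ + ξ) = t + ξ by ring] at hsub
  linarith [subadditive_of_concaveOn_Ici hf hf₀ hξ hξ]

end Concave

/-- A modulus of continuity without its regularity conditions: nonnegative at `0`, nondecreasing
and concave on `[0, ∞)`. -/
structure IsConcaveModulus (ω : ℝ → ℝ) : Prop where
  zero_nonneg : 0 ≤ ω 0
  monotoneOn : MonotoneOn ω (Ici 0)
  concaveOn : ConcaveOn ℝ (Ici 0) ω

lemma IsModulusOfContinuity.isConcaveModulus {ω : ℝ → ℝ} (hω : IsModulusOfContinuity ω) :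
    IsConcaveModulus ω where
  zero_nonneg := hω.1.ge
  monotoneOn := hω.2.2.1.monotoneOn
  concaveOn := hω.2.2.2.1

namespace IsConcaveModulus

variable {ω : ℝ → ℝ}

lemma nonneg (hω : IsConcaveModulus ω) {t : ℝ} (ht : 0 ≤ t) : 0 ≤ ω t :=
  hω.zero_nonneg.trans (hω.monotoneOn self_mem_Ici ht ht)

lemma monotone_oddExtension (hω : IsConcaveModulus ω) : Monotone (oddExtension ω) :=
  _root_.monotone_oddExtension hω.zero_nonneg hω.monotoneOn

lemma monotone_oddExtension_min (hω : IsConcaveModulus ω) {C : ℝ} (hC : 0 ≤ C) :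
    Monotone (oddExtension fun s => min (ω s) C) :=
  _root_.monotone_oddExtension (le_min hω.zero_nonneg hC)
    fun _ hs _ ht hst => min_le_min_right C (hω.monotoneOn hs ht hst)

lemma abs_oddExtension_min_le (hω : IsConcaveModulus ω) {C : ℝ} (hC : 0 ≤ C) (t : ℝ) :
    |oddExtension (fun s => min (ω s) C) t| ≤ C :=
  abs_oddExtension_le hC
    (fun s hs => (abs_of_nonneg (le_min (hω.nonneg hs) hC)).trans_le (min_le_right (ω s) C)) t

lemma oddExtension_second_difference_nonpos (hω : IsConcaveModulus ω) {ξ t : ℝ} (hξ : 0 < ξ)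
    (ht : 0 ≤ t) :
    oddExtension ω (ξ + t) + oddExtension ω (ξ - t) - 2 * ω ξ ≤ 0 := by
  have hsum : 0 < ξ + t := by linarith
  rw [oddExtension_of_pos _ hsum]
  rcases lt_trichotomy t ξ with h | rfl | h
  · rw [oddExtension_of_pos _ (sub_pos.2 h)]
    exact second_difference_nonpos_of_concaveOn_Ici hω.concaveOn ht h.le
  · rw [sub_self, oddExtension_zero]
    linarith [subadditive_of_concaveOn_Ici hω.concaveOn hω.zero_nonneg ht ht]
  · rw [oddExtension_of_neg _ (sub_neg.2 h), neg_sub, add_comm ξ t]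
    exact reflected_second_difference_nonpos_of_concaveOn_Ici hω.concaveOn hω.zero_nonneg hξ.le h.le

lemma abs_oddExtension_second_difference_le (hω : IsConcaveModulus ω) {ξ t : ℝ} (hξ : 0 < ξ)
    (ht : 0 ≤ t) :
    |oddExtension ω (ξ + t) + oddExtension ω (ξ - t) - 2 * ω ξ| ≤ 2 * ω ξ := by
  have hle : oddExtension ω (t - ξ) ≤ oddExtension ω (ξ + t) :=
    hω.monotone_oddExtension (by linarith)
  rw [← neg_sub ξ t, oddExtension_odd] at hle
  exact abs_le.2 ⟨by linarith,
    (hω.oddExtension_second_difference_nonpos hξ ht).trans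
      (mul_nonneg zero_le_two (hω.nonneg hξ.le))⟩

end IsConcaveModulus

section EvenKernel

variable {φ : ℝ → ℝ}

lemma integral_eq_setIntegral_Ioi_add_comp_neg {f : ℝ → ℝ} (hf : Integrable f) :
    ∫ t, f t = ∫ t in Ioi 0, (f t + f (-t)) := by
  rw [integral_add hf.integrableOn hf.comp_neg.integrableOn, integral_comp_neg_Ioi, neg_zero,
    add_comm, intervalIntegral.integral_Iic_add_Ioi hf.integrableOn hf.integrableOn]

lemma integral_even_mul_sub_eq_setIntegral_Ioi (hφ : Function.Even φ) (hφi : Integrable φ)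
    {g : ℝ → ℝ} {a : ℝ} (c : ℝ) (hg : Integrable fun t => φ t * g (a + 2 * t)) :
    (∫ t, φ t * g (a + 2 * t)) - (∫ t, φ t) * c
      = ∫ t in Ioi 0, φ t * (g (a + 2 * t) + g (a - 2 * t) - 2 * c) := by
  rw [← integral_mul_const, ← integral_sub' hg (hφi.mul_const c),
    integral_eq_setIntegral_Ioi_add_comp_neg (hg.sub (hφi.mul_const c))]
  refine setIntegral_congr_fun measurableSet_Ioi fun t _ => ?_
  simp only [Pi.sub_apply, hφ t, mul_neg, ← sub_eq_add_neg]
  ring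

namespace IsConcaveModulus

variable {ω : ℝ → ℝ} {ξ : ℝ}

lemma integrableOn_mul_oddExtension (hω : IsConcaveModulus ω) (hφi : Integrable φ) (hξ : 0 < ξ) :
    IntegrableOn (fun t => φ t *
      (oddExtension ω (ξ + 2 * t) + oddExtension ω (ξ - 2 * t) - 2 * ω ξ)) (Ioi 0) := by
  have hmeas := hω.monotone_oddExtension.measurable
  refine hφi.integrableOn.mul_bdd (c := 2 * ω ξ) (by fun_prop)
    (ae_restrict_of_forall_mem measurableSet_Ioi fun t ht => ?_)
  exact hω.abs_oddExtension_second_difference_le hξ (mul_nonneg zero_le_two (le_of_lt ht))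

lemma integral_mul_oddExtension_min_sub_le (hω : IsConcaveModulus ω) (hφ : Function.Even φ)
    (hφi : Integrable φ) (hφ₀ : ∀ t, 0 ≤ φ t) (hξ : 0 < ξ) {C : ℝ} (hC : 0 ≤ C) :
    (∫ t, φ t * oddExtension (fun s => min (ω s) C) (ξ + 2 * t)) - (∫ t, φ t) * ω ξ
      ≤ ∫ t in Ioi 0, φ t *
          (oddExtension ω (ξ + 2 * t) + oddExtension ω (ξ - 2 * t) - 2 * ω ξ) := by
  set g := oddExtension fun s => min (ω s) C
  have hmeas : Measurable g := (hω.monotone_oddExtension_min hC).measurable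
  have hbdd : ∀ t, ‖g t‖ ≤ C := hω.abs_oddExtension_min_le hC
  have hint : ∀ b, Integrable fun t => φ t * g (ξ + b * t) := fun b =>
    hφi.mul_bdd (c := C) (by fun_prop : Measurable fun t => g (ξ + b * t)).aestronglyMeasurable
      (ae_of_all _ fun t => hbdd _)
  have hint' : Integrable fun t => φ t * (g (ξ + 2 * t) + g (ξ - 2 * t) - 2 * ω ξ) := by
    refine (((hint 2).add (hint (-2))).sub (hφi.mul_const (2 * ω ξ))).congr
      (ae_of_all _ fun t => ?_)
    simp only [Pi.add_apply, Pi.sub_apply, neg_mul, ← sub_eq_add_neg]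
    ring
  rw [integral_even_mul_sub_eq_setIntegral_Ioi hφ hφi (ω ξ) (hint 2)]
  refine setIntegral_mono_on hint'.integrableOn (hω.integrableOn_mul_oddExtension hφi hξ)
    measurableSet_Ioi fun t ht => mul_le_mul_of_nonneg_left (sub_le_sub_right ?_ _) (hφ₀ t)
  exact oddExtension_min_add_le hω.monotoneOn C hξ (mul_nonneg zero_le_two (le_of_lt ht))

lemma setIntegral_Ioi_mul_oddExtension (hω : IsConcaveModulus ω) (hφi : Integrable φ)
    (hξ : 0 < ξ) :
    ∫ t in Ioi 0, φ t * (oddExtension ω (ξ + 2 * t) + oddExtension ω (ξ - 2 * t) - 2 * ω ξ)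
      = (∫ t in Ioo 0 (ξ / 2), φ t * (ω (ξ + 2 * t) + ω (ξ - 2 * t) - 2 * ω ξ))
        + ∫ t in Ioi (ξ / 2), φ t * (ω (2 * t + ξ) - ω (2 * t - ξ) - 2 * ω ξ) := by
  have hhalf : 0 ≤ ξ / 2 := by linarith
  have hint := hω.integrableOn_mul_oddExtension hφi hξ
  rw [← Ioc_union_Ioi_eq_Ioi hhalf, setIntegral_union (Ioc_disjoint_Ioi le_rfl) measurableSet_Ioi
    (hint.mono_set Ioc_subset_Ioi_self) (hint.mono_set (Ioi_subset_Ioi hhalf)),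
    integral_Ioc_eq_integral_Ioo]
  congr 1
  · refine setIntegral_congr_fun measurableSet_Ioo fun t ht => ?_
    simp only [oddExtension_of_pos ω (show 0 < ξ + 2 * t by linarith [ht.1]),
      oddExtension_of_pos ω (show 0 < ξ - 2 * t by linarith [ht.2])]
  · refine setIntegral_congr_fun measurableSet_Ioi fun t ht => ?_
    have ht' : ξ / 2 < t := ht
    simp only [add_comm ξ (2 * t), oddExtension_of_pos ω (show 0 < 2 * t + ξ by linarith),
      oddExtension_of_neg ω (show ξ - 2 * t < 0 by linarith), neg_sub, ← sub_eq_add_neg]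

end IsConcaveModulus

end EvenKernel

section Marginal

variable {m : ℕ} {Φ : EuclideanSpace ℝ (Fin (m + 1)) → ℝ}

/-- The identification of `ℝ × ℝ^m` with `ℝ^{m+1}` that prepends the first coordinate. -/
def euclideanCons (m : ℕ) :
    ℝ × EuclideanSpace ℝ (Fin m) ≃ᵐ EuclideanSpace ℝ (Fin (m + 1)) :=
  ((MeasurableEquiv.refl ℝ).prodCongr (MeasurableEquiv.toLp 2 (Fin m → ℝ)).symm).trans
    ((MeasurableEquiv.piFinSuccAbove (fun _ : Fin (m + 1) => ℝ) 0).symm.trans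
      (MeasurableEquiv.toLp 2 (Fin (m + 1) → ℝ)))

lemma euclideanCons_apply (p : ℝ × EuclideanSpace ℝ (Fin m)) :
    euclideanCons m p = WithLp.toLp 2 (Fin.cons p.1 p.2.ofLp) := by
  simp [euclideanCons, Fin.insertNthEquiv, MeasurableEquiv.prodCongr]

lemma norm_euclideanCons (p : ℝ × EuclideanSpace ℝ (Fin m)) :
    ‖euclideanCons m p‖ = √(p.1 ^ 2 + ‖p.2‖ ^ 2) := by
  rw [euclideanCons_apply, EuclideanSpace.norm_eq, EuclideanSpace.norm_sq_eq, Fin.sum_univ_succ]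
  simp

lemma measurePreserving_euclideanCons (m : ℕ) : MeasurePreserving (euclideanCons m) :=
  (PiLp.volume_preserving_toLp (Fin (m + 1))).comp
    (((volume_preserving_piFinSuccAbove (fun _ : Fin (m + 1) => ℝ) 0).symm _).comp
      ((MeasurePreserving.id volume).prod (PiLp.volume_preserving_ofLp (Fin m))))

lemma oneDimMarginal_eq (Φ : EuclideanSpace ℝ (Fin (m + 1)) → ℝ) (s : ℝ) :
    oneDimMarginal m Φ s = ∫ ν, Φ (euclideanCons m (s, ν)) := by
  simp only [oneDimMarginal, euclideanCons_apply, WithLp.equiv_symm_apply]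

lemma oneDimMarginal_nonneg (hΦ : ∀ z, 0 ≤ Φ z) (s : ℝ) : 0 ≤ oneDimMarginal m Φ s :=
  integral_nonneg fun _ => hΦ _

lemma oneDimMarginal_even (hΦ : ∀ z w, ‖z‖ = ‖w‖ → Φ z = Φ w) :
    Function.Even (oneDimMarginal m Φ) := fun s => by
  simp only [oneDimMarginal_eq]
  exact integral_congr_ae (ae_of_all _ fun ν => hΦ _ _ (by simp only [norm_euclideanCons, neg_sq]))

lemma integrable_oneDimMarginal (hΦ : Integrable Φ) : Integrable (oneDimMarginal m Φ) := by
  simp only [funext (oneDimMarginal_eq Φ)]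
  exact ((measurePreserving_euclideanCons m).integrable_comp_of_integrable hΦ).integral_prod_left

lemma integral_mul_apply_zero {g : ℝ → ℝ} (hint : Integrable fun w => Φ w * g (w 0)) :
    ∫ w, Φ w * g (w 0) = ∫ t, oneDimMarginal m Φ t * g t := by
  have hcons := measurePreserving_euclideanCons m
  rw [← hcons.integral_comp', Measure.volume_eq_prod,
    integral_prod (fun p => Φ (euclideanCons m p) * g (euclideanCons m p 0))
      (hcons.integrable_comp_of_integrable hint)]
  refine integral_congr_ae (ae_of_all _ fun t => ?_)
  simp only [oneDimMarginal_eq, ← integral_mul_const]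
  simp [euclideanCons_apply]

lemma integral_oneDimMarginal (hΦ : Integrable Φ) : ∫ t, oneDimMarginal m Φ t = ∫ z, Φ z := by
  simpa using (integral_mul_apply_zero (g := fun _ => 1) (by simpa using hΦ)).symm

lemma integral_mul_inner (hΦ : ∀ z w, ‖z‖ = ‖w‖ → Φ z = Φ w)
    {e : EuclideanSpace ℝ (Fin (m + 1))} (he : ‖e‖ = 1) {g : ℝ → ℝ}
    (hint : Integrable fun w => Φ w * g ⟪e, w⟫) :
    ∫ w, Φ w * g ⟪e, w⟫ = ∫ t, oneDimMarginal m Φ t * g t := by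
  obtain ⟨U, hU⟩ : ∃ U : EuclideanSpace ℝ (Fin (m + 1)) ≃ₗᵢ[ℝ] EuclideanSpace ℝ (Fin (m + 1)),
      U (EuclideanSpace.single 0 1) = e :=
    ⟨_, Submodule.reflection_sub (by simp [he])⟩
  have hrot : ∀ w, Φ (U w) * g ⟪e, U w⟫ = Φ w * g (w 0) := fun w => by
    rw [hΦ _ _ (U.norm_map w), ← hU, U.inner_map_map, EuclideanSpace.inner_single_left]
    simp
  have hU_int := U.measurePreserving.integrable_comp_of_integrable hint
  have hU_eq := U.measurePreserving.integral_comp' (f := U.toMeasurableEquiv)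
    fun w => Φ w * g ⟪e, w⟫
  simp only [Function.comp_def, LinearIsometryEquiv.coe_toMeasurableEquiv, hrot] at hU_int hU_eq
  rw [← hU_eq, integral_mul_apply_zero hU_int]

end Marginal

section Reflection

lemma integral_mul_nonneg_of_antisymm {α : Type*} [MeasurableSpace α] {μ : Measure α} {ρ : α ≃ᵐ α}
    (hρ : MeasurePreserving ρ μ μ) {k F : α → ℝ} (hint : Integrable (fun z => k z * F z) μ)
    (hF : ∀ z, F (ρ z) = -F z) (hkF : ∀ z, 0 ≤ (k z - k (ρ z)) * F z) :
    0 ≤ ∫ z, k z * F z ∂μ := by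
  have hfold : ∫ z, k (ρ z) * F z ∂μ = -∫ z, k z * F z ∂μ := by
    rw [← hρ.integral_comp' fun z => k z * F z, ← integral_neg]
    simp only [hF, mul_neg, neg_neg]
  have hint' : Integrable (fun z => k (ρ z) * F z) μ := by
    simpa [Function.comp_def, hF] using (hρ.integrable_comp_of_integrable hint).neg
  have htwice : 0 ≤ ∫ z, (k z - k (ρ z)) * F z ∂μ := integral_nonneg hkF
  simp only [sub_mul] at htwice
  rw [integral_sub hint hint', hfold] at htwice
  linarith

variable {E : Type*} [NormedAddCommGroup E]

/-- `Φ` is a nonincreasing function of the norm; in particular it is radially symmetric. -/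
def RadiallyAntitone (Φ : E → ℝ) : Prop :=
  ∀ z w, ‖z‖ ≤ ‖w‖ → Φ w ≤ Φ z

lemma RadiallyAntitone.eq_of_norm_eq {Φ : E → ℝ} (hΦ : RadiallyAntitone Φ) (z w : E)
    (h : ‖z‖ = ‖w‖) : Φ z = Φ w :=
  le_antisymm (hΦ w z h.ge) (hΦ z w h.le)

variable [InnerProductSpace ℝ E] {e : E}

lemma reflection_orthogonal_unit_apply (he : ‖e‖ = 1) (z : E) :
    (ℝ ∙ e)ᗮ.reflection z = z - (2 * ⟪e, z⟫) • e := by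
  rw [Submodule.reflection_orthogonal_apply, Submodule.reflection_singleton_apply]
  simp [he, two_smul, two_mul, add_smul]

lemma norm_smul_sub_le_norm_neg_smul_sub {a : ℝ} {z : E} (h : 0 ≤ a * ⟪e, z⟫) :
    ‖a • e - z‖ ≤ ‖-a • e - z‖ := by
  rw [← sq_le_sq₀ (norm_nonneg _) (norm_nonneg _), norm_sub_sq_real, norm_sub_sq_real, neg_smul,
    norm_neg, inner_neg_left, real_inner_smul_left]
  linarith

lemma norm_smul_sub_reflection (a : ℝ) (z : E) :
    ‖a • e - (ℝ ∙ e)ᗮ.reflection z‖ = ‖-a • e - z‖ := by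
  rw [← (ℝ ∙ e)ᗮ.reflection.norm_map (-a • e - z), map_sub, map_smul,
    Submodule.reflection_orthogonalComplement_singleton_eq_neg, smul_neg, neg_smul, neg_neg]

lemma inner_reflection_orthogonal_self (e z : E) :
    ⟪e, (ℝ ∙ e)ᗮ.reflection z⟫ = -⟪e, z⟫ := by
  rw [← (ℝ ∙ e)ᗮ.reflection.inner_map_map e z,
    Submodule.reflection_orthogonalComplement_singleton_eq_neg, inner_neg_left, neg_neg]

lemma RadiallyAntitone.sub_mul_nonneg {Φ F : E → ℝ} (hΦ : RadiallyAntitone Φ) {a : ℝ} (ha : 0 ≤ a)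
    (hF_odd : ∀ z, F ((ℝ ∙ e)ᗮ.reflection z) = -F z) (hF : ∀ z, 0 ≤ ⟪e, z⟫ → 0 ≤ F z) (z : E) :
    0 ≤ (Φ (a • e - z) - Φ (a • e - (ℝ ∙ e)ᗮ.reflection z)) * F z := by
  rw [hΦ.eq_of_norm_eq _ _ (norm_smul_sub_reflection a z)]
  rcases le_total 0 ⟪e, z⟫ with hz | hz
  · have hle := norm_smul_sub_le_norm_neg_smul_sub (mul_nonneg ha hz)
    exact mul_nonneg (sub_nonneg.2 (hΦ _ _ hle)) (hF z hz)
  · have hle := norm_smul_sub_le_norm_neg_smul_sub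
      (mul_nonneg_of_nonpos_of_nonpos (neg_nonpos.2 ha) hz)
    rw [neg_neg] at hle
    have hneg := hF ((ℝ ∙ e)ᗮ.reflection z)
      (by rw [inner_reflection_orthogonal_self]; exact neg_nonneg.2 hz)
    rw [hF_odd, neg_nonneg] at hneg
    exact mul_nonneg_of_nonpos_of_nonpos (sub_nonpos.2 (hΦ _ _ hle)) hneg

lemma sub_reflection_le (he : ‖e‖ = 1) {θ : E → ℝ} {g : ℝ → ℝ}
    (hθg : ∀ z w, θ z - θ w ≤ g (dist z w)) {z : E} (hz : 0 ≤ ⟪e, z⟫) :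
    θ z - θ ((ℝ ∙ e)ᗮ.reflection z) ≤ g (2 * ⟪e, z⟫) := by
  have hdist : dist z ((ℝ ∙ e)ᗮ.reflection z) = 2 * ⟪e, z⟫ := by
    rw [reflection_orthogonal_unit_apply he, dist_eq_norm, sub_sub_cancel, norm_smul, he, mul_one,
      Real.norm_of_nonneg (mul_nonneg zero_le_two hz)]
  simpa only [hdist] using hθg z ((ℝ ∙ e)ᗮ.reflection z)

variable [FiniteDimensional ℝ E] [MeasurableSpace E] [BorelSpace E]

lemma integral_sub_mul_sub_integral_neg {Φ θ : E → ℝ} (hΦ : ∀ z w, ‖z‖ = ‖w‖ → Φ z = Φ w) (a : ℝ)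
    (hpos : Integrable fun z => Φ (a • e - z) * θ z)
    (hneg : Integrable fun z => Φ (-a • e - z) * θ z) :
    (∫ z, Φ (a • e - z) * θ z) - ∫ z, Φ (-a • e - z) * θ z
      = ∫ z, Φ (a • e - z) * (θ z - θ ((ℝ ∙ e)ᗮ.reflection z)) := by
  set R := (ℝ ∙ e)ᗮ.reflection
  have hkernel : ∀ z, Φ (-a • e - R z) = Φ (a • e - z) := fun z =>
    hΦ _ _ (by rw [norm_smul_sub_reflection, neg_neg])
  have hint := R.measurePreserving.integrable_comp_of_integrable hneg
  have hchange := R.measurePreserving.integral_comp' (f := R.toMeasurableEquiv)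
    fun z => Φ (-a • e - z) * θ z
  simp only [Function.comp_def, LinearIsometryEquiv.coe_toMeasurableEquiv, hkernel] at hint hchange
  rw [← hchange, ← integral_sub hpos hint]
  simp only [mul_sub]

lemma integral_sub_mul_inner_eq {Φ : E → ℝ} (hΦ : ∀ z w, ‖z‖ = ‖w‖ → Φ z = Φ w) (he : ‖e‖ = 1)
    (a : ℝ) (g : ℝ → ℝ) :
    ∫ z, Φ (a • e - z) * g (2 * ⟪e, z⟫) = ∫ w, Φ w * g (2 * a + 2 * ⟪e, w⟫) := by
  rw [← integral_add_left_eq_self _ (a • e)]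
  refine integral_congr_ae (ae_of_all _ fun w => ?_)
  simp only [sub_add_cancel_left, hΦ (-w) w (norm_neg w), inner_add_right, real_inner_smul_right,
    real_inner_self_eq_norm_sq, he, one_pow, mul_one, mul_add]

lemma RadiallyAntitone.integral_mul_sub_reflection_le {Φ θ : E → ℝ} (hΦ : RadiallyAntitone Φ)
    {g : ℝ → ℝ} (hg : Function.Odd g) (hθg : ∀ z w, θ z - θ w ≤ g (dist z w)) (he : ‖e‖ = 1)
    {a : ℝ} (ha : 0 ≤ a)
    (hint_θ : Integrable fun z => Φ (a • e - z) * (θ z - θ ((ℝ ∙ e)ᗮ.reflection z)))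
    (hint_g : Integrable fun z => Φ (a • e - z) * g (2 * ⟪e, z⟫)) :
    ∫ z, Φ (a • e - z) * (θ z - θ ((ℝ ∙ e)ᗮ.reflection z))
      ≤ ∫ z, Φ (a • e - z) * g (2 * ⟪e, z⟫) := by
  set R := (ℝ ∙ e)ᗮ.reflection with hR
  set F : E → ℝ := fun z => g (2 * ⟪e, z⟫) - (θ z - θ (R z)) with hF
  have hF_odd : ∀ z, F (R z) = -F z := fun z => by
    simp only [hF, hR, Submodule.reflection_reflection, inner_reflection_orthogonal_self, mul_neg,
      hg (2 * ⟪e, z⟫)]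
    ring
  have hF_nonneg : ∀ z, 0 ≤ ⟪e, z⟫ → 0 ≤ F z := fun z hz =>
    sub_nonneg.2 (sub_reflection_le he hθg hz)
  have hF_eq : (fun z => Φ (a • e - z) * F z) = fun z =>
      Φ (a • e - z) * g (2 * ⟪e, z⟫) - Φ (a • e - z) * (θ z - θ (R z)) :=
    funext fun z => mul_sub _ _ _
  have hmain : 0 ≤ ∫ z, Φ (a • e - z) * F z :=
    integral_mul_nonneg_of_antisymm (ρ := R.toMeasurableEquiv) R.measurePreserving
      (hF_eq ▸ hint_g.sub' hint_θ) hF_odd (hΦ.sub_mul_nonneg ha hF_odd hF_nonneg)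
  rwa [hF_eq, integral_sub hint_g hint_θ, sub_nonneg] at hmain

section Convolution

variable {Φ θ : E → ℝ} {g : ℝ → ℝ} {M C : ℝ}

lemma RadiallyAntitone.integral_sub_integral_neg_le (hΦ : RadiallyAntitone Φ)
    (hΦi : Integrable Φ) (hθ : AEStronglyMeasurable θ) (hθM : ∀ z, |θ z| ≤ M)
    (hg : Function.Odd g) (hgm : Measurable g) (hgC : ∀ t, |g t| ≤ C)
    (hθg : ∀ z w, θ z - θ w ≤ g (dist z w)) (he : ‖e‖ = 1) {a : ℝ} (ha : 0 ≤ a) :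
    (∫ z, Φ (a • e - z) * θ z) - ∫ z, Φ (-a • e - z) * θ z
      ≤ ∫ w, Φ w * g (2 * a + 2 * ⟪e, w⟫) := by
  have hint : ∀ {f : E → ℝ} {c : ℝ} (u : E), AEStronglyMeasurable f → (∀ z, |f z| ≤ c) →
      Integrable fun z => Φ (u - z) * f z := fun u hf hfc =>
    (hΦi.comp_sub_left u).mul_bdd hf (ae_of_all _ hfc)
  have hgap : AEStronglyMeasurable fun z => θ z - θ ((ℝ ∙ e)ᗮ.reflection z) :=
    hθ.sub (hθ.comp_measurePreserving (ℝ ∙ e)ᗮ.reflection.measurePreserving)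
  have hgap_le : ∀ z, |θ z - θ ((ℝ ∙ e)ᗮ.reflection z)| ≤ M + M := fun z =>
    (abs_sub _ _).trans (add_le_add (hθM _) (hθM _))
  have hg_inner : Measurable fun z => g (2 * ⟪e, z⟫) := by fun_prop
  calc (∫ z, Φ (a • e - z) * θ z) - ∫ z, Φ (-a • e - z) * θ z
      = ∫ z, Φ (a • e - z) * (θ z - θ ((ℝ ∙ e)ᗮ.reflection z)) :=
        integral_sub_mul_sub_integral_neg hΦ.eq_of_norm_eq a (hint _ hθ hθM) (hint _ hθ hθM)
    _ ≤ ∫ z, Φ (a • e - z) * g (2 * ⟪e, z⟫) :=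
        hΦ.integral_mul_sub_reflection_le hg hθg he ha (hint _ hgap hgap_le)
          (hint _ hg_inner.aestronglyMeasurable fun _ => hgC _)
    _ = ∫ w, Φ w * g (2 * a + 2 * ⟪e, w⟫) :=
        integral_sub_mul_inner_eq hΦ.eq_of_norm_eq he a g

lemma RadiallyAntitone.convolution_sub_convolution_le (hΦ : RadiallyAntitone Φ)
    (hΦi : Integrable Φ) (hθ : AEStronglyMeasurable θ) (hθM : ∀ z, |θ z| ≤ M)
    (hg : Function.Odd g) (hgm : Measurable g) (hgC : ∀ t, |g t| ≤ C)
    (hθg : ∀ z w, θ z - θ w ≤ g (dist z w)) (he : ‖e‖ = 1) {x y : E}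
    (hxy : x - y = dist x y • e) :
    (∫ z, Φ (x - z) * θ z) - ∫ z, Φ (y - z) * θ z
      ≤ ∫ w, Φ w * g (dist x y + 2 * ⟪e, w⟫) := by
  obtain ⟨a, ha⟩ : ∃ a, 2 * a = dist x y := ⟨dist x y / 2, by ring⟩
  obtain ⟨c, hc⟩ : ∃ c, y = c + -a • e := ⟨y + a • e, by simp⟩
  have hx : x = c + a • e := by
    rw [← sub_add_cancel x y, hxy, ← ha, hc]
    module
  have hcentre : ∀ b : ℝ, ∫ z, Φ (c + b • e - z) * θ z = ∫ z, Φ (b • e - z) * θ (c + z) :=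
    fun b => by
      rw [← integral_add_left_eq_self _ c]
      simp only [add_sub_add_left_eq_sub]
  have := hΦ.integral_sub_integral_neg_le hΦi (θ := fun z => θ (c + z))
    (hθ.comp_measurePreserving (measurePreserving_add_left volume c)) (fun z => hθM _) hg hgm hgC
    (fun z w => by simpa using hθg (c + z) (c + w)) he (a := a)
    (by linarith [dist_nonneg (x := x) (y := y)])
  rwa [ha, ← hcentre, ← hcentre, ← hx, ← hc] at this

end Convolution

end Reflection

lemma sub_le_oddExtension_min_dist {E : Type*} [MetricSpace E] {θ : E → ℝ} {ω : ℝ → ℝ} {M : ℝ}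
    (hθM : ∀ z, |θ z| ≤ M) (hθω : ∀ z w, θ z - θ w ≤ ω (dist z w)) (z w : E) :
    θ z - θ w ≤ oddExtension (fun s => min (ω s) (2 * M)) (dist z w) := by
  rcases eq_or_ne z w with rfl | hzw
  · simp
  · rw [oddExtension_of_pos _ (dist_pos.2 hzw)]
    exact le_min (hθω z w) (by linarith [(abs_le.1 (hθM z)).2, (abs_le.1 (hθM w)).1])

lemma RadiallyAntitone.convolution_sub_convolution_le_oddExtension {m : ℕ}
    {θ Φ : EuclideanSpace ℝ (Fin (m + 1)) → ℝ} (hΦ : RadiallyAntitone Φ) (hΦ₀ : ∀ z, 0 ≤ Φ z)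
    (hΦi : Integrable Φ) (hθ : AEStronglyMeasurable θ) {M : ℝ} (hθM : ∀ z, |θ z| ≤ M)
    {ω : ℝ → ℝ} (hω : IsConcaveModulus ω) (hθω : ∀ z w, θ z - θ w ≤ ω (dist z w))
    {x y : EuclideanSpace ℝ (Fin (m + 1))} (hxy : x ≠ y) :
    (∫ z, Φ (x - z) * θ z) - (∫ z, Φ (y - z) * θ z) - (∫ z, Φ z) * ω (dist x y)
      ≤ ∫ t in Ioi 0, oneDimMarginal m Φ t * (oddExtension ω (dist x y + 2 * t)
          + oddExtension ω (dist x y - 2 * t) - 2 * ω (dist x y)) := by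
  have hξ : 0 < dist x y := dist_pos.2 hxy
  have hC : 0 ≤ 2 * M := mul_nonneg zero_le_two ((abs_nonneg _).trans (hθM x))
  obtain ⟨e, he, hxye⟩ : ∃ e : EuclideanSpace ℝ (Fin (m + 1)), ‖e‖ = 1 ∧ x - y = dist x y • e :=
    ⟨(dist x y)⁻¹ • (x - y), by simp [norm_smul, ← dist_eq_norm, hξ.ne'],
      (smul_inv_smul₀ hξ.ne' _).symm⟩
  -- `ω` may be unbounded; its truncation at `2M` keeps all integrals absolutely convergent.
  set g := oddExtension fun s => min (ω s) (2 * M)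
  have hgm : Measurable g := (hω.monotone_oddExtension_min hC).measurable
  have hgC : ∀ t, |g t| ≤ 2 * M := hω.abs_oddExtension_min_le hC
  have hg_inner : Measurable fun w => g (dist x y + 2 * ⟪e, w⟫) := by fun_prop
  calc (∫ z, Φ (x - z) * θ z) - (∫ z, Φ (y - z) * θ z) - (∫ z, Φ z) * ω (dist x y)
      ≤ (∫ w, Φ w * g (dist x y + 2 * ⟪e, w⟫)) - (∫ z, Φ z) * ω (dist x y) :=
        sub_le_sub_right (hΦ.convolution_sub_convolution_le hΦi hθ hθM (oddExtension_odd _) hgm hgC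
          (sub_le_oddExtension_min_dist hθM hθω) he hxye) _
    _ = (∫ t, oneDimMarginal m Φ t * g (dist x y + 2 * t))
          - (∫ t, oneDimMarginal m Φ t) * ω (dist x y) := by
        rw [integral_oneDimMarginal hΦi,
          integral_mul_inner hΦ.eq_of_norm_eq he (g := fun t => g (dist x y + 2 * t))
            (hΦi.mul_bdd hg_inner.aestronglyMeasurable (ae_of_all _ fun _ => hgC _))]
    _ ≤ _ := hω.integral_mul_oddExtension_min_sub_le (oneDimMarginal_even hΦ.eq_of_norm_eq)
        (integrable_oneDimMarginal hΦi) (oneDimMarginal_nonneg hΦ₀) hξ hC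

theorem dissipation_convolution_estimate_general (m : ℕ)
    {θ Φ : EuclideanSpace ℝ (Fin (m + 1)) → ℝ} (hθ : AEStronglyMeasurable θ) {M : ℝ}
    (hθM : ∀ z, |θ z| ≤ M) {ω : ℝ → ℝ} (hω : IsConcaveModulus ω)
    (hθω : ∀ z w, θ z - θ w ≤ ω (dist z w)) (hΦ₀ : ∀ z, 0 ≤ Φ z) (hΦi : Integrable Φ)
    (hΦ : RadiallyAntitone Φ) {x y : EuclideanSpace ℝ (Fin (m + 1))} (hxy : x ≠ y) :
    ((∫ z, Φ (x - z) * θ z) - (∫ z, Φ (y - z) * θ z) - (∫ z, Φ z) * ω (dist x y)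
      ≤ (∫ η in Ioo 0 (dist x y / 2), oneDimMarginal m Φ η *
            (ω (dist x y + 2 * η) + ω (dist x y - 2 * η) - 2 * ω (dist x y)))
        + ∫ η in Ioi (dist x y / 2), oneDimMarginal m Φ η *
            (ω (2 * η + dist x y) - ω (2 * η - dist x y) - 2 * ω (dist x y))) ∧
    (∀ η ∈ Ioo 0 (dist x y / 2),
      ω (dist x y + 2 * η) + ω (dist x y - 2 * η) - 2 * ω (dist x y) ≤ 0) ∧
    (∀ η ∈ Ici (dist x y / 2),
      ω (2 * η + dist x y) - ω (2 * η - dist x y) - 2 * ω (dist x y) ≤ 0) := by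
  have hξ : 0 < dist x y := dist_pos.2 hxy
  refine ⟨?_, fun η hη => ?_, fun η hη => ?_⟩
  · rw [← hω.setIntegral_Ioi_mul_oddExtension (integrable_oneDimMarginal hΦi) hξ]
    exact hΦ.convolution_sub_convolution_le_oddExtension hΦ₀ hΦi hθ hθM hω hθω hxy
  · exact second_difference_nonpos_of_concaveOn_Ici hω.concaveOn (by linarith [hη.1])
      (by linarith [hη.2])
  · exact reflected_second_difference_nonpos_of_concaveOn_Ici hω.concaveOn hω.zero_nonneg hξ.le
      (by linarith [mem_Ici.1 hη])

/-- **Dissipation convolution estimate (core of Lemma 2.5).**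
If `θ` obeys `ω`, `θ(x) − θ(y) = ω(ξ)` with `ξ = |x−y|`, and `Φ` is a positive, integrable,
radially symmetric and radially nonincreasing kernel of total mass one with one-dimensional
marginal `φ`, then `(Φ∗θ)(x) − (Φ∗θ)(y) − ω(ξ)` is bounded above by
`∫_0^{ξ/2} φ(η)[ω(ξ+2η)+ω(ξ−2η)−2ω(ξ)]dη + ∫_{ξ/2}^∞ φ(η)[ω(2η+ξ)−ω(2η−ξ)−2ω(ξ)]dη`,
and both bracketed expressions are nonpositive. -/
theorem dissipation_convolution_estimate (m : ℕ)
    (θ Φ : EuclideanSpace ℝ (Fin (m+1)) → ℝ)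
    (hθc : Continuous θ) (M : ℝ) (hθb : ∀ z, |θ z| ≤ M)
    (ω : ℝ → ℝ) (hω : IsModulusOfContinuity ω)
    (hθω : ∀ z w, |θ z - θ w| ≤ ω (dist z w))
    (hΦpos : ∀ z, 0 < Φ z) (hΦint : Integrable Φ)
    (hΦrad : ∀ z w, ‖z‖ = ‖w‖ → Φ z = Φ w)
    (hΦmono : ∀ z w, ‖z‖ ≤ ‖w‖ → Φ w ≤ Φ z)
    (hΦnorm : (∫ z, Φ z) = 1)
    (x y : EuclideanSpace ℝ (Fin (m+1))) (hxy : x ≠ y)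
    (hbreak : θ x - θ y = ω (dist x y)) :
    ((∫ z, Φ (x - z) * θ z) - (∫ z, Φ (y - z) * θ z) - ω (dist x y)
      ≤ (∫ η in Ioo 0 (dist x y / 2),
          oneDimMarginal m Φ η *
            (ω (dist x y + 2*η) + ω (dist x y - 2*η) - 2 * ω (dist x y)))
        + ∫ η in Ioi (dist x y / 2),
            oneDimMarginal m Φ η *
              (ω (2*η + dist x y) - ω (2*η - dist x y) - 2 * ω (dist x y))) ∧
    (∀ η ∈ Ioo (0:ℝ) (dist x y / 2),
      ω (dist x y + 2*η) + ω (dist x y - 2*η) - 2 * ω (dist x y) ≤ 0) ∧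
    (∀ η ∈ Ici (dist x y / 2),
      ω (2*η + dist x y) - ω (2*η - dist x y) - 2 * ω (dist x y) ≤ 0) := by
  simpa only [hΦnorm, one_mul] using dissipation_convolution_estimate_general m
    hθc.aestronglyMeasurable hθb hω.isConcaveModulus (fun z w => (le_abs_self _).trans (hθω z w))
    (fun z => (hΦpos z).le) hΦint hΦmono hxy

end
end

section
/- A priori gradient bound for the critical Burgers equation (quantitative part of Theorem on Burgers critical regularity, eq. (gradburest)): There exists an absolute constant C > 0 such that the following holds. Let θ : ℝ × [0,T] → ℝ be smooth, periodic in x (with any period), and satisfy ∂_t θ = θ ∂_x θ − L θ, where L f(x) = P.V. ∫_ℝ (f(x) − f(x+y))/|y|² dy is the (unnormalized) critical dissipation operator. Then for all t ∈ [0,T], ‖∂_x θ(·,t)‖_{L^∞} ≤ ‖∂_x θ(·,0)‖_{L^∞} · exp( C ‖θ(·,0)‖_{L^∞} ). -/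
open Set MeasureTheory Filter Topology

/-!
The modulus of continuity `ω ξ = log (1 + B ξ)` is preserved by the flow. If it were lost, then at
the first critical time either `|θ x - θ y| = ω (x - y)` for some `y < x`, or `|∂ₓθ| = B` at some
point. The second alternative is impossible for a `C²` function obeying `ω`, since `ω''(0) < 0`.
In the first alternative the transport terms contribute `± ω ω'` to the time derivative of
`θ x - θ y`. Compared with the odd extension of `ω` centred at the midpoint of `x` and `y`, the
dissipation contributes at most `-2 ω ω'`, so the difference was strictly decreasing and could not
have reached `ω (x - y)` for the first time. The initial datum obeys `ω` as soon as
`B > ‖∂ₓθ₀‖ exp (2 ‖θ₀‖)`, and `ω` yields `|∂ₓθ| ≤ B` at all later times.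
-/

lemma integral_mono_of_add_reflection_le {f g : ℝ → ℝ} {c : ℝ} (hf : Integrable f)
    (hg : Integrable g) (h : ∀ y, c / 2 ≤ y → f y + f (c - y) ≤ g y + g (c - y)) :
    ∫ y, f y ≤ ∫ y, g y := by
  have hall (y : ℝ) : f y + f (c - y) ≤ g y + g (c - y) := by
    rcases le_total (c / 2) y with hy | hy
    · exact h y hy
    · have := h (c - y) (by linarith)
      rw [sub_sub_cancel] at this
      linarith
  have hint : ∫ y, (f y + f (c - y)) ≤ ∫ y, (g y + g (c - y)) :=
    integral_mono (hf.add (hf.comp_sub_left c)) (hg.add (hg.comp_sub_left c)) hall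
  rw [integral_add hf (hf.comp_sub_left c), integral_add hg (hg.comp_sub_left c),
    integral_sub_left_eq_self, integral_sub_left_eq_self] at hint
  linarith

lemma nonneg_of_hasDerivWithinAt_of_isMaxOn_Icc {f : ℝ → ℝ} {f' a b : ℝ} (hab : a < b)
    (hf : HasDerivWithinAt f f' (Icc a b) b) (hmax : IsMaxOn f (Icc a b) b) : 0 ≤ f' := by
  have hcone : a - b ∈ posTangentConeAt (Icc a b) b :=
    sub_mem_posTangentConeAt_of_segment_subset (by rw [segment_symm, segment_eq_Icc hab.le])
  have h : (a - b) * f' ≤ 0 := by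
    simpa using hmax.localize.hasFDerivWithinAt_nonpos hf.hasFDerivWithinAt hcone
  nlinarith

lemma eventually_nhdsGT_lt_of_deriv_deriv_neg {f : ℝ → ℝ} {a : ℝ} (hdd : deriv (deriv f) a < 0)
    (hd : deriv f a = 0) (hc : ContinuousAt f a) : ∀ᶠ x in 𝓝[>] a, f x < f a := by
  have hneg : ∀ᶠ x in 𝓝[>] a, deriv f x < 0 := deriv_neg_right_of_sign_deriv
    (nhdsWithin_le_nhds (eventually_nhdsWithin_sign_eq_of_deriv_neg hdd hd))
  obtain ⟨b, hab : a < b, hb⟩ := mem_nhdsGT_iff_exists_Ioc_subset.1 hneg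
  have hcont : ContinuousOn f (Icc a b) := by
    intro x hx
    rcases hx.1.eq_or_lt with rfl | hax
    · exact hc.continuousWithinAt
    · exact (differentiableAt_of_deriv_ne_zero
        (hb ⟨hax, hx.2⟩ : deriv f x < 0).ne).continuousAt.continuousWithinAt
  have hanti : StrictAntiOn f (Icc a b) := strictAntiOn_of_deriv_neg (convex_Icc a b) hcont
    fun x hx => hb (Ioo_subset_Ioc_self (interior_Icc (a := a) ▸ hx))
  filter_upwards [Ioc_mem_nhdsGT hab] with x hx
  exact hanti (left_mem_Icc.2 hab.le) (Ioc_subset_Icc_self hx) hx.1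

lemma exists_first_nonneg {X : Type*} [TopologicalSpace X] [T2Space X] {K : Set X} {a b : ℝ}
    (hK : IsCompact K) {Φ : X × ℝ → ℝ} (hΦ : ContinuousOn Φ (K ×ˢ Icc a b))
    (ha : ∀ x ∈ K, Φ (x, a) < 0) (hpos : ∃ x ∈ K, ∃ t ∈ Icc a b, 0 ≤ Φ (x, t)) :
    ∃ t ∈ Ioc a b, (∀ s ∈ Icc a t, ∀ x ∈ K, Φ (x, s) ≤ 0) ∧ ∃ x ∈ K, Φ (x, t) = 0 := by
  obtain ⟨x', hx', t', ht', hpos'⟩ := hpos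
  have hcompact : IsCompact (K ×ˢ Icc a b) := hK.prod isCompact_Icc
  have hclosed : IsClosed (K ×ˢ Icc a b ∩ Φ ⁻¹' Ici 0) :=
    hΦ.preimage_isClosed_of_isClosed hcompact.isClosed isClosed_Ici
  obtain ⟨⟨x, t⟩, ⟨⟨hx, ht⟩, hxt⟩, hmin⟩ :=
    (hcompact.of_isClosed_subset hclosed inter_subset_left).exists_isMinOn
      ⟨(x', t'), ⟨hx', ht'⟩, hpos'⟩ continuous_snd.continuousOn
  simp only at hx ht
  have hat : a < t := ht.1.lt_of_ne (by rintro rfl; exact (ha x hx).not_ge hxt)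
  have hbefore : ∀ s ∈ Ico a t, ∀ y ∈ K, Φ (y, s) < 0 := by
    intro s hs y hy
    by_contra! hcon
    have hts : t ≤ s := hmin (a := (y, s)) ⟨⟨hy, hs.1, hs.2.le.trans ht.2⟩, hcon⟩
    exact hts.not_gt hs.2
  have huntil : ∀ s ∈ Icc a t, ∀ y ∈ K, Φ (y, s) ≤ 0 := by
    intro s hs y hy
    have hcl : closure (Ico a t) = Icc a t := closure_Ico hat.ne
    refine le_on_closure (s := Ico a t) (f := fun s => Φ (y, s))
      (fun r hr => (hbefore r hr y hy).le) (hΦ.comp (by fun_prop) fun r hr => ?_)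
      continuousOn_const (hcl ▸ hs)
    rw [hcl] at hr
    exact ⟨hy, hr.1, hr.2.trans ht.2⟩
  exact ⟨t, ⟨hat, ht.2⟩, huntil, x, hx, (huntil t ⟨hat.le, le_rfl⟩ x hx).antisymm hxt⟩

lemma exists_abs_le_of_periodic {X : Type*} [TopologicalSpace X] {K : Set X} (hK : IsCompact K)
    {f : ℝ → X → ℝ} {c : ℝ} (hc : 0 < c)
    (hf : ContinuousOn (fun p : ℝ × X => f p.1 p.2) (univ ×ˢ K))
    (hper : ∀ t ∈ K, Function.Periodic (f · t) c) : ∃ M, ∀ t ∈ K, ∀ x, |f x t| ≤ M := by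
  obtain ⟨M, hM⟩ := (isCompact_Icc (a := (0 : ℝ)) (b := c)).prod hK
    |>.exists_bound_of_continuousOn (hf.mono (prod_mono_left (subset_univ _)))
  refine ⟨M, fun t ht x => ?_⟩
  obtain ⟨y, hy, hxy⟩ := (hper t ht).exists_mem_Ico₀ hc x
  exact (congrArg abs hxy).trans_le (hM (y, t) ⟨Ico_subset_Icc_self hy, ht⟩)

lemma bddAbove_range_abs_of_periodic {f : ℝ → ℝ} {c : ℝ} (hc : c ≠ 0)
    (hper : Function.Periodic f c) (hf : Continuous f) : BddAbove (range fun x => |f x|) :=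
  ((hper.comp abs).compact_of_continuous hc hf.abs).bddAbove

lemma periodic_deriv {f : ℝ → ℝ} {c : ℝ} (hf : Function.Periodic f c) :
    Function.Periodic (deriv f) c := fun x => by
  rw [← deriv_comp_add_const, hf.funext]

lemma contDiff_slice {E F G : Type*} [NormedAddCommGroup E] [NormedSpace ℝ E]
    [NormedAddCommGroup F] [NormedSpace ℝ F] [NormedAddCommGroup G] [NormedSpace ℝ G]
    {f : E → F → G} {s : Set F} {n : WithTop ℕ∞}
    (hf : ContDiffOn ℝ n (fun p : E × F => f p.1 p.2) (univ ×ˢ s)) {t : F} (ht : t ∈ s) :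
    ContDiff ℝ n (f · t) := by
  rw [← contDiffOn_univ]
  exact hf.comp (f := fun x : E => (x, t)) (by fun_prop) fun x _ => ⟨mem_univ _, ht⟩

section Slices

variable {E F : Type*} [NormedAddCommGroup E] [NormedSpace ℝ E] [NormedAddCommGroup F]
  [NormedSpace ℝ F] {f : ℝ → F → E} {s : Set F}

lemma continuousOn_deriv_slice (hs : UniqueDiffOn ℝ s)
    (hf : ContDiffOn ℝ 1 (fun p : ℝ × F => f p.1 p.2) (univ ×ˢ s)) :
    ContinuousOn (fun p : ℝ × F => deriv (f · p.2) p.1) (univ ×ˢ s) := by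
  have hc := hf.continuousOn_fderivWithin (uniqueDiffOn_univ.prod hs) le_rfl
  refine (hc.clm_apply (continuousOn_const (c := ((1, 0) : ℝ × F)))).congr fun p hp => ?_
  have hfp := (hf.differentiableOn one_ne_zero p hp).hasFDerivWithinAt
  have hline : HasDerivWithinAt (fun x : ℝ => (x, p.2)) ((1, 0) : ℝ × F) univ p.1 :=
    ((hasDerivAt_id p.1).prodMk (hasDerivAt_const p.1 p.2)).hasDerivWithinAt
  exact (hasDerivWithinAt_univ.1 <| HasFDerivWithinAt.comp_hasDerivWithinAt (x := p.1)
    (f := fun x : ℝ => (x, p.2)) (t := univ ×ˢ s) hfp hline fun x _ => ⟨mem_univ _, hp.2⟩).deriv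

lemma dslope_add_eq_integral [CompleteSpace E] {u : ℝ → E} (hu : ContDiff ℝ 1 u) (x ξ : ℝ) :
    dslope u x (x + ξ) = ∫ s in (0 : ℝ)..1, deriv u (x + s * ξ) := by
  rcases eq_or_ne ξ 0 with rfl | hξ
  · simp
  · have hd : Differentiable ℝ u := hu.differentiable one_ne_zero
    have hftc : ξ • ∫ s in (0 : ℝ)..1, deriv u (x + s • ξ) = u (x + ξ) - u x :=
      intervalIntegral.integral_unitInterval_deriv_eq_sub
        ((hu.continuous_deriv le_rfl).comp (by fun_prop)).continuousOn
        fun s _ => (hd _).hasDerivAt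
    have hsub := sub_smul_dslope u x (x + ξ)
    rw [add_sub_cancel_left] at hsub
    simpa using smul_right_injective E hξ (hsub.trans hftc.symm)

lemma continuousOn_dslope_slice [CompleteSpace E] (hs : UniqueDiffOn ℝ s)
    (hf : ContDiffOn ℝ 1 (fun p : ℝ × F => f p.1 p.2) (univ ×ˢ s)) :
    ContinuousOn (fun p : (ℝ × ℝ) × F => dslope (f · p.2) p.1.1 (p.1.1 + p.1.2)) (univ ×ˢ s) := by
  have hint : ContinuousOn (fun p : (ℝ × ℝ) × F =>
      ∫ r in (0 : ℝ)..1, deriv (f · p.2) (p.1.1 + r * p.1.2)) (univ ×ˢ s) := by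
    rw [continuousOn_iff_continuous_domRestrict]
    refine intervalIntegral.continuous_parametric_intervalIntegral_of_continuous' ?_ 0 1
    exact (continuousOn_deriv_slice hs hf).comp_continuous
      (f := fun q : (univ ×ˢ s : Set ((ℝ × ℝ) × F)) × ℝ =>
        (q.1.1.1.1 + q.2 * q.1.1.1.2, q.1.1.2)) (by fun_prop)
      fun q => ⟨mem_univ _, q.1.2.2⟩
  exact hint.congr fun p hp => dslope_add_eq_integral (contDiff_slice hf hp.2) p.1.1 p.1.2

end Slices

/-! ### Principal values -/

/-- Integrability of `f y / y ^ 2` away from the origin, i.e. the condition under which the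
truncated dissipation integrals of `f` at `0` converge. -/
def TailIntegrable (f : ℝ → ℝ) : Prop :=
  ∀ ⦃ε : ℝ⦄, 0 < ε → IntegrableOn (fun y => f y / y ^ 2) {y : ℝ | ε < |y|}

/-- The integral of `(u x - u (x + y)) / y ^ 2` over `|y| > ε`, whose limit as `ε → 0⁺` is the
critical dissipation `L u x`. It is meaningful only when this integrand is integrable: otherwise
the Bochner integral is `0`. -/
noncomputable def truncatedDissipation (u : ℝ → ℝ) (ε x : ℝ) : ℝ :=
  ∫ y in {y : ℝ | ε < |y|}, (u x - u (x + y)) / y ^ 2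

/-- `HasDissipation u x ℓ` says that the principal value `L u x` exists and equals `ℓ`. -/
def HasDissipation (u : ℝ → ℝ) (x ℓ : ℝ) : Prop :=
  Tendsto (fun ε => truncatedDissipation u ε x) (𝓝[>] 0) (𝓝 ℓ)

lemma measurableSet_setOf_lt_abs (ε : ℝ) : MeasurableSet {y : ℝ | ε < |y|} :=
  measurableSet_lt measurable_const measurable_id.abs

namespace TailIntegrable

lemma of_abs_le_rpow {f : ℝ → ℝ} {a C : ℝ} (ha : a < 1) (hf : AEStronglyMeasurable f)
    (hC : ∀ y, |f y| ≤ C * (1 + |y|) ^ a) : TailIntegrable f := by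
  intro ε hε
  have hint : Integrable (fun y : ℝ => (C * (1 + 1 / ε) ^ 2) * (1 + ‖y‖) ^ (-(2 - a))) :=
    (integrable_one_add_norm (by norm_num; linarith)).const_mul _
  refine hint.integrableOn.mono' (hf.restrict.div₀ (by fun_prop)) <|
    (ae_restrict_iff' (measurableSet_setOf_lt_abs ε)).2 <| .of_forall fun y (hy : ε < |y|) => ?_
  have hy0 : 0 < |y| := hε.trans hy
  have hsq : 1 / y ^ 2 ≤ (1 + 1 / ε) ^ 2 / (1 + |y|) ^ 2 := by
    rw [← sq_abs y, div_le_div_iff₀ (by positivity) (by positivity), one_mul, ← mul_pow]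
    gcongr
    have : 1 ≤ 1 / ε * |y| := by
      rw [one_div, ← div_eq_inv_mul, one_le_div hε]; exact hy.le
    linarith
  have hpow : (1 + |y|) ^ a / (1 + |y|) ^ 2 = (1 + |y|) ^ (-(2 - a)) := by
    rw [← Real.rpow_natCast, ← Real.rpow_sub (by positivity)]
    norm_num
  rw [Real.norm_eq_abs, abs_div, abs_of_nonneg (sq_nonneg y), Real.norm_eq_abs, ← hpow]
  calc |f y| / y ^ 2 = |f y| * (1 / y ^ 2) := by ring
    _ ≤ (C * (1 + |y|) ^ a) * ((1 + 1 / ε) ^ 2 / (1 + |y|) ^ 2) :=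
        mul_le_mul (hC y) hsq (by positivity) ((abs_nonneg _).trans (hC y))
    _ = C * (1 + 1 / ε) ^ 2 * ((1 + |y|) ^ a / (1 + |y|) ^ 2) := by ring

lemma of_abs_le {f : ℝ → ℝ} {M : ℝ} (hf : AEStronglyMeasurable f) (hM : ∀ y, |f y| ≤ M) :
    TailIntegrable f :=
  of_abs_le_rpow (a := 0) zero_lt_one hf (by simpa using hM)

lemma const (c : ℝ) : TailIntegrable fun _ => c :=
  of_abs_le (M := |c|) aestronglyMeasurable_const fun _ => le_rfl

lemma sub {f g : ℝ → ℝ} (hf : TailIntegrable f) (hg : TailIntegrable g) :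
    TailIntegrable fun y => f y - g y := by
  intro ε hε
  simp only [sub_div]
  exact (hf hε).sub (hg hε)

end TailIntegrable

lemma setIntegral_one_div_sq {A : ℝ} (hA : 0 < A) :
    ∫ y in {y : ℝ | A < |y|}, 1 / y ^ 2 = 2 / A := by
  calc ∫ y in {y : ℝ | A < |y|}, 1 / y ^ 2
      = ∫ y, (Ioi A).indicator (fun r => 1 / r ^ 2) |y| := by
        rw [← integral_indicator (measurableSet_setOf_lt_abs A)]
        simp [indicator]
    _ = 2 * ∫ y in Ioi A, 1 / y ^ 2 := by
        rw [integral_comp_abs, setIntegral_indicator measurableSet_Ioi,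
          Ioi_inter_Ioi, sup_eq_right.2 hA.le]
    _ = 2 * ∫ y in Ioi A, y ^ (-2 : ℝ) := by
        congr 1
        refine setIntegral_congr_fun measurableSet_Ioi fun y hy => ?_
        simp [Real.rpow_neg (hA.trans hy).le]
    _ = 2 / A := by
        rw [integral_Ioi_rpow_of_lt (by norm_num) hA]
        norm_num [Real.rpow_neg_one, div_eq_mul_inv]

lemma truncatedDissipation_const_mul (c : ℝ) (u : ℝ → ℝ) (ε x : ℝ) :
    truncatedDissipation (fun z => c * u z) ε x = c * truncatedDissipation u ε x := by
  simp only [truncatedDissipation, ← integral_const_mul, ← mul_sub, mul_div_assoc]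

lemma truncatedDissipation_sub {f g : ℝ → ℝ} {ε x : ℝ} (hε : 0 < ε)
    (hf : TailIntegrable fun y => f (x + y)) (hg : TailIntegrable fun y => g (x + y)) :
    truncatedDissipation (fun z => f z - g z) ε x =
      truncatedDissipation f ε x - truncatedDissipation g ε x := by
  rw [truncatedDissipation, truncatedDissipation, truncatedDissipation,
    ← integral_sub (((TailIntegrable.const _).sub hf) hε) (((TailIntegrable.const _).sub hg) hε)]
  congr with y
  ring

lemma truncatedDissipation_comp_add (u : ℝ → ℝ) (ε x : ℝ) :
    truncatedDissipation (fun h => u (x + h)) ε 0 = truncatedDissipation u ε x := by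
  simp [truncatedDissipation]

lemma truncatedDissipation_comp_sub (u : ℝ → ℝ) (ε x : ℝ) :
    truncatedDissipation (fun h => u (x - h)) ε 0 = truncatedDissipation u ε x := by
  simp only [truncatedDissipation, ← integral_indicator (measurableSet_setOf_lt_abs ε)]
  rw [← integral_neg_eq_self]
  simp [indicator]

namespace HasDissipation

lemma const_mul {u : ℝ → ℝ} {x ℓ : ℝ} (c : ℝ) (h : HasDissipation u x ℓ) :
    HasDissipation (fun z => c * u z) x (c * ℓ) := by
  simpa only [HasDissipation, truncatedDissipation_const_mul] using Tendsto.const_mul c h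

lemma sub_reflection {u : ℝ → ℝ} {x y ℓ ℓ' : ℝ} (hu : TailIntegrable fun h => u (x + h))
    (hu' : TailIntegrable fun h => u (y - h)) (hx : HasDissipation u x ℓ)
    (hy : HasDissipation u y ℓ') :
    HasDissipation (fun h => u (x + h) - u (y - h)) 0 (ℓ - ℓ') := by
  refine (Tendsto.sub hx hy).congr' ?_
  filter_upwards [self_mem_nhdsWithin] with ε hε
  rw [truncatedDissipation_sub hε (by simpa using hu) (by simpa using hu'),
    truncatedDissipation_comp_add, truncatedDissipation_comp_sub]

end HasDissipation

-- The reflected point `-d - y` is farther from the pole, so in each pair it can only outweigh `y`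
-- when `y` itself has been truncated.
lemma neg_le_indicator_div_sq_add_reflection {E : ℝ → ℝ} {d k ε y : ℝ} (hε : 0 < ε)
    (hεd : ε < d / 2) (hk : ∀ z ∈ Icc (-(d / 2)) (d / 2), E z ≤ k)
    (hanti : E (-d - y) = -E y) (hy : -d / 2 ≤ y) (hEy : 0 ≤ E y) :
    (Icc (-ε) ε).indicator (fun _ => -(4 * k / d ^ 2)) y +
        (Icc (-ε) ε).indicator (fun _ => -(4 * k / d ^ 2)) (-d - y) ≤
      {z : ℝ | ε < |z|}.indicator (fun z => E z / z ^ 2) y +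
        {z : ℝ | ε < |z|}.indicator (fun z => E z / z ^ 2) (-d - y) := by
  have hfar : -d - y ∈ {z : ℝ | ε < |z|} :=
    show ε < |-d - y| from lt_abs.2 (.inr (by linarith))
  have hfar' : -d - y ∉ Icc (-ε) ε := fun h => by linarith [h.1]
  rw [indicator_of_notMem hfar', indicator_of_mem hfar, hanti, neg_div,
    show (-d - y) ^ 2 = (d + y) ^ 2 by ring, add_zero]
  by_cases hnear : y ∈ Icc (-ε) ε
  · have hmem : y ∉ {z : ℝ | ε < |z|} := not_lt.2 (abs_le.2 hnear)
    have hyk : E y ≤ k := hk y ⟨by linarith, by linarith [hnear.2]⟩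
    have hle : E y / (d + y) ^ 2 ≤ 4 * k / d ^ 2 :=
      calc E y / (d + y) ^ 2 ≤ k / (d / 2) ^ 2 :=
            div_le_div₀ (hEy.trans hyk) hyk (by nlinarith) (by nlinarith)
        _ = 4 * k / d ^ 2 := by ring
    rw [indicator_of_mem hnear, indicator_of_notMem hmem]
    linarith
  · have hmem : y ∈ {z : ℝ | ε < |z|} := not_le.1 fun h => hnear (abs_le.1 h)
    have hy0 : 0 < y ^ 2 := by
      have : 0 < |y| := hε.trans hmem
      rw [← sq_abs]; positivity
    have hle : E y / (d + y) ^ 2 ≤ E y / y ^ 2 :=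
      div_le_div_of_nonneg_left hEy hy0 (by nlinarith)
    rw [indicator_of_notMem hnear, indicator_of_mem hmem]
    linarith

lemma exists_neg_mul_le_setIntegral_div_sq {E : ℝ → ℝ} {d : ℝ} (hE : Continuous E)
    (hEi : TailIntegrable E) (hanti : ∀ y, E (-d - y) = -E y)
    (hpos : ∀ y, -d / 2 ≤ y → 0 ≤ E y) :
    ∃ K, ∀ ε ∈ Ioo 0 (d / 2), -(K * ε) ≤ ∫ y in {y : ℝ | ε < |y|}, E y / y ^ 2 := by
  obtain ⟨k, hk⟩ := (isCompact_Icc (a := -(d / 2)) (b := d / 2)).exists_bound_of_continuousOn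
    hE.continuousOn
  refine ⟨2 * (4 * k / d ^ 2), fun ε ⟨hε, hεd⟩ => ?_⟩
  have hmono := integral_mono_of_add_reflection_le
    ((integrable_indicator_iff measurableSet_Icc).2 (integrableOn_const (by simp)))
    ((integrable_indicator_iff (measurableSet_setOf_lt_abs ε)).2 (hEi hε)) fun y hy =>
      neg_le_indicator_div_sq_add_reflection hε hεd (fun z hz => (le_abs_self _).trans (hk z hz))
        (hanti y) hy (hpos y hy)
  rw [integral_indicator measurableSet_Icc, integral_indicator (measurableSet_setOf_lt_abs ε),
    setIntegral_const, Real.volume_real_Icc_of_le (by linarith), smul_eq_mul] at hmono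
  linarith

lemma exists_truncatedDissipation_sub_mul_le {F W : ℝ → ℝ} {d : ℝ} (hF : Continuous F)
    (hW : Continuous W) (hFi : TailIntegrable F) (hWi : TailIntegrable W)
    (hFanti : ∀ y, F (-d - y) = -F y) (hWanti : ∀ y, W (-d - y) = -W y) (h0 : W 0 = F 0)
    (hle : ∀ y, -d / 2 ≤ y → W y ≤ F y) :
    ∃ K, ∀ ε ∈ Ioo 0 (d / 2),
      truncatedDissipation F ε 0 - K * ε ≤ truncatedDissipation W ε 0 := by
  obtain ⟨K, hK⟩ := exists_neg_mul_le_setIntegral_div_sq (hF.sub hW) (hFi.sub hWi)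
    (fun y => by simp only [Pi.sub_apply, hFanti, hWanti]; ring)
    (fun y hy => sub_nonneg.2 (hle y hy))
  refine ⟨K, fun ε hε => ?_⟩
  have hdiff : truncatedDissipation W ε 0 - truncatedDissipation F ε 0 =
      ∫ y in {y : ℝ | ε < |y|}, (F y - W y) / y ^ 2 := by
    rw [← truncatedDissipation_sub hε.1 (by simpa using hWi) (by simpa using hFi)]
    simp [truncatedDissipation, h0]
  have := hK ε hε
  simp only [Pi.sub_apply] at this
  linarith

lemma HasDissipation.le_of_antisymm {F W : ℝ → ℝ} {d m ℓ : ℝ} (hd : 0 < d) (hF : Continuous F)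
    (hW : Continuous W) (hFi : TailIntegrable F) (hWi : TailIntegrable W)
    (hFanti : ∀ y, F (-d - y) = -F y) (hWanti : ∀ y, W (-d - y) = -W y) (h0 : W 0 = F 0)
    (hle : ∀ y, -d / 2 ≤ y → W y ≤ F y) (hm : ∀ᶠ ε in 𝓝[>] 0, m ≤ truncatedDissipation F ε 0)
    (hℓ : HasDissipation W 0 ℓ) : m ≤ ℓ := by
  obtain ⟨K, hK⟩ :=
    exists_truncatedDissipation_sub_mul_le hF hW hFi hWi hFanti hWanti h0 hle
  have hlow : Tendsto (fun ε : ℝ => m - K * ε) (𝓝[>] 0) (𝓝 m) := by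
    have : Continuous fun ε : ℝ => m - K * ε := by fun_prop
    simpa using (this.tendsto 0).mono_left nhdsWithin_le_nhds
  refine le_of_tendsto_of_tendsto hlow hℓ ?_
  filter_upwards [hm, Ioo_mem_nhdsGT (half_pos hd)] with ε hmε hε
  linarith [hK ε hε]

/-! ### Moduli of continuity -/

/-- `HasModulus ω u` says that `u` obeys the modulus of continuity `ω`. Only the values of `ω` on
`[0, ∞)` matter, and no monotonicity or concavity is required. -/
def HasModulus (ω u : ℝ → ℝ) : Prop :=
  ∀ a b, |u a - u b| ≤ ω |a - b|

namespace HasModulus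

variable {ω u : ℝ → ℝ}

lemma const_mul (h : HasModulus ω u) {c : ℝ} (hc : |c| ≤ 1) : HasModulus ω fun x => c * u x :=
  fun a b => by
    rw [← mul_sub, abs_mul]
    exact (mul_le_of_le_one_left (abs_nonneg _) hc).trans (h a b)

lemma sub_le (h : HasModulus ω u) {a b : ℝ} (hab : b ≤ a) : u a - u b ≤ ω (a - b) := by
  simpa only [abs_of_nonneg (sub_nonneg.2 hab)] using (le_abs_self _).trans (h a b)

variable {x y : ℝ}

lemma deriv_eq_left {ω' : ℝ} (h : HasModulus ω u) (hu : DifferentiableAt ℝ u x)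
    (hω : HasDerivAt ω ω' (x - y)) (hyx : y < x) (htouch : u x - u y = ω (x - y)) :
    deriv u x = ω' := by
  have hmax : IsLocalMax (fun a => u a - ω (a - y)) x := by
    filter_upwards [lt_mem_nhds hyx] with a ha
    linarith [h.sub_le ha.le]
  exact sub_eq_zero.1 <|
    hmax.hasDerivAt_eq_zero (hu.hasDerivAt.sub (HasDerivAt.comp_sub_const x y hω))

lemma deriv_eq_right {ω' : ℝ} (h : HasModulus ω u) (hu : DifferentiableAt ℝ u y)
    (hω : HasDerivAt ω ω' (x - y)) (hyx : y < x) (htouch : u x - u y = ω (x - y)) :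
    deriv u y = ω' := by
  have hmin : IsLocalMin (fun b => u b + ω (x - b)) y := by
    filter_upwards [gt_mem_nhds hyx] with b hb
    linarith [h.sub_le hb.le]
  exact eq_of_sub_eq_zero <|
    hmin.hasDerivAt_eq_zero (hu.hasDerivAt.add (HasDerivAt.comp_const_sub x y hω))

-- The difference of the dissipations at `x` and `y` is the dissipation at `0` of
-- `z ↦ u (x + z) - u (y - z)`, which is antisymmetric about `-(x - y) / 2`,
-- as is `z ↦ ω (x - y + 2 z)`.
lemma le_dissipation_sub {M m ℓx ℓy : ℝ} (h : HasModulus ω u) (hω : Continuous ω)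
    (hodd : ω.Odd) (hωi : TailIntegrable fun z => ω (x - y + 2 * z)) (hu : Continuous u)
    (hM : ∀ z, |u z| ≤ M) (hyx : y < x) (htouch : u x - u y = ω (x - y))
    (hm : ∀ᶠ ε in 𝓝[>] 0, m ≤ truncatedDissipation (fun z => ω (x - y + 2 * z)) ε 0)
    (hx : HasDissipation u x ℓx) (hy : HasDissipation u y ℓy) : m ≤ ℓx - ℓy := by
  have hux : TailIntegrable fun z => u (x + z) :=
    .of_abs_le (hu.comp (by fun_prop)).aestronglyMeasurable fun _ => hM _
  have huy : TailIntegrable fun z => u (y - z) :=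
    .of_abs_le (hu.comp (by fun_prop)).aestronglyMeasurable fun _ => hM _
  refine HasDissipation.le_of_antisymm (F := fun z => ω (x - y + 2 * z))
    (W := fun z => u (x + z) - u (y - z)) (sub_pos.2 hyx) (by fun_prop) (by fun_prop)
    hωi (hux.sub huy) (fun z => ?_) (fun z => ?_) (by simpa using htouch) (fun z hz => ?_) hm
    (hx.sub_reflection hux huy hy)
  · rw [← hodd]; ring_nf
  · ring_nf
  · refine (h.sub_le (by linarith)).trans_eq ?_
    ring_nf

end HasModulus

/-- The odd extension to the line of the modulus of continuity `z ↦ log (1 + B z)`. The integral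
form makes the extension evidently continuously differentiable at `0`. -/
noncomputable def logModulus (B z : ℝ) : ℝ :=
  ∫ s in (0 : ℝ)..z, B / (1 + B * |s|)

section LogModulus

variable {B : ℝ}

lemma odd_logModulus (B : ℝ) : (logModulus B).Odd := fun z => by
  have h := intervalIntegral.integral_comp_neg (a := 0) (b := z) fun s => B / (1 + B * |s|)
  simp only [abs_neg, neg_zero] at h
  rw [logModulus, logModulus, h, intervalIntegral.integral_symm]

@[simp]
lemma logModulus_zero (B : ℝ) : logModulus B 0 = 0 :=
  intervalIntegral.integral_same

lemma hasDerivAt_logModulus (hB : 0 < B) (z : ℝ) :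
    HasDerivAt (logModulus B) (B / (1 + B * |z|)) z := by
  have hcont : Continuous fun s => B / (1 + B * |s|) :=
    continuous_const.div (by fun_prop) fun s => by positivity
  exact (hcont.integral_hasStrictDerivAt 0 z).hasDerivAt

lemma continuous_logModulus (hB : 0 < B) : Continuous (logModulus B) :=
  continuous_iff_continuousAt.2 fun z => (hasDerivAt_logModulus hB z).continuousAt

lemma logModulus_of_nonneg (hB : 0 < B) {z : ℝ} (hz : 0 ≤ z) :
    logModulus B z = Real.log (1 + B * z) := by
  have hderiv : ∀ s ∈ uIcc 0 z,
      HasDerivAt (fun s => Real.log (1 + B * s)) (B / (1 + B * |s|)) s := by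
    intro s hs
    have hs0 : 0 ≤ s := (uIcc_of_le hz ▸ hs).1
    rw [abs_of_nonneg hs0]
    exact (((hasDerivAt_id s).const_mul B).const_add 1).log
      (by rw [id_eq]; positivity) |>.congr_deriv (by simp)
  have hint : IntervalIntegrable (fun s => B / (1 + B * |s|)) volume 0 z :=
    (continuous_const.div (by fun_prop) fun s => by positivity).intervalIntegrable _ _
  simpa [logModulus] using intervalIntegral.integral_eq_sub_of_hasDerivAt hderiv hint

lemma logModulus_pos (hB : 0 < B) {z : ℝ} (hz : 0 < z) : 0 < logModulus B z := by
  rw [logModulus_of_nonneg hB hz.le]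
  exact Real.log_pos (lt_add_of_pos_right 1 (by positivity))

lemma logModulus_le_mul (hB : 0 < B) {z : ℝ} (hz : 0 ≤ z) : logModulus B z ≤ B * z := by
  rw [logModulus_of_nonneg hB hz]
  linarith [Real.log_le_sub_one_of_pos (show 0 < 1 + B * z by positivity)]

lemma abs_logModulus (hB : 0 < B) (z : ℝ) : |logModulus B z| = Real.log (1 + B * |z|) := by
  have hlog (w : ℝ) (hw : 0 ≤ w) : |logModulus B w| = Real.log (1 + B * w) := by
    rw [logModulus_of_nonneg hB hw,
      abs_of_nonneg (Real.log_nonneg (le_add_of_nonneg_right (by positivity)))]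
  rcases abs_cases z with ⟨h, h0⟩ | ⟨h, h0⟩
  · rw [h, hlog z h0]
  · rw [h, ← hlog (-z) (by linarith), odd_logModulus, abs_neg]

lemma abs_logModulus_add_two_mul_le (hB : 0 < B) (d y : ℝ) :
    |logModulus B (d + 2 * y)| ≤
      2 * (1 + B * (|d| + 2)) ^ (1 / 2 : ℝ) * (1 + |y|) ^ (1 / 2 : ℝ) := by
  have hlin : |d + 2 * y| ≤ (|d| + 2) * (1 + |y|) := by
    have := abs_add_le d (2 * y)
    rw [abs_mul, abs_two] at this
    nlinarith [mul_nonneg (abs_nonneg d) (abs_nonneg y)]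
  have hprod : 1 + B * |d + 2 * y| ≤ (1 + B * (|d| + 2)) * (1 + |y|) := by
    nlinarith [mul_le_mul_of_nonneg_left hlin hB.le, abs_nonneg y]
  calc |logModulus B (d + 2 * y)| = Real.log (1 + B * |d + 2 * y|) := abs_logModulus hB _
    _ ≤ (1 + B * |d + 2 * y|) ^ (1 / 2 : ℝ) / (1 / 2) :=
        Real.log_le_rpow_div (by positivity) (by norm_num)
    _ = 2 * (1 + B * |d + 2 * y|) ^ (1 / 2 : ℝ) := by ring
    _ ≤ 2 * ((1 + B * (|d| + 2)) * (1 + |y|)) ^ (1 / 2 : ℝ) := by gcongr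
    _ = _ := by rw [Real.mul_rpow (by positivity) (by positivity), mul_assoc]

lemma tailIntegrable_logModulus (hB : 0 < B) (d : ℝ) :
    TailIntegrable fun y => logModulus B (d + 2 * y) :=
  .of_abs_le_rpow (by norm_num)
    ((continuous_logModulus hB).comp (by fun_prop)).aestronglyMeasurable
    (abs_logModulus_add_two_mul_le hB d)

variable {d h : ℝ}

lemma logModulus_add_add_logModulus_sub_le (hB : 0 < B) (hd : 0 ≤ d) (hh : 0 ≤ h) :
    logModulus B (d + h) + logModulus B (d - h) ≤ 2 * logModulus B d := by
  have hderiv (r : ℝ) : HasDerivAt (fun r => logModulus B (d + r) + logModulus B (d - r))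
      (B / (1 + B * |d + r|) + -(B / (1 + B * |d - r|))) r :=
    (HasDerivAt.comp_const_add d r (hasDerivAt_logModulus hB (d + r))).add
      (HasDerivAt.comp_const_sub d r (hasDerivAt_logModulus hB (d - r)))
  have hanti : AntitoneOn (fun r => logModulus B (d + r) + logModulus B (d - r)) (Ici 0) := by
    refine antitoneOn_of_hasDerivWithinAt_nonpos (convex_Ici 0)
      (fun r _ => (hderiv r).continuousAt.continuousWithinAt)
      (fun r _ => (hderiv r).hasDerivWithinAt) fun r hr => add_neg_nonpos_iff.2 ?_
    rw [interior_Ici] at hr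
    have hr0 : 0 < r := hr
    have habs : |d - r| ≤ |d + r| := by
      rw [abs_of_nonneg (show 0 ≤ d + r by positivity)]
      exact abs_le.2 ⟨by linarith, by linarith⟩
    gcongr
  simpa [two_mul] using hanti self_mem_Ici hh hh

lemma logModulus_add_add_logModulus_sub_le_of_inv_add_le (hB : 0 < B) (hd : 0 ≤ d)
    (hh : 1 / B + d ≤ h) : logModulus B (d + h) + logModulus B (d - h) ≤ logModulus B d := by
  have hBinv : 0 < 1 / B := by positivity
  have hgap : 1 ≤ B * (h - d) := by
    rw [← mul_one_div_cancel hB.ne']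
    gcongr
    linarith
  have hBd : 0 ≤ B * d := by positivity
  have hlog : Real.log (1 + B * (d + h)) ≤
      Real.log (1 + B * d) + Real.log (1 + B * (h - d)) := by
    rw [← Real.log_mul (by positivity) (by positivity)]
    refine Real.log_le_log (by nlinarith) ?_
    nlinarith [mul_le_mul_of_nonneg_left hgap hBd]
  rw [← neg_sub h d, odd_logModulus, logModulus_of_nonneg hB hd,
    logModulus_of_nonneg hB (z := d + h) (by linarith),
    logModulus_of_nonneg hB (z := h - d) (by linarith)]
  linarith

lemma indicator_add_reflection_le_indicator_logModulus {ε A y : ℝ} (hB : 0 < B) (hd : 0 ≤ d)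
    (hA : 1 / B + d ≤ 2 * A) (hεA : ε ≤ A) (hy : 0 ≤ y) :
    {z : ℝ | A < |z|}.indicator (fun z => logModulus B d / 2 * (1 / z ^ 2)) y +
        {z : ℝ | A < |z|}.indicator (fun z => logModulus B d / 2 * (1 / z ^ 2)) (-y) ≤
      {z : ℝ | ε < |z|}.indicator
          (fun z => (logModulus B d - logModulus B (d + 2 * z)) / z ^ 2) y +
        {z : ℝ | ε < |z|}.indicator
          (fun z => (logModulus B d - logModulus B (d + 2 * z)) / z ^ 2) (-y) := by
  simp only [indicator, mem_ofPred_eq, abs_neg, neg_sq, mul_neg, ← sub_eq_add_neg,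
    abs_of_nonneg hy]
  split_ifs with hyA hyε hyε
  · have h2 := logModulus_add_add_logModulus_sub_le_of_inv_add_le hB hd
      (show 1 / B + d ≤ 2 * y by linarith)
    rw [← add_div, ← mul_add, ← add_div]
    have : logModulus B d / 2 * ((1 + 1) / y ^ 2) = logModulus B d / y ^ 2 := by ring
    rw [this]
    gcongr
    linarith
  · exact absurd (hεA.trans_lt hyA) hyε
  · have h2 := logModulus_add_add_logModulus_sub_le hB hd (show 0 ≤ 2 * y by linarith)
    rw [← add_div, add_zero]
    exact div_nonneg (by linarith) (sq_nonneg y)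
  · rfl

lemma two_mul_logModulus_mul_deriv_le_truncatedDissipation {ε : ℝ} (hB : 0 < B) (hd : 0 ≤ d)
    (hε : 0 < ε) (hεA : ε ≤ (1 / B + d) / 2) :
    2 * (logModulus B d * (B / (1 + B * d))) ≤
      truncatedDissipation (fun y => logModulus B (d + 2 * y)) ε 0 := by
  have hA : 0 < (1 / B + d) / 2 := by positivity
  have hone : IntegrableOn (fun y : ℝ => 1 / y ^ 2) {y : ℝ | (1 / B + d) / 2 < |y|} :=
    TailIntegrable.const 1 hA
  have hmono := integral_mono_of_add_reflection_le (c := 0)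
    ((integrable_indicator_iff (measurableSet_setOf_lt_abs _)).2
      (hone.const_mul (logModulus B d / 2)))
    ((integrable_indicator_iff (measurableSet_setOf_lt_abs ε)).2
      (((TailIntegrable.const (logModulus B d)).sub (tailIntegrable_logModulus hB d)) hε))
    fun y hy => by
      simpa only [zero_sub] using indicator_add_reflection_le_indicator_logModulus hB hd
        (by linarith) hεA (by simpa using hy)
  rw [integral_indicator (measurableSet_setOf_lt_abs _),
    integral_indicator (measurableSet_setOf_lt_abs ε), integral_const_mul,
    setIntegral_one_div_sq hA] at hmono
  simp only [truncatedDissipation, zero_add, mul_zero, add_zero]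
  refine le_trans (le_of_eq ?_) hmono
  field_simp

end LogModulus

namespace HasModulus

variable {B : ℝ} {u : ℝ → ℝ}

lemma mul_transport_sub_lt_dissipation_sub {M κ x y ℓx ℓy : ℝ} (hB : 0 < B)
    (h : HasModulus (logModulus B) u) (hu : Differentiable ℝ u) (hM : ∀ z, |u z| ≤ M)
    (hκ : κ < 2) (hyx : y < x) (htouch : u x - u y = logModulus B (x - y))
    (hx : HasDissipation u x ℓx) (hy : HasDissipation u y ℓy) :
    κ * (u x * deriv u x - u y * deriv u y) < ℓx - ℓy := by
  have hd : 0 < x - y := sub_pos.2 hyx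
  have hdiss : 2 * (logModulus B (x - y) * (B / (1 + B * (x - y)))) ≤ ℓx - ℓy := by
    refine h.le_dissipation_sub (continuous_logModulus hB) (odd_logModulus B)
      (tailIntegrable_logModulus hB _) hu.continuous hM hyx htouch ?_ hx hy
    filter_upwards [Ioc_mem_nhdsGT (show 0 < (1 / B + (x - y)) / 2 by positivity)] with ε hε
    exact two_mul_logModulus_mul_deriv_le_truncatedDissipation hB hd.le hε.1 hε.2
  have hω := hasDerivAt_logModulus hB (x - y)
  rw [abs_of_pos hd] at hω
  have htransport : u x * deriv u x - u y * deriv u y =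
      logModulus B (x - y) * (B / (1 + B * (x - y))) := by
    rw [h.deriv_eq_left (hu x) hω hyx htouch, h.deriv_eq_right (hu y) hω hyx htouch, ← sub_mul,
      htouch]
  have hpos : 0 < logModulus B (x - y) * (B / (1 + B * (x - y))) :=
    mul_pos (logModulus_pos hB hd) (by positivity)
  rw [htransport]
  nlinarith

lemma abs_deriv_le (hB : 0 < B) (h : HasModulus (logModulus B) u) (x : ℝ) : |deriv u x| ≤ B := by
  have hlip : LipschitzWith ⟨B, hB.le⟩ u := LipschitzWith.of_dist_le_mul fun a b =>
    (h a b).trans (logModulus_le_mul hB (abs_nonneg _))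
  exact norm_deriv_le_of_lipschitz hlip

-- At a maximum of `u'` the second derivative of `u` vanishes, whereas `r ↦ log (1 + B r)` has
-- second derivative `-B ^ 2` at `0`: the modulus would be violated to the right of `x`.
lemma deriv_ne (hB : 0 < B) (h : HasModulus (logModulus B) u) (hu : ContDiff ℝ 2 u) (x : ℝ) :
    deriv u x ≠ B := by
  intro hx
  have hmax : IsLocalMax (deriv u) x := .of_forall fun z => by
    simpa only [hx] using (le_abs_self _).trans (h.abs_deriv_le hB z)
  set q : ℝ → ℝ := fun r => Real.log (1 + B * r) - u (x + r) with hq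
  have hlin (r : ℝ) : HasDerivAt (fun r => 1 + B * r) B r := by
    simpa using ((hasDerivAt_id r).const_mul B).const_add 1
  have hu1 : Differentiable ℝ u := hu.differentiable two_ne_zero
  have hqd : ∀ᶠ r in 𝓝 0, HasDerivAt q (B / (1 + B * r) - deriv u (x + r)) r := by
    have hpos : ∀ᶠ r in 𝓝 0, 0 < 1 + B * r :=
      (hlin 0).continuousAt.eventually (lt_mem_nhds (by simp))
    filter_upwards [hpos] with r hr
    exact ((hlin r).log hr.ne').sub (HasDerivAt.comp_const_add x r (hu1 (x + r)).hasDerivAt)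
  have hqdd : HasDerivAt (fun r => B / (1 + B * r) - deriv u (x + r)) (-B ^ 2) 0 := by
    have hu2 : HasDerivAt (deriv u) 0 (x + 0) := by
      have := (hu.differentiable_deriv_two x).hasDerivAt
      rwa [hmax.deriv_eq_zero, ← add_zero x] at this
    refine (((hasDerivAt_const (0 : ℝ) B).div (hlin 0) (by simp)).sub
      (HasDerivAt.comp_const_add x 0 hu2)).congr_deriv ?_
    simp [sq]
  have hq0 := hqd.self_of_nhds
  have hlt : ∀ᶠ r in 𝓝[>] 0, q r < q 0 := by
    refine eventually_nhdsGT_lt_of_deriv_deriv_neg ?_ (by simp [hq0.deriv, hx]) hq0.continuousAt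
    rw [EventuallyEq.deriv_eq (hqd.mono fun r hr => hr.deriv), hqdd.deriv]
    exact neg_lt_zero.2 (by positivity)
  obtain ⟨r, hqr, hr⟩ := (hlt.and self_mem_nhdsWithin).exists
  have hr0 : 0 < r := hr
  have hmod := h.sub_le (show x ≤ x + r by linarith)
  rw [add_sub_cancel_left, logModulus_of_nonneg hB hr0.le] at hmod
  simp only [hq, mul_zero, add_zero, Real.log_one] at hqr
  linarith

lemma abs_deriv_lt (hB : 0 < B) (h : HasModulus (logModulus B) u) (hu : ContDiff ℝ 2 u) (x : ℝ) :
    |deriv u x| < B := by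
  refine (h.abs_deriv_le hB x).lt_of_ne fun hx => ?_
  rcases (abs_eq hB.le).1 hx with h' | h'
  · exact h.deriv_ne hB hu x h'
  · exact (h.const_mul (c := -1) (by simp)).deriv_ne hB (contDiff_const.mul hu) x
      (by rw [deriv_const_mul_field, h', neg_one_mul, neg_neg])

end HasModulus

/-! ### The breakthrough time -/

/-- The amount by which the difference quotient of `u` between `x` and `x + ξ` exceeds that of
`logModulus B` between `0` and `ξ`, for `0 ≤ ξ`. Dividing by `ξ`, with `dslope` supplying the
derivatives at `ξ = 0`, makes both ways of saturating the modulus (at two distinct points, or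
infinitesimally) zeros of one continuous function. -/
noncomputable def modulusDefect (B : ℝ) (u : ℝ → ℝ) (x ξ : ℝ) : ℝ :=
  |dslope u x (x + ξ)| - dslope (logModulus B) 0 ξ

section ModulusDefect

variable {B : ℝ} {u : ℝ → ℝ}

lemma modulusDefect_zero (hB : 0 < B) (x : ℝ) : modulusDefect B u x 0 = |deriv u x| - B := by
  simp [modulusDefect, (hasDerivAt_logModulus hB 0).deriv]

lemma mul_modulusDefect {ξ : ℝ} (hξ : 0 ≤ ξ) (B : ℝ) (u : ℝ → ℝ) (x : ℝ) :
    ξ * modulusDefect B u x ξ = |u (x + ξ) - u x| - logModulus B ξ := by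
  have hu := sub_smul_dslope u x (x + ξ)
  have hω := sub_smul_dslope (logModulus B) 0 ξ
  rw [add_sub_cancel_left, smul_eq_mul] at hu
  rw [sub_zero, smul_eq_mul, logModulus_zero, sub_zero] at hω
  rw [modulusDefect, mul_sub, hω, ← hu, abs_mul, abs_of_nonneg hξ]

lemma periodic_modulusDefect {c : ℝ} (hu : Function.Periodic u c) (B ξ : ℝ) :
    Function.Periodic (modulusDefect B u · ξ) c := fun x => by
  rcases eq_or_ne ξ 0 with rfl | hξ
  · simp [modulusDefect, periodic_deriv hu x]
  · have hne (z : ℝ) : z + ξ ≠ z := by simpa using hξ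
    simp only [modulusDefect, dslope_of_ne u (hne _), slope_def_field, add_sub_cancel_left]
    rw [add_right_comm, hu (x + ξ), hu x]

lemma HasModulus.of_modulusDefect_nonpos (h : ∀ x, ∀ ξ, 0 ≤ ξ → modulusDefect B u x ξ ≤ 0) :
    HasModulus (logModulus B) u := by
  have hle {a b : ℝ} (hab : b ≤ a) : |u a - u b| ≤ logModulus B |a - b| := by
    have hξ := sub_nonneg.2 hab
    have := mul_nonpos_of_nonneg_of_nonpos hξ (h b _ hξ)
    rw [mul_modulusDefect hξ, add_sub_cancel] at this
    rw [abs_of_nonneg hξ]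
    linarith
  intro a b
  rcases le_total b a with hab | hab
  · exact hle hab
  · rw [abs_sub_comm, abs_sub_comm a]
    exact hle hab

lemma modulusDefect_neg_of_exp_le {M ξ : ℝ} (hB : 0 < B) (hM : ∀ z, |u z| ≤ M)
    (hξ : Real.exp (2 * M) / B ≤ ξ) (x : ℝ) : modulusDefect B u x ξ < 0 := by
  have hξ0 : 0 < ξ := (show 0 < Real.exp (2 * M) / B by positivity).trans_le hξ
  have hlog : 2 * M < logModulus B ξ := by
    rw [logModulus_of_nonneg hB hξ0.le, Real.lt_log_iff_exp_lt (by positivity)]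
    rw [div_le_iff₀' hB] at hξ
    linarith
  have hu : |u (x + ξ) - u x| ≤ M + M := (abs_sub _ _).trans (add_le_add (hM _) (hM _))
  refine neg_of_mul_neg_right ?_ hξ0.le
  rw [mul_modulusDefect hξ0.le]
  linarith

lemma mul_lt_logModulus {G M ξ : ℝ} (hG : 0 ≤ G) (hGB : G * Real.exp (2 * M) < B) (hξ : 0 < ξ)
    (hξM : logModulus B ξ ≤ 2 * M) : G * ξ < logModulus B ξ := by
  have hB : 0 < B := (by positivity : 0 ≤ G * Real.exp (2 * M)).trans_lt hGB
  have hpos : 0 < 1 + B * ξ := by positivity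
  rw [logModulus_of_nonneg hB hξ.le] at hξM ⊢
  have hGdiv : G < B / (1 + B * ξ) := by
    rw [lt_div_iff₀ hpos]
    refine lt_of_le_of_lt ?_ hGB
    gcongr
    exact (Real.log_le_iff_le_exp hpos).1 hξM
  calc G * ξ < B / (1 + B * ξ) * ξ := by gcongr
    _ = 1 - (1 + B * ξ)⁻¹ := by field_simp; ring
    _ ≤ Real.log (1 + B * ξ) := Real.one_sub_inv_le_log_of_pos hpos

lemma modulusDefect_neg_of_abs_deriv_le {G M : ℝ} (hu : Differentiable ℝ u)
    (hM : ∀ z, |u z| ≤ M) (hG : ∀ z, |deriv u z| ≤ G) (hGB : G * Real.exp (2 * M) < B)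
    (x : ℝ) {ξ : ℝ} (hξ : 0 ≤ ξ) : modulusDefect B u x ξ < 0 := by
  have hM0 : 0 ≤ M := (abs_nonneg _).trans (hM 0)
  have hG0 : 0 ≤ G := (abs_nonneg _).trans (hG 0)
  have hB : 0 < B := (by positivity : 0 ≤ G * Real.exp (2 * M)).trans_lt hGB
  rcases hξ.eq_or_lt with rfl | hξ0
  · have hGexp : G ≤ G * Real.exp (2 * M) :=
      le_mul_of_one_le_right hG0 (Real.one_le_exp (by positivity))
    rw [modulusDefect_zero hB]
    linarith [hG x]
  · refine neg_of_mul_neg_right ?_ hξ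
    rw [mul_modulusDefect hξ, sub_neg]
    rcases lt_or_ge (2 * M) (logModulus B ξ) with hlog | hlog
    · linarith [abs_sub (u (x + ξ)) (u x), hM (x + ξ), hM x]
    · have hlip : |u (x + ξ) - u x| ≤ G * ξ := by
        have := Convex.norm_image_sub_le_of_norm_deriv_le (fun z _ => hu z) (fun z _ => hG z)
          convex_univ (mem_univ x) (mem_univ (x + ξ))
        rwa [add_sub_cancel_left, Real.norm_eq_abs, Real.norm_eq_abs, abs_of_pos hξ0] at this
      exact hlip.trans_lt (mul_lt_logModulus hG0 hGB hξ0 hlog)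

lemma continuousOn_modulusDefect {θ : ℝ → ℝ → ℝ} {s : Set ℝ} (hB : 0 < B) (hs : UniqueDiffOn ℝ s)
    (hθ : ContDiffOn ℝ 1 (fun p : ℝ × ℝ => θ p.1 p.2) (univ ×ˢ s)) :
    ContinuousOn (fun p : (ℝ × ℝ) × ℝ => modulusDefect B (θ · p.2) p.1.1 p.1.2)
      (univ ×ˢ s) := by
  have hω : Continuous (dslope (logModulus B) 0) := by
    rw [← continuousOn_univ, continuousOn_dslope univ_mem]
    exact ⟨(continuous_logModulus hB).continuousOn, (hasDerivAt_logModulus hB 0).differentiableAt⟩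
  exact (continuousOn_dslope_slice hs hθ).abs.sub (by fun_prop)

end ModulusDefect

lemma exists_hasModulus_touching {B T per : ℝ} {θ : ℝ → ℝ → ℝ} (hB : 0 < B) (hT : 0 < T)
    (hper : 0 < per) (hθ : ContDiffOn ℝ 1 (fun p : ℝ × ℝ => θ p.1 p.2) (univ ×ˢ Icc 0 T))
    (hθper : ∀ t ∈ Icc 0 T, Function.Periodic (θ · t) per)
    (hinit : ∀ x, ∀ ξ, 0 ≤ ξ → modulusDefect B (θ · 0) x ξ < 0)
    (hbreak : ∃ t ∈ Icc 0 T, ∃ x, B ≤ |deriv (θ · t) x|) :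
    ∃ t ∈ Ioc 0 T, (∀ s ∈ Icc 0 t, HasModulus (logModulus B) (θ · s)) ∧
      ((∃ x, |deriv (θ · t) x| = B) ∨
        ∃ x y, y < x ∧ |θ x t - θ y t| = logModulus B (x - y)) := by
  obtain ⟨M, hM⟩ := exists_abs_le_of_periodic isCompact_Icc hper hθ.continuousOn hθper
  set R := Real.exp (2 * M) / B
  have hR : 0 < R := by positivity
  have hreduce {t : ℝ} (ht : t ∈ Icc 0 T) (x ξ : ℝ) : ∃ x' ∈ Icc 0 per,
      modulusDefect B (θ · t) x ξ = modulusDefect B (θ · t) x' ξ := by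
    obtain ⟨x', hx', heq⟩ := (periodic_modulusDefect (hθper t ht) B ξ).exists_mem_Ico₀ hper x
    exact ⟨x', Ico_subset_Icc_self hx', heq⟩
  obtain ⟨t₀, ht₀, x₀, hx₀⟩ := hbreak
  obtain ⟨z₀, hz₀, heq₀⟩ := hreduce ht₀ x₀ 0
  obtain ⟨t, ht, hbefore, ⟨x, ξ⟩, hxξ, hzero⟩ := exists_first_nonneg
    (Φ := fun p : (ℝ × ℝ) × ℝ => modulusDefect B (θ · p.2) p.1.1 p.1.2)
    (isCompact_Icc.prod isCompact_Icc)
    ((continuousOn_modulusDefect hB (uniqueDiffOn_Icc hT) hθ).mono (prod_mono_left (subset_univ _)))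
    (fun p hp => hinit p.1 p.2 hp.2.1)
    ⟨(z₀, 0), ⟨hz₀, ⟨le_rfl, hR.le⟩⟩, t₀, ht₀, by
      rw [← heq₀, modulusDefect_zero hB]; exact sub_nonneg.2 hx₀⟩
  refine ⟨t, ht, fun s hs => .of_modulusDefect_nonpos fun x ξ hξ => ?_, ?_⟩
  · have hsT : s ∈ Icc 0 T := ⟨hs.1, hs.2.trans ht.2⟩
    rcases le_total R ξ with hRξ | hRξ
    · exact (modulusDefect_neg_of_exp_le hB (hM s hsT) hRξ x).le
    · obtain ⟨x', hx', heq⟩ := hreduce hsT x ξ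
      exact heq.trans_le (hbefore s hs (x', ξ) ⟨hx', hξ, hRξ⟩)
  · have hξ : 0 ≤ ξ := hxξ.2.1
    dsimp only at hzero
    rcases hξ.eq_or_lt with rfl | hξ0
    · exact .inl ⟨x, by rw [modulusDefect_zero hB] at hzero; linarith⟩
    · refine .inr ⟨x + ξ, x, lt_add_of_pos_right x hξ0, ?_⟩
      have := mul_modulusDefect hξ B (θ · t) x
      rw [hzero, mul_zero] at this
      rw [add_sub_cancel_left]
      linarith

/-! ### The critical Burgers equation -/

/-- `θ x t` is a `C²` solution of the critical Burgers equation `∂ₜθ = θ ∂ₓθ - L θ` on `[0, T]`,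
periodic in `x` with period `per`; `Lθ` is the dissipation term, and the time derivative is
one-sided at the endpoints of `[0, T]`. -/
structure IsCriticalBurgersSolution (T per : ℝ) (θ Lθ : ℝ → ℝ → ℝ) : Prop where
  period_pos : 0 < per
  contDiffOn : ContDiffOn ℝ 2 (fun p : ℝ × ℝ => θ p.1 p.2) (univ ×ˢ Icc 0 T)
  periodic : ∀ t ∈ Icc 0 T, Function.Periodic (θ · t) per
  hasDissipation : ∀ t ∈ Icc 0 T, ∀ x, HasDissipation (θ · t) x (Lθ x t)
  hasDerivWithinAt : ∀ x, ∀ t ∈ Icc 0 T,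
    HasDerivWithinAt (θ x ·) (θ x t * deriv (θ · t) x - Lθ x t) (Icc 0 T) t

namespace IsCriticalBurgersSolution

variable {T per B t : ℝ} {θ Lθ : ℝ → ℝ → ℝ}

lemma contDiffOn_one (h : IsCriticalBurgersSolution T per θ Lθ) :
    ContDiffOn ℝ 1 (fun p : ℝ × ℝ => θ p.1 p.2) (univ ×ˢ Icc 0 T) :=
  h.contDiffOn.of_le one_le_two

lemma abs_sub_ne_logModulus (h : IsCriticalBurgersSolution T per θ Lθ) (hB : 0 < B)
    (ht : t ∈ Ioc 0 T) (hmod : ∀ s ∈ Icc 0 t, HasModulus (logModulus B) (θ · s)) {x y : ℝ}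
    (hyx : y < x) : |θ x t - θ y t| ≠ logModulus B (x - y) := by
  intro htouch
  have htT : t ∈ Icc 0 T := Ioc_subset_Icc_self ht
  obtain ⟨M, hM⟩ := exists_abs_le_of_periodic isCompact_Icc h.period_pos
    h.contDiffOn.continuousOn h.periodic
  obtain ⟨σ, hσ, hσabs⟩ : ∃ σ : ℝ, |σ| = 1 ∧ σ * (θ x t - θ y t) = |θ x t - θ y t| := by
    rcases abs_cases (θ x t - θ y t) with ⟨habs, -⟩ | ⟨habs, -⟩
    · exact ⟨1, by simp, by rw [habs, one_mul]⟩
    · exact ⟨-1, by simp, by rw [habs, neg_one_mul]⟩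
  have hσ2 : σ * σ = 1 := by rw [← abs_mul_abs_self, hσ, one_mul]
  have hslice := contDiff_slice h.contDiffOn htT
  have hmodt := (hmod t ⟨ht.1.le, le_rfl⟩).const_mul hσ.le
  have hdecrease := hmodt.mul_transport_sub_lt_dissipation_sub (M := M) (κ := σ) hB
    ((hslice.differentiable two_ne_zero).const_mul σ)
    (fun z => by rw [abs_mul, hσ, one_mul]; exact hM t htT z)
    (by linarith [le_abs_self σ]) hyx (by rw [← mul_sub, hσabs, htouch])
    ((h.hasDissipation t htT x).const_mul σ) ((h.hasDissipation t htT y).const_mul σ)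
  have hmax : IsMaxOn (fun s => σ * (θ x s - θ y s)) (Icc 0 t) t := fun s hs => by
    have hle := ((hmod s hs).const_mul hσ.le).sub_le hyx.le
    rwa [← mul_sub, ← htouch, ← hσabs] at hle
  have hincrease := nonneg_of_hasDerivWithinAt_of_isMaxOn_Icc ht.1
    ((((h.hasDerivWithinAt x t htT).sub (h.hasDerivWithinAt y t htT)).const_mul σ).mono
      (Icc_subset_Icc_right ht.2)) hmax
  simp only [deriv_const_mul_field] at hdecrease
  refine (sub_neg.2 hdecrease).not_ge (hincrease.trans_eq ?_)
  linear_combination (-σ * (θ x t * deriv (θ · t) x - θ y t * deriv (θ · t) y)) * hσ2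

lemma abs_deriv_lt (h : IsCriticalBurgersSolution T per θ Lθ) (hB : 0 < B)
    (hinit : ∀ x, ∀ ξ, 0 ≤ ξ → modulusDefect B (θ · 0) x ξ < 0) (ht : t ∈ Icc 0 T) (x : ℝ) :
    |deriv (θ · t) x| < B := by
  by_contra! hbreak
  rcases ht.1.eq_or_lt with rfl | ht0
  · have := hinit x 0 le_rfl
    rw [modulusDefect_zero hB] at this
    linarith
  obtain ⟨t₁, ht₁, hmod, ⟨z, hz⟩ | ⟨a, b, hba, htouch⟩⟩ := exists_hasModulus_touching hB
    (ht0.trans_le ht.2) h.period_pos h.contDiffOn_one h.periodic hinit ⟨t, ht, x, hbreak⟩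
  · have hlt := (hmod t₁ ⟨ht₁.1.le, le_rfl⟩).abs_deriv_lt hB
      (contDiff_slice h.contDiffOn (Ioc_subset_Icc_self ht₁)) z
    exact hlt.ne hz
  · exact h.abs_sub_ne_logModulus hB ht₁ hmod hba htouch

end IsCriticalBurgersSolution

theorem critical_burgers_gradient_bound_general {T per t : ℝ} {θ Lθ : ℝ → ℝ → ℝ}
    (h : IsCriticalBurgersSolution T per θ Lθ) (ht : t ∈ Icc 0 T) :
    (⨆ x, |deriv (θ · t) x|) ≤
      (⨆ x, |deriv (θ · 0) x|) * Real.exp (2 * ⨆ x, |θ x 0|) := by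
  have h0 : (0 : ℝ) ∈ Icc 0 T := ⟨le_rfl, ht.1.trans ht.2⟩
  have hslice := contDiff_slice h.contDiffOn h0
  have hθ := bddAbove_range_abs_of_periodic h.period_pos.ne' (h.periodic 0 h0) hslice.continuous
  have hθ' := bddAbove_range_abs_of_periodic h.period_pos.ne' (periodic_deriv (h.periodic 0 h0))
    (hslice.continuous_deriv one_le_two)
  refine le_of_forall_gt_imp_ge_of_dense fun B hB => ciSup_le fun x => ?_
  have hB0 : 0 < B := hB.trans_le' <|
    mul_nonneg (Real.iSup_nonneg fun _ => abs_nonneg _) (Real.exp_pos _).le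
  exact (h.abs_deriv_lt hB0 (fun x ξ hξ => modulusDefect_neg_of_abs_deriv_le
    (hslice.differentiable two_ne_zero) (le_ciSup hθ) (le_ciSup hθ') hB x hξ) ht x).le

/-- **A priori gradient bound for the critical Burgers equation (eq. (gradburest)).**
There is an absolute constant `C > 0` such that every smooth space-periodic solution of
`∂_t θ = θ ∂_x θ − L θ` on `[0,T]`, where `L` is the (unnormalized) critical dissipation
`L f(x) = P.V.∫ (f(x) − f(x+y))/|y|² dy`, satisfies
`‖∂_x θ(·,t)‖_∞ ≤ ‖∂_x θ(·,0)‖_∞ · exp(C‖θ(·,0)‖_∞)` for all `t ∈ [0,T]`. -/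
theorem critical_burgers_gradient_bound :
    ∃ C > (0:ℝ), ∀ (T per : ℝ) (θ Lθ : ℝ → ℝ → ℝ),
      0 ≤ T → 0 < per →
      ContDiffOn ℝ (⊤ : ℕ∞) (fun p : ℝ × ℝ => θ p.1 p.2) (univ ×ˢ Icc 0 T) →
      (∀ t ∈ Icc (0:ℝ) T, ∀ x, θ (x + per) t = θ x t) →
      (∀ t ∈ Icc (0:ℝ) T, ∀ x,
        Tendsto (fun ε => ∫ y in {y : ℝ | ε < |y|}, (θ x t - θ (x + y) t) / y ^ (2:ℕ))
          (nhdsWithin 0 (Ioi 0)) (nhds (Lθ x t))) →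
      (∀ x, ∀ t ∈ Icc (0:ℝ) T,
        HasDerivWithinAt (fun s => θ x s)
          (θ x t * deriv (fun x' => θ x' t) x - Lθ x t) (Icc 0 T) t) →
      ∀ t ∈ Icc (0:ℝ) T,
        (⨆ x, |deriv (fun x' => θ x' t) x|) ≤
          (⨆ x, |deriv (fun x' => θ x' 0) x|) * Real.exp (C * ⨆ x, |θ x 0|) :=
  ⟨2, two_pos, fun _ _ _ _ _ hper hθ hp hL hpde _ ht =>
    critical_burgers_gradient_bound_general ⟨hper, contDiffOn_infty.1 hθ 2, hp, hL, hpde⟩ ht⟩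
end

section
/- The Burgers modulus of continuity satisfies the key differential inequality (eq. (burmodconest), combining (for1) and (for2)): For K > 0 define ξ₀ = (K/(4π))² and the function ω_K : (0,∞) → (0,∞) by ω_K(ξ) = ξ/(1 + K√ξ) for 0 < ξ ≤ ξ₀ and ω_K(ξ) = C_K log ξ for ξ > ξ₀, where C_K = ξ₀/((1 + K√ξ₀) log ξ₀) is chosen so that ω_K is continuous at ξ₀. Then there exists K₀ > 0 such that for every K ≥ K₀: (i) ω_K is increasing and concave on (0,∞); and (ii) for every ξ > 0 with ξ ≠ ξ₀, 2 ω_K(ξ) ω_K'(ξ) + (1/π)·( ∫_0^{ξ/2} [ω_K(ξ+2η) + ω_K(ξ−2η) − 2ω_K(ξ)]/η² dη + ∫_{ξ/2}^∞ [ω_K(ξ+2η) − ω_K(2η−ξ) − 2ω_K(ξ)]/η² dη ) ≤ 0. -/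
open Set MeasureTheory Real

noncomputable section

/-- The break point `ξ₀ = (K/(4π))²`. -/
def xiZero (K : ℝ) : ℝ := (K / (4 * Real.pi)) ^ (2:ℕ)

/-- The constant `C_K` making the Burgers modulus of continuity continuous at `ξ₀`. -/
def burgersCK (K : ℝ) : ℝ :=
  xiZero K / ((1 + K * Real.sqrt (xiZero K)) * Real.log (xiZero K))

/-- The Burgers modulus of continuity: `ω_K(ξ) = ξ/(1+K√ξ)` for `0 < ξ ≤ ξ₀` and
`ω_K(ξ) = C_K log ξ` for `ξ > ξ₀`. -/
def burgersOmega (K ξ : ℝ) : ℝ :=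
  if ξ ≤ xiZero K then ξ / (1 + K * Real.sqrt ξ) else burgersCK K * Real.log ξ

/-!
For large `K`, `ω_K` is concave with `ω_K 0 = 0`, so both integrands are nonpositive, and on each
side of `ξ₀` one of the two integrals alone beats the transport term.

For `ξ < ξ₀` the near integral does: `ω_K''` is increasing there, so a Taylor bound for
`ω_K (ξ - 2η)` and the tangent at `ξ` for `ω_K (ξ + 2η)`, which may lie beyond `ξ₀`, bound it by
`ξ ω_K''(ξ)`. This dominates `2 ω_K ω_K'` because `4π√ξ ≤ K`.

For `ξ > ξ₀` the far integral does: subadditivity bounds its numerator by `ω_K (2ξ) - 2 ω_K ξ`,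
which is at most `-ω_K ξ / 2` once `2 log 2 ≤ log ξ`. So the far integral is at most `-ω_K ξ / ξ`,
which dominates `2 ω_K ω_K' = 2 C_K ω_K ξ / ξ` because `2π C_K ≤ 1`.
-/

open Filter Asymptotics
open scoped Topology

section ConcaveFunctions

variable {f f' f'' : ℝ → ℝ} {s : Set ℝ} {a c m x y : ℝ}

lemma le_tangent_of_concaveOn (hf : ConcaveOn ℝ s f) (hx : x ∈ s) (hy : y ∈ s)
    (hd : HasDerivWithinAt f m s x) : f y ≤ f x + m * (y - x) := by
  rcases lt_trichotomy x y with hxy | rfl | hyx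
  · have hslope := hf.slope_le_of_hasDerivWithinAt hx hy hxy hd
    rw [slope_def_field, div_le_iff₀ (sub_pos.2 hxy)] at hslope
    linarith
  · simp
  · have hslope := hf.le_slope_of_hasDerivWithinAt hy hx hyx hd
    rw [slope_def_field, le_div_iff₀ (sub_pos.2 hyx)] at hslope
    linarith

lemma concaveOn_of_concaveOn_inter_Iic_of_concaveOn_inter_Ici (hs : Convex ℝ s) (ha : a ∈ s)
    (hl : ConcaveOn ℝ (s ∩ Iic a) f) (hr : ConcaveOn ℝ (s ∩ Ici a) f)
    (hm : ∀ y ∈ s, f y ≤ f a + m * (y - a)) : ConcaveOn ℝ s f := by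
  refine concaveOn_of_slope_anti_adjacent hs fun {x y z} hx hz hxy hyz => ?_
  have hy : y ∈ s := hs.ordConnected.out hx hz ⟨hxy.le, hyz.le⟩
  rcases le_or_gt z a with hza | haz
  · exact hl.slope_anti_adjacent ⟨hx, (hxy.trans hyz).le.trans hza⟩ ⟨hz, hza⟩ hxy hyz
  rcases le_or_gt a x with hax | hxa
  · exact hr.slope_anti_adjacent ⟨hx, hax⟩ ⟨hz, hax.trans (hxy.trans hyz).le⟩ hxy hyz
  have hmx := hm x hx
  have hmz := hm z hz
  rcases lt_trichotomy y a with hya | rfl | hay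
  · have hmy := hm y hy
    have hslope := hl.slope_anti_adjacent ⟨hx, hxa.le⟩ ⟨ha, self_mem_Iic⟩ hxy hya
    refine le_trans ?_ hslope
    rw [div_le_div_iff₀ (sub_pos.2 hyz) (sub_pos.2 hya)]
    linarith [mul_le_mul_of_nonneg_right hmz (sub_nonneg.2 hya.le),
      mul_le_mul_of_nonneg_right hmy (sub_nonneg.2 haz.le)]
  · refine le_trans (b := m) ?_ ?_
    · rw [div_le_iff₀ (sub_pos.2 hyz)]
      linarith
    · rw [le_div_iff₀ (sub_pos.2 hxy)]
      linarith
  · have hmy := hm y hy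
    have hslope := hr.slope_anti_adjacent ⟨ha, self_mem_Ici⟩ ⟨hz, haz.le⟩ hay hyz
    refine hslope.trans ?_
    rw [div_le_div_iff₀ (sub_pos.2 hay) (sub_pos.2 hxy)]
    linarith [mul_le_mul_of_nonneg_right hmx (sub_nonneg.2 hay.le),
      mul_le_mul_of_nonneg_right hmy (sub_nonneg.2 hxa.le)]

lemma apply_add_le_of_concaveOn_Ici (hf : ConcaveOn ℝ (Ici 0) f) (h0 : 0 ≤ f 0)
    (hx : 0 ≤ x) (hy : 0 ≤ y) : f (x + y) ≤ f x + f y := by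
  rcases hx.eq_or_lt with rfl | hx'
  · simpa using h0
  have hxy : 0 < x + y := by positivity
  have hchord : ∀ {u v : ℝ}, 0 ≤ u → 0 ≤ v → u + v = x + y →
      v / (x + y) * f (x + y) ≤ f v := by
    intro u v hu hv huv
    have h := hf.2 self_mem_Ici (mem_Ici.2 hxy.le) (div_nonneg hu hxy.le) (div_nonneg hv hxy.le)
      (by rw [← add_div, huv, div_self hxy.ne'])
    simp only [smul_eq_mul, mul_zero, zero_add, div_mul_cancel₀ _ hxy.ne'] at h
    linarith [mul_nonneg (div_nonneg hu hxy.le) h0]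
  calc f (x + y) = x / (x + y) * f (x + y) + y / (x + y) * f (x + y) := by field_simp
    _ ≤ f x + f y := add_le_add (hchord hy hx (add_comm y x)) (hchord hx hy rfl)

lemma le_taylor_two_of_deriv2_le (hs : Convex ℝ s) (hf : ∀ y ∈ s, HasDerivAt f (f' y) y)
    (hf' : ∀ y ∈ s, HasDerivAt f' (f'' y) y) (hc : ∀ y ∈ s, f'' y ≤ c)
    (hx : x ∈ s) (hy : y ∈ s) :
    f y ≤ f x + f' x * (y - x) + c / 2 * (y - x) ^ 2 := by
  set g : ℝ → ℝ := fun z => f z - c / 2 * (z - x) ^ 2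
  have hg : ∀ z ∈ s, HasDerivAt g (f' z - c * (z - x)) z := fun z hz => by
    have hsq := (((hasDerivAt_id z).sub_const x).pow 2).const_mul (c / 2)
    refine ((hf z hz).sub hsq).congr_deriv ?_
    simp only [id]
    ring
  have hg' : ∀ z ∈ s, HasDerivAt (fun z => f' z - c * (z - x)) (f'' z - c) z := fun z hz => by
    simpa using (hf' z hz).fun_sub (((hasDerivAt_id z).sub_const x).const_mul c)
  have hconc : ConcaveOn ℝ s g :=
    concaveOn_of_hasDerivWithinAt2_nonpos hs (fun z hz => (hg z hz).continuousAt.continuousWithinAt)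
      (fun z hz => (hg z (interior_subset hz)).hasDerivWithinAt)
      (fun z hz => (hg' z (interior_subset hz)).hasDerivWithinAt)
      (fun z hz => sub_nonpos.2 (hc z (interior_subset hz)))
  have h := le_tangent_of_concaveOn hconc hx hy (hg x hx).hasDerivWithinAt
  simp only [g, sub_self] at h
  linarith

lemma isLittleO_sub_taylor_two (hf : ∀ᶠ y in 𝓝 x, HasDerivAt f (f' y) y)
    (hf' : HasDerivAt f' c x) :
    (fun y => f y - (f x + f' x * (y - x) + c / 2 * (y - x) ^ 2)) =o[𝓝 x]
      fun y => (y - x) ^ 2 := by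
  obtain ⟨δ, hδ, hball⟩ := Metric.eventually_nhds_iff_ball.1 hf
  have hx : x ∈ Metric.ball x δ := Metric.mem_ball_self hδ
  have hderiv : ∀ y ∈ Metric.ball x δ, HasDerivWithinAt
      (fun y => f y - (f x + f' x * (y - x) + c / 2 * (y - x) ^ 2))
      (f' y - f' x - (y - x) * c) (Metric.ball x δ) y := fun y hy => by
    have hid := (hasDerivAt_id y).sub_const x
    refine ((hball y hy).sub (((hid.const_mul (f' x)).const_add (f x)).add
      ((hid.pow 2).const_mul (c / 2)))).hasDerivWithinAt.congr_deriv ?_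
    simp only [id]
    ring
  have hlittle := hasDerivAt_iff_isLittleO.1 hf'
  have h := (convex_ball x δ).isLittleO_pow_succ_real (n := 1) hx hderiv
    (by simpa [Metric.isOpen_ball.nhdsWithin_eq hx] using hlittle)
  simpa [Metric.isOpen_ball.nhdsWithin_eq hx] using h

lemma isBigO_second_difference (hf : ∀ᶠ y in 𝓝 x, HasDerivAt f (f' y) y)
    (hf' : HasDerivAt f' c x) :
    (fun t => f (x + t) + f (x - t) - 2 * f x) =O[𝓝 0] fun t => t ^ 2 := by
  have htaylor := isLittleO_sub_taylor_two hf hf'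
  have hadd : Tendsto (fun t => x + t) (𝓝 0) (𝓝 x) := by
    simpa using (continuous_const_add x).tendsto 0
  have hsub : Tendsto (fun t => x - t) (𝓝 0) (𝓝 x) := by
    simpa using (continuous_sub_left x).tendsto 0
  have hplus := (htaylor.comp_tendsto hadd).isBigO
  have hminus := (htaylor.comp_tendsto hsub).isBigO
  simp only [Function.comp_def, add_sub_cancel_left, sub_sub_cancel_left, neg_sq] at hplus hminus
  have hsq := (isBigO_refl (fun t : ℝ => t ^ 2) (𝓝 0)).const_mul_left c
  refine ((hplus.add hminus).add hsq).congr_left fun t => ?_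
  ring

lemma second_difference_nonpos_of_concaveOn {t : ℝ} (hf : ConcaveOn ℝ s f)
    (hadd : x + t ∈ s) (hsub : x - t ∈ s) : f (x + t) + f (x - t) - 2 * f x ≤ 0 := by
  have h := hf.2 hadd hsub one_half_pos.le one_half_pos.le (add_halves 1)
  simp only [smul_eq_mul] at h
  ring_nf at h ⊢
  linarith

lemma exists_abs_second_difference_le (hf : ConcaveOn ℝ (Ici 0) f)
    (hO : (fun t => f (x + t) + f (x - t) - 2 * f x) =O[𝓝 0] fun t => t ^ 2) :
    ∃ M, ∀ t ∈ Ioo 0 x, |f (x + t) + f (x - t) - 2 * f x| ≤ M * t ^ 2 := by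
  obtain ⟨C, hC, hCO⟩ := hO.exists_pos
  obtain ⟨δ, hδ, hball⟩ := Metric.eventually_nhds_iff_ball.1 hCO.bound
  set B := 2 * |f x - min (f 0) (f (2 * x))|
  refine ⟨C + B / δ ^ 2, fun t ⟨ht, htx⟩ => ?_⟩
  have hC0 : 0 ≤ C * t ^ 2 := by positivity
  have hB0 : 0 ≤ B / δ ^ 2 * t ^ 2 := by positivity
  rcases lt_or_ge t δ with htδ | hδt
  · have h := hball t (by simpa [abs_of_pos ht] using htδ)
    simp only [norm_eq_abs, abs_sq] at h
    linarith
  · have hmin : ∀ y ∈ Icc 0 (2 * x), min (f 0) (f (2 * x)) ≤ f y := fun y hy =>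
      hf.min_le_of_mem_Icc self_mem_Ici (mem_Ici.2 (hy.1.trans hy.2)) hy
    have hadd := hmin (x + t) ⟨by linarith, by linarith⟩
    have hsub := hmin (x - t) ⟨by linarith, by linarith⟩
    have hB : B ≤ B / δ ^ 2 * t ^ 2 := by
      rw [div_mul_eq_mul_div, le_div_iff₀ (by positivity)]
      gcongr
    have hnonpos := second_difference_nonpos_of_concaveOn hf (x := x) (t := t)
      (mem_Ici.2 (by linarith)) (mem_Ici.2 (by linarith))
    rw [abs_of_nonpos hnonpos]
    linarith [le_abs_self (f x - min (f 0) (f (2 * x)))]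

end ConcaveFunctions

section InverseSquare

variable {a : ℝ}

lemma integrableOn_Ioi_inv_sq (ha : 0 < a) :
    IntegrableOn (fun t : ℝ => (t ^ 2)⁻¹) (Ioi a) := by
  refine (integrableOn_Ioi_rpow_of_lt (by norm_num : (-2 : ℝ) < -1) ha).congr_fun
    (fun t ht => ?_) measurableSet_Ioi
  exact_mod_cast rpow_neg (ha.trans ht).le 2

lemma integral_Ioi_inv_sq (ha : 0 < a) : ∫ t in Ioi a, (t ^ 2)⁻¹ = a⁻¹ := by
  have hrpow : EqOn (fun t : ℝ => (t ^ 2)⁻¹) (fun t => t ^ (-2 : ℝ)) (Ioi a) := fun t ht =>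
    mod_cast (rpow_neg (ha.trans ht).le 2).symm
  rw [setIntegral_congr_fun measurableSet_Ioi hrpow, integral_Ioi_rpow_of_lt (by norm_num) ha]
  norm_num [rpow_neg_one]

end InverseSquare

/-- The local part `∫₀^{x/2} [f(x+2η) + f(x-2η) - 2f(x)]/η² dη` of the dissipation of a modulus of
continuity `f`. -/
def nearDissipation (f : ℝ → ℝ) (x : ℝ) : ℝ :=
  ∫ η in Ioo 0 (x / 2), (f (x + 2 * η) + f (x - 2 * η) - 2 * f x) / η ^ 2

/-- The nonlocal part `∫_{x/2}^∞ [f(x+2η) - f(2η-x) - 2f(x)]/η² dη` of the dissipation of a modulus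
of continuity `f`. -/
def farDissipation (f : ℝ → ℝ) (x : ℝ) : ℝ :=
  ∫ η in Ioi (x / 2), (f (x + 2 * η) - f (2 * η - x) - 2 * f x) / η ^ 2

section Dissipation

variable {f f' f'' : ℝ → ℝ} {b x : ℝ}

lemma nearDissipation_nonpos (hf : ConcaveOn ℝ (Ici 0) f) (x : ℝ) : nearDissipation f x ≤ 0 :=
  setIntegral_nonpos measurableSet_Ioo fun _ hη => div_nonpos_of_nonpos_of_nonneg
    (second_difference_nonpos_of_concaveOn hf (mem_Ici.2 (by linarith [hη.1, hη.2]))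
      (mem_Ici.2 (by linarith [hη.2]))) (sq_nonneg _)

lemma integrableOn_nearDissipation (hf : ConcaveOn ℝ (Ici 0) f)
    (hO : (fun t => f (x + t) + f (x - t) - 2 * f x) =O[𝓝 0] fun t => t ^ 2) :
    IntegrableOn (fun η => (f (x + 2 * η) + f (x - 2 * η) - 2 * f x) / η ^ 2) (Ioo 0 (x / 2)) := by
  obtain ⟨M, hM⟩ := exists_abs_second_difference_le hf hO
  have hcont : ContinuousOn f (Ioi 0) := by simpa using hf.continuousOn_interior
  refine IntegrableOn.of_bound (by simp)
    (ContinuousOn.aestronglyMeasurable ?_ measurableSet_Ioo) (4 * M)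
    ((ae_restrict_iff' measurableSet_Ioo).2 (ae_of_all _ fun η hη => ?_))
  · have hadd : ContinuousOn (fun η => f (x + 2 * η)) (Ioo 0 (x / 2)) :=
      hcont.comp (by fun_prop) fun η hη => mem_Ioi.2 (by linarith [hη.1, hη.2])
    have hsub : ContinuousOn (fun η => f (x - 2 * η)) (Ioo 0 (x / 2)) :=
      hcont.comp (by fun_prop) fun η hη => mem_Ioi.2 (by linarith [hη.2])
    exact ((hadd.add hsub).sub continuousOn_const).div (by fun_prop)
      fun η hη => (pow_pos hη.1 2).ne'
  · have h := hM (2 * η) ⟨by linarith [hη.1], by linarith [hη.2]⟩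
    rw [norm_eq_abs, abs_div, abs_sq, div_le_iff₀ (pow_pos hη.1 2)]
    linarith

lemma nearDissipation_le_mul_deriv2 (hf : ConcaveOn ℝ (Ici 0) f)
    (hf' : ∀ y ∈ Ioo 0 b, HasDerivAt f (f' y) y) (hf'' : ∀ y ∈ Ioo 0 b, HasDerivAt f' (f'' y) y)
    (hmono : MonotoneOn f'' (Ioo 0 b)) (hx : x ∈ Ioo 0 b) :
    nearDissipation f x ≤ x * f'' x := by
  have hO := isBigO_second_difference
    (eventually_of_mem (isOpen_Ioo.mem_nhds hx) hf') (hf'' x hx)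
  have hle : ∀ η ∈ Ioo 0 (x / 2),
      (f (x + 2 * η) + f (x - 2 * η) - 2 * f x) / η ^ 2 ≤ 2 * f'' x := fun η hη => by
    have hleft : x - 2 * η ∈ Ioc 0 x := ⟨by linarith [hη.2], by linarith [hη.1]⟩
    have hIoc : Ioc 0 x ⊆ Ioo 0 b := fun y hy => ⟨hy.1, hy.2.trans_lt hx.2⟩
    have htaylor := le_taylor_two_of_deriv2_le (convex_Ioc 0 x) (fun y hy => hf' y (hIoc hy))
      (fun y hy => hf'' y (hIoc hy)) (fun y hy => hmono (hIoc hy) hx hy.2)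
      (right_mem_Ioc.2 hx.1) hleft
    have htangent := le_tangent_of_concaveOn hf (mem_Ici.2 hx.1.le)
      (mem_Ici.2 (by linarith [hη.1, hx.1] : 0 ≤ x + 2 * η)) (hf' x hx).hasDerivWithinAt
    rw [div_le_iff₀ (pow_pos hη.1 2)]
    linarith
  calc nearDissipation f x ≤ ∫ _ in Ioo 0 (x / 2), 2 * f'' x :=
        setIntegral_mono_on (integrableOn_nearDissipation hf hO) (integrableOn_const (by simp))
          measurableSet_Ioo hle
    _ = x * f'' x := by
        rw [setIntegral_const, volume_real_Ioo_of_le (by linarith [hx.1]), smul_eq_mul]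
        ring

lemma far_difference_le (hf : ConcaveOn ℝ (Ici 0) f) (h0 : 0 ≤ f 0) (hx : 0 ≤ x) {η : ℝ}
    (hη : x / 2 < η) :
    f (x + 2 * η) - f (2 * η - x) - 2 * f x ≤ f (2 * x) - 2 * f x := by
  have h := apply_add_le_of_concaveOn_Ici hf h0 (x := 2 * η - x) (y := 2 * x) (by linarith)
    (by linarith)
  rw [show 2 * η - x + 2 * x = x + 2 * η by ring] at h
  linarith

lemma farDissipation_nonpos (hf : ConcaveOn ℝ (Ici 0) f) (h0 : 0 ≤ f 0) (hx : 0 ≤ x) :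
    farDissipation f x ≤ 0 := by
  refine setIntegral_nonpos measurableSet_Ioi fun η hη =>
    div_nonpos_of_nonpos_of_nonneg ?_ (sq_nonneg _)
  have hdouble := apply_add_le_of_concaveOn_Ici hf h0 hx hx
  rw [← two_mul] at hdouble
  linarith [far_difference_le hf h0 hx hη]

lemma integrableOn_farDissipation (hf : ConcaveOn ℝ (Ici 0) f) (h0 : 0 ≤ f 0)
    (hmono : MonotoneOn f (Ici 0)) (hx : 0 < x) :
    IntegrableOn (fun η => (f (x + 2 * η) - f (2 * η - x) - 2 * f x) / η ^ 2) (Ioi (x / 2)) := by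
  have hcont : ContinuousOn f (Ioi 0) := by simpa using hf.continuousOn_interior
  have hpos : ∀ η ∈ Ioi (x / 2), 0 < η := fun η hη => (half_pos hx).trans hη
  refine ((integrableOn_Ioi_inv_sq (half_pos hx)).const_mul (2 * f x)).mono'
    (ContinuousOn.aestronglyMeasurable ?_ measurableSet_Ioi)
    ((ae_restrict_iff' measurableSet_Ioi).2 (ae_of_all _ fun η hη => ?_))
  · have hadd : ContinuousOn (fun η => f (x + 2 * η)) (Ioi (x / 2)) :=
      hcont.comp (by fun_prop) fun η hη => mem_Ioi.2 (by linarith [hpos η hη])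
    have hsub : ContinuousOn (fun η => f (2 * η - x)) (Ioi (x / 2)) :=
      hcont.comp (by fun_prop) fun η hη => mem_Ioi.2 (by linarith [mem_Ioi.1 hη])
    exact ((hadd.sub hsub).sub continuousOn_const).div (by fun_prop)
      fun η hη => (pow_pos (hpos η hη) 2).ne'
  · rw [norm_eq_abs, abs_div, abs_sq, div_eq_mul_inv]
    refine mul_le_mul_of_nonneg_right ?_ (by positivity)
    have hη' := mem_Ioi.1 hη
    have hdouble := apply_add_le_of_concaveOn_Ici hf h0 hx.le hx.le
    rw [← two_mul] at hdouble
    have hincr : f (2 * η - x) ≤ f (x + 2 * η) :=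
      hmono (mem_Ici.2 (by linarith)) (mem_Ici.2 (by linarith)) (by linarith)
    rw [abs_of_nonpos (by linarith [far_difference_le hf h0 hx.le hη'])]
    linarith

lemma farDissipation_le (hf : ConcaveOn ℝ (Ici 0) f) (h0 : 0 ≤ f 0)
    (hmono : MonotoneOn f (Ici 0)) (hx : 0 < x) :
    farDissipation f x ≤ (f (2 * x) - 2 * f x) * (2 / x) := by
  have hinv := (integrableOn_Ioi_inv_sq (half_pos hx)).const_mul (f (2 * x) - 2 * f x)
  calc farDissipation f x ≤ ∫ η in Ioi (x / 2), (f (2 * x) - 2 * f x) * (η ^ 2)⁻¹ :=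
        setIntegral_mono_on (integrableOn_farDissipation hf h0 hmono hx) hinv measurableSet_Ioi
          fun η hη => by
            rw [div_eq_mul_inv]
            exact mul_le_mul_of_nonneg_right (far_difference_le hf h0 hx.le hη) (by positivity)
    _ = (f (2 * x) - 2 * f x) * (2 / x) := by
        rw [integral_const_mul, integral_Ioi_inv_sq (half_pos hx), inv_div]

end Dissipation

/-- The branch `x ↦ x / (1 + K√x)` of `burgersOmega K` on `(0, ξ₀]`, continued to all `x`. -/
def burgersLeft (K x : ℝ) : ℝ := x / (1 + K * √x)

/-- The derivative of `burgersLeft K` on `(0, ∞)`. -/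
def burgersLeftDeriv (K x : ℝ) : ℝ := (2 + K * √x) / (2 * (1 + K * √x) ^ 2)

/-- The second derivative of `burgersLeft K` on `(0, ∞)`, split into two terms that are visibly
monotone in `x`. -/
def burgersLeftDeriv2 (K x : ℝ) : ℝ :=
  -(K / (4 * √x) * (1 / (1 + K * √x) ^ 2 + 2 / (1 + K * √x) ^ 3))

section LeftBranch

variable {K x : ℝ}

lemma hasDerivAt_burgersLeft (hK : 0 < K) (hx : 0 < x) :
    HasDerivAt (burgersLeft K) (burgersLeftDeriv K x) x := by
  have : 0 < √x := sqrt_pos.2 hx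
  have hden : 1 + K * √x ≠ 0 := by positivity
  refine ((hasDerivAt_id x).div (((hasDerivAt_sqrt hx.ne').const_mul K).const_add 1)
    hden).congr_deriv ?_
  simp only [id, burgersLeftDeriv]
  nth_rw 2 [← sq_sqrt hx.le]
  field_simp
  ring

lemma hasDerivAt_burgersLeftDeriv (hK : 0 < K) (hx : 0 < x) :
    HasDerivAt (burgersLeftDeriv K) (burgersLeftDeriv2 K x) x := by
  have : 0 < √x := sqrt_pos.2 hx
  have hden : 2 * (1 + K * √x) ^ 2 ≠ 0 := by positivity
  have hmul := (hasDerivAt_sqrt hx.ne').const_mul K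
  refine ((hmul.const_add 2).div (((hmul.const_add 1).pow 2).const_mul 2) hden).congr_deriv ?_
  simp only [burgersLeftDeriv2, Pi.pow_apply]
  field_simp
  ring

lemma burgersLeftDeriv2_nonpos (hK : 0 < K) (x : ℝ) : burgersLeftDeriv2 K x ≤ 0 :=
  neg_nonpos.2 (by positivity)

lemma monotoneOn_burgersLeftDeriv2 (hK : 0 < K) : MonotoneOn (burgersLeftDeriv2 K) (Ioi 0) := by
  intro x hx y _ hxy
  have hr : 0 < √x := sqrt_pos.2 hx
  unfold burgersLeftDeriv2
  gcongr

lemma continuous_burgersLeft (hK : 0 < K) : Continuous (burgersLeft K) :=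
  continuous_id.div (by fun_prop) fun x => by positivity

lemma strictMonoOn_burgersLeft (hK : 0 < K) : StrictMonoOn (burgersLeft K) (Ici 0) := by
  refine strictMonoOn_of_hasDerivWithinAt_pos (f' := burgersLeftDeriv K) (convex_Ici 0)
    (continuous_burgersLeft hK).continuousOn (fun x hx => ?_) fun x _ => ?_
  · exact (hasDerivAt_burgersLeft hK (by simpa using hx)).hasDerivWithinAt
  · unfold burgersLeftDeriv
    positivity

lemma concaveOn_burgersLeft (hK : 0 < K) : ConcaveOn ℝ (Ici 0) (burgersLeft K) := by
  refine concaveOn_of_hasDerivWithinAt2_nonpos (f' := burgersLeftDeriv K) (convex_Ici 0)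
    (continuous_burgersLeft hK).continuousOn (fun x hx => ?_) (fun x hx => ?_)
    fun x _ => burgersLeftDeriv2_nonpos hK x
  · exact (hasDerivAt_burgersLeft hK (by simpa using hx)).hasDerivWithinAt
  · exact (hasDerivAt_burgersLeftDeriv hK (by simpa using hx)).hasDerivWithinAt

lemma burgersLeft_key_inequality (hK : 0 < K) (hx : 0 < x) (hxK : 4 * π * √x ≤ K) :
    2 * burgersLeft K x * burgersLeftDeriv K x + 1 / π * (x * burgersLeftDeriv2 K x) ≤ 0 := by
  have : 0 < √x := sqrt_pos.2 hx
  have hfactor : 2 * burgersLeft K x * burgersLeftDeriv K x + 1 / π * (x * burgersLeftDeriv2 K x)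
      = x / (4 * π * √x * (1 + K * √x) ^ 3)
        * ((4 * π * √x - K) * (2 + K * √x) - K) := by
    unfold burgersLeft burgersLeftDeriv burgersLeftDeriv2
    field_simp
    ring
  have hneg : (4 * π * √x - K) * (2 + K * √x) ≤ 0 :=
    mul_nonpos_of_nonpos_of_nonneg (sub_nonpos.2 hxK) (by positivity)
  rw [hfactor]
  exact mul_nonpos_of_nonneg_of_nonpos (by positivity) (by linarith)

end LeftBranch

section BurgersModulus

variable {K x : ℝ}

lemma xiZero_pos (hK : 0 < K) : 0 < xiZero K := by
  unfold xiZero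
  positivity

lemma mul_sqrt_xiZero (hK : 0 ≤ K) : K * √(xiZero K) = 4 * π * xiZero K := by
  rw [xiZero, sqrt_sq (by positivity)]
  field_simp

lemma four_pi_mul_sqrt_le (hK : 0 ≤ K) (hx : x ≤ xiZero K) : 4 * π * √x ≤ K := by
  have h := sqrt_le_sqrt hx
  rw [xiZero, sqrt_sq (by positivity), le_div_iff₀ (by positivity)] at h
  linarith

lemma two_le_log_xiZero (hK : 4 * π * exp 1 ≤ K) : 2 ≤ log (xiZero K) := by
  have h : exp 1 ≤ K / (4 * π) := by
    rw [le_div_iff₀ (by positivity)]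
    linarith
  have hlog : 1 ≤ log (K / (4 * π)) := (le_log_iff_exp_le ((exp_pos 1).trans_le h)).2 h
  rw [xiZero, log_pow]
  push_cast
  linarith

lemma burgersCK_pos (hK : 0 < K) (hlog : 0 < log (xiZero K)) : 0 < burgersCK K := by
  have := xiZero_pos hK
  unfold burgersCK
  positivity

lemma burgersCK_mul_log_xiZero (hlog : log (xiZero K) ≠ 0) :
    burgersCK K * log (xiZero K) = burgersLeft K (xiZero K) := by
  rw [burgersCK, burgersLeft, ← div_div, div_mul_cancel₀ _ hlog]

lemma two_pi_mul_burgersCK_le_one (hK : 0 < K) (hlog : 1 ≤ log (xiZero K)) :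
    2 * π * burgersCK K ≤ 1 := by
  have hξ := xiZero_pos hK
  have hπξ : 0 < π * xiZero K := by positivity
  have : 0 < log (xiZero K) := by positivity
  rw [burgersCK, mul_sqrt_xiZero hK.le, mul_div_assoc', div_le_one (by positivity)]
  calc 2 * π * xiZero K ≤ (1 + 4 * π * xiZero K) * 1 := by linarith
    _ ≤ (1 + 4 * π * xiZero K) * log (xiZero K) := by gcongr

lemma burgersCK_div_xiZero_le (hK : 0 < K) (hlog : 2 ≤ log (xiZero K)) :
    burgersCK K / xiZero K ≤ burgersLeftDeriv K (xiZero K) := by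
  have hξ := xiZero_pos hK
  have : 0 < log (xiZero K) := by positivity
  calc burgersCK K / xiZero K = 1 / ((1 + K * √(xiZero K)) * log (xiZero K)) := by
        unfold burgersCK
        field_simp
    _ ≤ 1 / ((1 + K * √(xiZero K)) * 2) := by gcongr
    _ = (1 + K * √(xiZero K)) / (2 * (1 + K * √(xiZero K)) ^ 2) := by field_simp
    _ ≤ burgersLeftDeriv K (xiZero K) := by
        unfold burgersLeftDeriv
        gcongr
        norm_num

lemma burgersOmega_of_le (hx : x ≤ xiZero K) : burgersOmega K x = burgersLeft K x := if_pos hx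

lemma burgersOmega_of_ge (hlog : log (xiZero K) ≠ 0) (hx : xiZero K ≤ x) :
    burgersOmega K x = burgersCK K * log x := by
  rcases hx.eq_or_lt with rfl | hx'
  · rw [burgersOmega_of_le le_rfl, burgersCK_mul_log_xiZero hlog]
  · exact if_neg hx'.not_ge

lemma burgersOmega_zero : burgersOmega K 0 = 0 := by
  rw [burgersOmega_of_le (sq_nonneg _), burgersLeft, zero_div]

lemma hasDerivAt_burgersOmega_of_lt (hK : 0 < K) (hx : 0 < x) (hxξ : x < xiZero K) :
    HasDerivAt (burgersOmega K) (burgersLeftDeriv K x) x :=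
  (hasDerivAt_burgersLeft hK hx).congr_of_eventuallyEq <|
    eventually_of_mem (Iio_mem_nhds hxξ) fun _ hy => burgersOmega_of_le (mem_Iio.1 hy).le

lemma hasDerivAt_burgersOmega_of_gt (hK : 0 < K) (hlog : log (xiZero K) ≠ 0)
    (hx : xiZero K < x) : HasDerivAt (burgersOmega K) (burgersCK K / x) x :=
  ((hasDerivAt_log ((xiZero_pos hK).trans hx).ne').const_mul _).congr_of_eventuallyEq <|
    eventually_of_mem (Ioi_mem_nhds hx) fun _ hy =>
      burgersOmega_of_ge hlog (mem_Ioi.1 hy).le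

lemma strictMonoOn_burgersOmega (hK : 0 < K) (hlog : 0 < log (xiZero K)) :
    StrictMonoOn (burgersOmega K) (Ici 0) := by
  have hξ := xiZero_pos hK
  rw [← Icc_union_Ici_eq_Ici hξ.le]
  refine StrictMonoOn.union (c := xiZero K) ?_ ?_ (isGreatest_Icc hξ.le) isLeast_Ici
  · exact ((strictMonoOn_burgersLeft hK).mono Icc_subset_Ici_self).congr
      fun x hx => (burgersOmega_of_le hx.2).symm
  · intro x hx y hy hxy
    rw [burgersOmega_of_ge hlog.ne' hx, burgersOmega_of_ge hlog.ne' hy]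
    exact mul_lt_mul_of_pos_left (log_lt_log (hξ.trans_le hx) hxy) (burgersCK_pos hK hlog)

lemma burgersOmega_le_tangent_xiZero (hK : 0 < K) (hlog : 2 ≤ log (xiZero K)) (hx : 0 ≤ x) :
    burgersOmega K x ≤
      burgersOmega K (xiZero K) + burgersLeftDeriv K (xiZero K) * (x - xiZero K) := by
  have hξ := xiZero_pos hK
  have hlog0 : 0 < log (xiZero K) := by positivity
  rcases le_total x (xiZero K) with hxξ | hξx
  · rw [burgersOmega_of_le hxξ, burgersOmega_of_le le_rfl]
    exact le_tangent_of_concaveOn (concaveOn_burgersLeft hK) hξ.le hx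
      (hasDerivAt_burgersLeft hK hξ).hasDerivWithinAt
  · have hlog_le := le_tangent_of_concaveOn strictConcaveOn_log_Ioi.concaveOn hξ
      (mem_Ioi.2 (hξ.trans_le hξx)) (hasDerivAt_log hξ.ne').hasDerivWithinAt
    have hslope := burgersCK_div_xiZero_le hK hlog
    rw [burgersOmega_of_ge hlog0.ne' hξx, burgersOmega_of_ge hlog0.ne' le_rfl]
    calc burgersCK K * log x
        ≤ burgersCK K * (log (xiZero K) + (xiZero K)⁻¹ * (x - xiZero K)) :=
          mul_le_mul_of_nonneg_left hlog_le (burgersCK_pos hK hlog0).le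
      _ = burgersCK K * log (xiZero K) + burgersCK K / xiZero K * (x - xiZero K) := by ring
      _ ≤ _ := by
          have := sub_nonneg.2 hξx
          gcongr

lemma concaveOn_burgersOmega (hK : 0 < K) (hlog : 2 ≤ log (xiZero K)) :
    ConcaveOn ℝ (Ici 0) (burgersOmega K) := by
  have hξ := xiZero_pos hK
  have hlog0 : 0 < log (xiZero K) := by positivity
  refine concaveOn_of_concaveOn_inter_Iic_of_concaveOn_inter_Ici (convex_Ici 0) hξ.le ?_ ?_
    fun x hx => burgersOmega_le_tangent_xiZero hK hlog hx
  · exact ((concaveOn_burgersLeft hK).subset inter_subset_left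
      ((convex_Ici 0).inter (convex_Iic _))).congr fun x hx => (burgersOmega_of_le hx.2).symm
  · have hlogConcave := strictConcaveOn_log_Ioi.concaveOn.smul (burgersCK_pos hK hlog0).le
    exact (hlogConcave.subset (fun x hx => hξ.trans_le hx.2)
      ((convex_Ici 0).inter (convex_Ici _))).congr
        fun x hx => (burgersOmega_of_ge hlog0.ne' hx.2).symm

lemma burgersOmega_two_mul_le (hK : 0 < K) (hlog : 2 ≤ log (xiZero K)) (hx : xiZero K ≤ x) :
    burgersOmega K (2 * x) ≤ 3 / 2 * burgersOmega K x := by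
  have hξ := xiZero_pos hK
  have hlog0 : 0 < log (xiZero K) := by positivity
  have hlogx : 2 ≤ log x := hlog.trans (log_le_log hξ hx)
  have hC := burgersCK_pos hK hlog0
  rw [burgersOmega_of_ge hlog0.ne' hx, burgersOmega_of_ge hlog0.ne' (by linarith),
    log_mul two_ne_zero (hξ.trans_le hx).ne']
  calc burgersCK K * (log 2 + log x) ≤ burgersCK K * (3 / 2 * log x) := by
        gcongr
        linarith [log_two_lt_d9]
    _ = 3 / 2 * (burgersCK K * log x) := by ring

lemma burgersOmega_key_inequality_of_lt (hK : 0 < K) (hlog : 2 ≤ log (xiZero K)) (hx : 0 < x)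
    (hxξ : x < xiZero K) :
    2 * burgersOmega K x * deriv (burgersOmega K) x
      + 1 / π * (nearDissipation (burgersOmega K) x + farDissipation (burgersOmega K) x) ≤ 0 := by
  have hconc := concaveOn_burgersOmega hK hlog
  have hnear : nearDissipation (burgersOmega K) x ≤ x * burgersLeftDeriv2 K x :=
    nearDissipation_le_mul_deriv2 hconc
      (fun y hy => hasDerivAt_burgersOmega_of_lt hK hy.1 hy.2)
      (fun y hy => hasDerivAt_burgersLeftDeriv hK hy.1)
      ((monotoneOn_burgersLeftDeriv2 hK).mono Ioo_subset_Ioi_self) ⟨hx, hxξ⟩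
  have hfar := farDissipation_nonpos hconc burgersOmega_zero.ge hx.le
  rw [(hasDerivAt_burgersOmega_of_lt hK hx hxξ).deriv, burgersOmega_of_le hxξ.le]
  calc 2 * burgersLeft K x * burgersLeftDeriv K x
        + 1 / π * (nearDissipation (burgersOmega K) x + farDissipation (burgersOmega K) x)
      ≤ 2 * burgersLeft K x * burgersLeftDeriv K x + 1 / π * (x * burgersLeftDeriv2 K x) := by
        gcongr
        linarith
    _ ≤ 0 := burgersLeft_key_inequality hK hx (four_pi_mul_sqrt_le hK.le hxξ.le)

lemma burgersOmega_key_inequality_of_gt (hK : 0 < K) (hlog : 2 ≤ log (xiZero K))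
    (hx : xiZero K < x) :
    2 * burgersOmega K x * deriv (burgersOmega K) x
      + 1 / π * (nearDissipation (burgersOmega K) x + farDissipation (burgersOmega K) x) ≤ 0 := by
  have hx0 : 0 < x := (xiZero_pos hK).trans hx
  have hlog0 : 0 < log (xiZero K) := by positivity
  have hconc := concaveOn_burgersOmega hK hlog
  have hmono := strictMonoOn_burgersOmega hK hlog0
  have hω : 0 < burgersOmega K x :=
    burgersOmega_zero.symm.trans_lt (hmono self_mem_Ici hx0.le hx0)
  have hnear := nearDissipation_nonpos hconc x
  have hfar : farDissipation (burgersOmega K) x ≤ -(burgersOmega K x / x) := by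
    refine (farDissipation_le hconc burgersOmega_zero.ge hmono.monotoneOn hx0).trans ?_
    calc (burgersOmega K (2 * x) - 2 * burgersOmega K x) * (2 / x)
        ≤ -(burgersOmega K x / 2) * (2 / x) := by
          gcongr
          linarith [burgersOmega_two_mul_le hK hlog hx.le]
      _ = -(burgersOmega K x / x) := by ring
  rw [(hasDerivAt_burgersOmega_of_gt hK hlog0.ne' hx).deriv]
  calc 2 * burgersOmega K x * (burgersCK K / x)
        + 1 / π * (nearDissipation (burgersOmega K) x + farDissipation (burgersOmega K) x)
      ≤ 2 * burgersOmega K x * (burgersCK K / x) + 1 / π * -(burgersOmega K x / x) := by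
        gcongr
        linarith
    _ = burgersOmega K x / (π * x) * (2 * π * burgersCK K - 1) := by
        field_simp
        ring
    _ ≤ 0 := mul_nonpos_of_nonneg_of_nonpos (by positivity)
        (sub_nonpos.2 (two_pi_mul_burgersCK_le_one hK (by linarith)))

end BurgersModulus

/-- **The Burgers modulus of continuity satisfies the key differential inequality
(eq. (burmodconest)).** For all sufficiently large `K`, `ω_K` is increasing and concave on
`(0,∞)`, and `2 ω_K ω_K' + D_{1/2,ω_K} ≤ 0` away from the break point, where `D_{1/2,ω_K}`
is the critical dissipation expression with constant `1/π`. -/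
theorem burgers_modulus_key_inequality :
    ∃ K₀ > (0:ℝ), ∀ K ≥ K₀,
      StrictMonoOn (burgersOmega K) (Ioi 0) ∧
      ConcaveOn ℝ (Ioi 0) (burgersOmega K) ∧
      ∀ ξ : ℝ, 0 < ξ → ξ ≠ xiZero K →
        2 * burgersOmega K ξ * deriv (burgersOmega K) ξ +
          (1 / Real.pi) *
            ((∫ η in Ioo 0 (ξ/2),
                (burgersOmega K (ξ + 2*η) + burgersOmega K (ξ - 2*η)
                  - 2 * burgersOmega K ξ) / η ^ (2:ℕ)) +
             (∫ η in Ioi (ξ/2),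
                (burgersOmega K (ξ + 2*η) - burgersOmega K (2*η - ξ)
                  - 2 * burgersOmega K ξ) / η ^ (2:ℕ))) ≤ 0 := by
  refine ⟨4 * π * exp 1, by positivity, fun K hK => ?_⟩
  have hK0 : 0 < K := lt_of_lt_of_le (by positivity) hK
  have hlog : 2 ≤ log (xiZero K) := two_le_log_xiZero hK
  refine ⟨(strictMonoOn_burgersOmega hK0 (by linarith)).mono Ioi_subset_Ici_self,
    (concaveOn_burgersOmega hK0 hlog).subset Ioi_subset_Ici_self (convex_Ioi 0),
    fun ξ hξ hne => ?_⟩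
  rcases hne.lt_or_gt with hlt | hgt
  · exact burgersOmega_key_inequality_of_lt hK0 hlog hξ hlt
  · exact burgersOmega_key_inequality_of_gt hK0 hlog hgt

end
end
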